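/- Let P_λ be the law of the Poisson point measure on X with intensity λμ_X, and let 0 < λ₁ < λ₂. If P_{λ₁}[N_O = 1] = 1, then P_{λ₂}[N_O = 1] = 1. -/

import Mathlib

open MeasureTheory Metric Set Bornology Function
open scoped ENNReal NNReal unitInterval

noncomputable section

namespace BooleanModel

/-- The space of simple, locally finite point configurations on a metric space `X`
(realizations of simple counting measures on `X`). -/
def Config (X : Type*) [MetricSpace X] : Type _ :=
  {s : Set X // ∀ K : Set X, IsBounded K → (s ∩ K).Finite}

namespace Config

variable {X : Type*} [MetricSpace X]

/-- The σ-algebra on `Config X` generated by the evaluation (counting) maps `ω ↦ ω(B)`. -/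
instance instMeasurableSpace [MeasurableSpace X] : MeasurableSpace (Config X) :=
  MeasurableSpace.generateFrom
    {A | ∃ (B : Set X) (n : ℕ∞), MeasurableSet B ∧ A = {s : Config X | (s.1 ∩ B).encard = n}}

/-- The number of points of the configuration `s` lying in `B`. -/
def count (B : Set X) (s : Config X) : ℕ∞ := (s.1 ∩ B).encard

/-- Adding a point to a configuration (`ω + δ_y`). -/
def insertPt (y : X) (s : Config X) : Config X :=
  ⟨insert y s.1, by
    intro K hK
    refine ((s.2 K hK).insert y).subset ?_
    rintro z ⟨hz1, hz2⟩
    rcases Set.mem_insert_iff.1 hz1 with rfl | h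
    · exact Set.mem_insert _ _
    · exact Set.mem_insert_of_mem _ ⟨h, hz2⟩⟩

/-- The restriction `ω|_{B^c}` of a configuration to the complement of `B`. -/
def restrict (B : Set X) (s : Config X) : Config X :=
  ⟨s.1 ∩ Bᶜ, fun K hK => (s.2 K hK).subset fun z hz => ⟨hz.1.1, hz.2⟩⟩

/-- Push-forward of a configuration under an isometry of `X`. -/
def mapIso (γ : X ≃ᵢ X) (s : Config X) : Config X :=
  ⟨⇑γ '' s.1, by
    intro K hK
    have h1 : ⇑γ ⁻¹' K = ⇑γ.symm '' K := by
      ext z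
      constructor
      · intro hz; exact ⟨γ z, hz, γ.symm_apply_apply z⟩
      · rintro ⟨w, hw, rfl⟩; simpa using hw
    have h2 : ⇑γ '' s.1 ∩ K = ⇑γ '' (s.1 ∩ ⇑γ ⁻¹' K) := (Set.image_inter_preimage _ _ _).symm
    rw [h2]
    refine (s.2 _ ?_).image _
    rw [h1]
    exact γ.symm.isometry.lipschitz.isBounded_image hK⟩

end Config

section BasicDefs

variable {X : Type*} [MetricSpace X]

/-- The occupied set of the Boolean model with unit radii driven by `s`. -/
def occupied (s : Config X) : Set X := ⋃ x ∈ s.1, closedBall x 1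

/-- The vacant set of the Boolean model with unit radii driven by `s`. -/
def vacant (s : Config X) : Set X := (occupied s)ᶜ

/-- The collection of connected components of a set `S ⊆ X`. -/
def comps (S : Set X) : Set (Set X) := {C | ∃ x ∈ S, C = connectedComponentIn S x}

/-- The collection of unbounded connected components of `S`. -/
def ucomps (S : Set X) : Set (Set X) := {C | C ∈ comps S ∧ ¬IsBounded C}

/-- The number of connected components of `S`. -/
def numComps (S : Set X) : ℕ∞ := (comps S).encard

/-- `N_S`: the number of unbounded connected components of `S`. -/
def numUcomps (S : Set X) : ℕ∞ := (ucomps S).encard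

/-- A metric space is point-symmetric (the metric counterpart of being a Riemannian
symmetric space) if every point `x` admits a geodesic-reversing isometry fixing `x`,
i.e. an isometric point reflection around `x`. -/
def PointSymmetric (X : Type*) [MetricSpace X] : Prop :=
  ∀ x : X, ∃ invol : X ≃ᵢ X, invol x = x ∧ ∀ y : X, dist y (invol y) = 2 * dist x y

/-- The local connected component `C_S(y,r)`. -/
def localComp (S : Set X) (y : X) (r : ℝ) : Set X :=
  connectedComponentIn (S ∩ closedBall y r) y

end BasicDefs

section MeasureDefs

variable {X : Type*} [MetricSpace X] [MeasurableSpace X]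

/-- A measure on `Config X` is isometry invariant if it is preserved by the push-forward
action of every isometry of `X`. -/
def IsoInvariant (P : Measure (Config X)) : Prop :=
  ∀ γ : X ≃ᵢ X, Measure.map (Config.mapIso γ) P = P

/-- Every isometry-invariant event has probability `0` or `1`. -/
def ErgodicIso (P : Measure (Config X)) : Prop :=
  ∀ E : Set (Config X), MeasurableSet E →
    (∀ γ : X ≃ᵢ X, Config.mapIso γ ⁻¹' E = E) → P E = 0 ∨ P E = 1

/-- `P` is insertion-tolerant: for every Borel `B` with `0 < μ B < ∞`, the law of
`ω + δ_Y` with `Y` uniform in `B` independent of `ω` is absolutely continuous w.r.t. `P`. -/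
def InsertionTolerant (μ : Measure X) (P : Measure (Config X)) : Prop :=
  ∀ B : Set X, MeasurableSet B → 0 < μ B → μ B < ⊤ →
    Measure.map (fun p : Config X × X => Config.insertPt p.2 p.1)
      (P.prod ((μ B)⁻¹ • μ.restrict B)) ≪ P

/-- `P` is deletion-tolerant: for every Borel `B` with `0 < μ B < ∞`, the law of
`ω|_{B^c}` is absolutely continuous w.r.t. `P`. -/
def DeletionTolerant (μ : Measure X) (P : Measure (Config X)) : Prop :=
  ∀ B : Set X, MeasurableSet B → 0 < μ B → μ B < ⊤ →
    Measure.map (Config.restrict B) P ≪ P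

/-- `P` is the law of the Poisson point measure on `X` with intensity `ν`:
counts in disjoint Borel sets are independent with the correct Poisson distributions. -/
def IsPoisson (ν : Measure X) (P : Measure (Config X)) : Prop :=
  IsProbabilityMeasure P ∧
  (∀ B : Set X, MeasurableSet B → ν B < ⊤ → ∀ k : ℕ,
      P {s : Config X | Config.count B s = k} =
        ENNReal.ofReal (Real.exp (-(ν B).toReal) * (ν B).toReal ^ k / (Nat.factorial k))) ∧
  (∀ B : Set X, MeasurableSet B → ν B = ⊤ → P {s : Config X | (s.1 ∩ B).Infinite} = 1) ∧
  (∀ (n : ℕ) (B : Fin n → Set X) (k : Fin n → ℕ),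
      (∀ i, MeasurableSet (B i)) → (Pairwise fun i j => Disjoint (B i) (B j)) →
      P {s : Config X | ∀ i, Config.count (B i) s = k i} =
        ∏ i, P {s : Config X | Config.count (B i) s = k i})

end MeasureDefs

section PathDefs

variable {X : Type*} [MetricSpace X]

/-- The intrinsic distance between `x` and `y` within the set `S`: the infimum of the lengths
of continuous paths from `x` to `y` whose range is contained in `S`. -/
def pathDistIn (S : Set X) (x y : X) : ℝ≥0∞ :=
  ⨅ (γ : Path x y) (_ : Set.range ⇑γ ⊆ S), eVariationOn ⇑γ Set.univ

/-- Intrinsic distance within `S` between two subsets `A` and `B`. -/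
def setDistIn (S A B : Set X) : ℝ≥0∞ :=
  ⨅ (a : X) (_ : a ∈ A) (b : X) (_ : b ∈ B), pathDistIn S a b

/-- `y` is an `r`-trifurcation (marked by a point of `Y`) for the set `S`. -/
def IsTrifurcation (S : Set X) (Y : Set X) (r : ℝ) (y : X) : Prop :=
  y ∈ Y ∧ closedBall y 1 ⊆ S ∧ (∀ y' ∈ Y, y' ≠ y → 2 * r < dist y y') ∧
    3 ≤ numUcomps (connectedComponentIn S y \ localComp S y r)

end PathDefs

end BooleanModel

/-!
Superpose an independent Poisson process of intensity `lam₂ - lam₁` on the configuration with law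
`P₁` to obtain one with law `P₂`; it suffices that every unbounded cluster of the superposition
meets an unbounded cluster of the first process. Exploring an unbounded cluster reveals the first
process only near the explored points. Infinitely often the exploration reaches fresh territory
where, with probability bounded below, an unbounded cluster of the first process passes within a
bounded distance. A Borel–Cantelli argument for the second process then closes the remaining gap:
at infinitely many places it almost surely inserts a point that shortens the distance by a fixed
amount, until the two clusters touch.

Both steps use geodesics, which a connected proper space with point reflections has: reflections at
nearby centres depend Lipschitz continuously on the centre, which yields midpoints that are centres
of reflections, and a discrete energy minimisation turns these into geodesic chains. About the
Poisson process only its void probabilities are used, which determine the law of a point process by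
Rényi's theorem.
-/

namespace BooleanModel

/-! ### Metric spaces with point reflections -/

section Reflections

variable {X : Type*} [MetricSpace X]

/-- `ς` is a point reflection with centre `a`. The reflection at a point is neither assumed to be
unique nor to be an involution. -/
structure IsReflection (a : X) (ς : X ≃ᵢ X) : Prop where
  map_center : ς a = a
  dist_map : ∀ y, dist y (ς y) = 2 * dist a y

lemma PointSymmetric.exists_isReflection (hX : PointSymmetric X) (a : X) :
    ∃ ς, IsReflection a ς :=
  (hX a).imp fun _ h => ⟨h.1, h.2⟩

lemma dist_inv_apply (g : X ≃ᵢ X) (x y : X) : dist x (g⁻¹ y) = dist (g x) y := by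
  rw [← g.dist_eq x, IsometryEquiv.apply_inv_self]

lemma dist_pow_apply_le (g : X ≃ᵢ X) (x : X) (n : ℕ) :
    dist x ((g ^ n) x) ≤ n * dist x (g x) := by
  induction n with
  | zero => simp
  | succ n ih =>
    have hstep : dist ((g ^ n) x) ((g ^ (n + 1)) x) = dist x (g x) := by
      rw [pow_succ, IsometryEquiv.mul_apply, IsometryEquiv.dist_eq]
    calc dist x ((g ^ (n + 1)) x)
        ≤ dist x ((g ^ n) x) + dist ((g ^ n) x) ((g ^ (n + 1)) x) := dist_triangle _ _ _
      _ ≤ n * dist x (g x) + dist x (g x) := add_le_add ih hstep.le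
      _ = (n + 1 : ℕ) * dist x (g x) := by push_cast; ring

namespace IsReflection

variable {a b : X} {α β : X ≃ᵢ X}

lemma dist_center (hα : IsReflection a α) (x : X) : dist a (α x) = dist a x := by
  conv_lhs => rw [← hα.map_center]
  exact α.dist_eq a x

lemma inv (hα : IsReflection a α) : IsReflection a α⁻¹ where
  map_center := by
    conv_lhs => rw [← hα.map_center]
    exact α.inv_apply_self a
  dist_map y := by
    rw [dist_inv_apply, dist_comm, hα.dist_map]

lemma conj (hα : IsReflection a α) (g : X ≃ᵢ X) : IsReflection (g a) (g * α * g⁻¹) where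
  map_center := by
    simp only [IsometryEquiv.mul_apply, IsometryEquiv.inv_apply_self, hα.map_center]
  dist_map y := by
    obtain ⟨x, rfl⟩ := g.surjective y
    simp only [IsometryEquiv.mul_apply, IsometryEquiv.inv_apply_self, IsometryEquiv.dist_eq,
      hα.dist_map]

end IsReflection

/-- `m` is the centre of a reflection carrying `z` to `w`. This is stronger than being at equal
distance `dist z w / 2` from both points. -/
def IsReflectionMidpoint (z w m : X) : Prop :=
  ∃ ς, IsReflection m ς ∧ ς z = w

/-- A discrete geodesic: every point of the sequence is a reflection midpoint of its neighbours. -/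
def IsReflectionChain (x : ℕ → X) : Prop :=
  ∀ i, IsReflectionMidpoint (x i) (x (i + 2)) (x (i + 1))

namespace IsReflectionChain

variable {x : ℕ → X}

lemma dist_succ (hx : IsReflectionChain x) (i : ℕ) :
    dist (x i) (x (i + 1)) = dist (x 0) (x 1) := by
  induction i with
  | zero => rfl
  | succ i ih =>
    obtain ⟨ς, hς, hnext⟩ := hx i
    rw [← ih, ← hnext, hς.dist_center, dist_comm]

lemma dist_add (hx : IsReflectionChain x) (i n : ℕ) :
    dist (x i) (x (i + n)) = n * dist (x 0) (x 1) := by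
  induction n using Nat.twoStepInduction with
  | zero => simp
  | one => simp [hx.dist_succ]
  | more n ih₀ ih₁ =>
    obtain ⟨ς, hς, hnext⟩ := hx (i + n)
    have hreflect : dist (x i) (ς (x i)) = 2 * dist (x i) (x (i + (n + 1))) := by
      rw [hς.dist_map, dist_comm]; rfl
    have hreturn : dist (x (i + (n + 2))) (ς (x i)) = dist (x i) (x (i + n)) := by
      rw [← add_assoc, ← hnext, ς.dist_eq, dist_comm]
    have hlast : dist (x (i + (n + 1))) (x (i + (n + 2))) = dist (x 0) (x 1) :=
      hx.dist_succ (i + n + 1)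
    have hlower := dist_triangle (x i) (x (i + (n + 2))) (ς (x i))
    have hupper := dist_triangle (x i) (x (i + (n + 1))) (x (i + (n + 2)))
    push_cast at ih₁ ⊢
    apply le_antisymm <;> linarith

lemma map (hx : IsReflectionChain x) (g : X ≃ᵢ X) : IsReflectionChain fun i => g (x i) := by
  intro i
  obtain ⟨ς, hς, hnext⟩ := hx i
  exact ⟨_, hς.conj g, by
    simp only [IsometryEquiv.mul_apply, IsometryEquiv.inv_apply_self, hnext]⟩

lemma tail (hx : IsReflectionChain x) : IsReflectionChain fun i => x (i + 1) :=
  fun i => hx (i + 1)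

end IsReflectionChain

lemma PointSymmetric.exists_isReflectionChain (hX : PointSymmetric X) (p q : X) :
    ∃ x, IsReflectionChain x ∧ x 0 = p ∧ x 1 = q := by
  choose ς hς using hX.exists_isReflection
  let pair : ℕ → X × X := fun n => n.rec (p, q) fun _ r => (r.2, ς r.2 r.1)
  exact ⟨fun n => (pair n).1, fun i => ⟨ς (pair i).2, hς _, rfl⟩, rfl, rfl⟩

namespace IsReflection

variable {a b : X} {α β : X ≃ᵢ X}

/-- The orbits of `b` and `a` under the translation `α⁻¹ * β`, listed alternately; for reflections
`α` at `a` and `β` at `b` this is a discrete geodesic that the translation shifts by two steps. -/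
def zigzag (a b : X) (α β : X ≃ᵢ X) (i : ℕ) : X :=
  ((α⁻¹ * β) ^ (i / 2)) (if Even i then b else a)

lemma zigzag_two_mul (k : ℕ) : zigzag a b α β (2 * k) = ((α⁻¹ * β) ^ k) b := by
  simp [zigzag]

lemma zigzag_two_mul_add_one (k : ℕ) :
    zigzag a b α β (2 * k + 1) = ((α⁻¹ * β) ^ k) a := by
  have hdiv : (2 * k + 1) / 2 = k := by lia
  simp [zigzag, hdiv]

lemma isReflectionChain_zigzag (hα : IsReflection a α) (hβ : IsReflection b β) :
    IsReflectionChain (zigzag a b α β) := by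
  intro i
  rcases Nat.even_or_odd' i with ⟨k, rfl | rfl⟩
  · refine ⟨_, zigzag_two_mul_add_one (a := a) k ▸ hα.inv.conj _, ?_⟩
    rw [show 2 * k + 2 = 2 * (k + 1) by ring, zigzag_two_mul, zigzag_two_mul, pow_succ]
    simp only [IsometryEquiv.mul_apply, IsometryEquiv.inv_apply_self, hβ.map_center]
  · refine ⟨_, zigzag_two_mul (b := b) (k + 1) ▸ hβ.conj _, ?_⟩
    rw [show 2 * k + 1 + 2 = 2 * (k + 1) + 1 by ring, zigzag_two_mul_add_one,
      zigzag_two_mul_add_one, pow_succ, mul_inv_rev, mul_inv_rev, inv_inv]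
    simp only [IsometryEquiv.mul_apply, IsometryEquiv.inv_apply_self,
      IsometryEquiv.apply_inv_self, hα.map_center]

lemma dist_zigzag_pow (hα : IsReflection a α) (hβ : IsReflection b β) (n : ℕ) :
    dist b (((α⁻¹ * β) ^ n) b) = n * (2 * dist a b) := by
  have h := (isReflectionChain_zigzag hα hβ).dist_add 0 (2 * n)
  rw [zero_add, zigzag_two_mul, ← zero_add 1, ← mul_zero 2, zigzag_two_mul_add_one,
    zigzag_two_mul, pow_zero, IsometryEquiv.coe_one, id, id, dist_comm b a] at h
  rw [h]; push_cast; ring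

/- `α⁻¹ * β` translates by exactly `2 * dist a b` along its axis through `a` and `b`, and no
isometry displaces a point by less than its asymptotic translation length. -/
lemma two_mul_dist_le (hα : IsReflection a α) (hβ : IsReflection b β) (x : X) :
    2 * dist a b ≤ dist (α x) (β x) := by
  have hdisp : dist x ((α⁻¹ * β) x) = dist (α x) (β x) := dist_inv_apply α x (β x)
  by_contra! hlt
  obtain ⟨n, hn⟩ := exists_nat_gt (2 * dist b x / (2 * dist a b - dist (α x) (β x)))
  rw [div_lt_iff₀ (by linarith)] at hn
  have hpath := dist_triangle4 b x (((α⁻¹ * β) ^ n) x) (((α⁻¹ * β) ^ n) b)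
  rw [IsometryEquiv.dist_eq, dist_comm x b, dist_zigzag_pow hα hβ n] at hpath
  have hpow := dist_pow_apply_le (α⁻¹ * β) x n
  rw [hdisp] at hpow
  linarith

lemma two_mul_dist_center_le (hα : IsReflection a α) (hβ : IsReflection b β) (x y : X) :
    2 * dist a b ≤ dist x y + dist (α x) (β y) := by
  have hexp := hα.two_mul_dist_le hβ x
  have htri := dist_triangle (α x) (β y) (β x)
  rw [β.dist_eq, dist_comm y x] at htri
  linarith

lemma two_mul_displacement_le (hα : IsReflection a α) (g : X ≃ᵢ X) (x : X) :
    2 * dist a (g a) ≤ dist x (g x) + dist (α x) (g (α x)) := by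
  simpa only [IsometryEquiv.mul_apply, IsometryEquiv.inv_apply_self] using
    hα.two_mul_dist_center_le (hα.conj g) x (g x)

end IsReflection

lemma IsReflectionMidpoint.two_mul_dist_le {z w m z' w' m' : X} (h : IsReflectionMidpoint z w m)
    (h' : IsReflectionMidpoint z' w' m') : 2 * dist m m' ≤ dist z z' + dist w w' := by
  obtain ⟨ς, hς, rfl⟩ := h
  obtain ⟨τ, hτ, rfl⟩ := h'
  exact hς.two_mul_dist_center_le hτ z z'

lemma IsReflectionChain.two_mul_dist_le {x y : ℕ → X} (hx : IsReflectionChain x)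
    (hy : IsReflectionChain y) (i : ℕ) :
    2 * dist (x (i + 1)) (y (i + 1)) ≤ dist (x i) (y i) + dist (x (i + 2)) (y (i + 2)) :=
  (hx i).two_mul_dist_le (hy i)

lemma mul_sub_le_sub_of_two_mul_le_add {e : ℕ → ℝ}
    (he : ∀ i, 2 * e (i + 1) ≤ e i + e (i + 2)) (n : ℕ) :
    n * (e 1 - e 0) ≤ e n - e 0 := by
  have hinc : ∀ i, e 1 - e 0 ≤ e (i + 1) - e i := by
    intro i
    induction i with
    | zero => rfl
    | succ i ih => linarith [he i]
  induction n with
  | zero => simp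
  | succ n ih => push_cast; linarith [hinc n]

/- Compare the chain through `z, g z` with its image under `g`: the distance between the image
and the once-shifted chain is convex and vanishes at the start, so it grows slowly. -/
lemma PointSymmetric.displacement_sq_ge (hX : PointSymmetric X) (g : X ≃ᵢ X) (z : X) {M ρ : ℝ}
    (hρ : 0 < ρ) (hM : ∀ y, dist z y ≤ ρ → dist y (g y) ≤ M) (hz : dist z (g z) ≤ ρ) :
    dist z (g z) * (2 - 2 * (M + dist z (g z)) / ρ) ≤ dist z (g (g z)) := by
  rcases (dist_nonneg (x := z) (y := g z)).eq_or_lt with hfix | hpos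
  · simp [← hfix, dist_nonneg]
  set Δ := dist z (g z)
  obtain ⟨p, hp, hp₀, hp₁⟩ := hX.exists_isReflectionChain z (g z)
  set n := ⌊ρ / Δ⌋₊
  have hn_le : n * Δ ≤ ρ := (le_div_iff₀ hpos).1 (Nat.floor_le (by positivity))
  have hn_lt : ρ < (n + 1) * Δ := (div_lt_iff₀ hpos).1 (Nat.lt_floor_add_one _)
  have hn_one : (1 : ℝ) ≤ n :=
    Nat.one_le_cast.2 ((Nat.one_le_floor_iff _).2 ((one_le_div hpos).2 hz))
  have hpn : dist z (p n) = n * Δ := by simpa [hp₀, hp₁] using hp.dist_add 0 n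
  have hp2 : dist z (p 2) = 2 * Δ := by simpa [hp₀, hp₁] using hp.dist_add 0 2
  have hlinear : n * dist (g (g z)) (p 2) ≤ dist (g (p n)) (p (n + 1)) := by
    simpa [hp₀, hp₁] using
      mul_sub_le_sub_of_two_mul_le_add (e := fun i => dist (g (p i)) (p (i + 1)))
        ((hp.map g).two_mul_dist_le hp.tail) n
  have hend : dist (g (p n)) (p (n + 1)) ≤ M + Δ := by
    have hdisp := hM (p n) (hpn.trans_le hn_le)
    have hstep : dist (p n) (p (n + 1)) = Δ := by simpa [hp₀, hp₁] using hp.dist_succ n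
    linarith [dist_triangle_left (g (p n)) (p (n + 1)) (p n)]
  have hMΔ : 0 ≤ M + Δ := dist_nonneg.trans hend
  have hclose : dist (g (g z)) (p 2) ≤ Δ * (2 * (M + Δ) / ρ) := by
    refine le_of_mul_le_mul_left ?_ (zero_lt_one.trans_le hn_one)
    calc n * dist (g (g z)) (p 2) ≤ M + Δ := hlinear.trans hend
      _ ≤ (M + Δ) * (2 * (n * Δ) / ρ) := le_mul_of_one_le_right hMΔ <|
          (one_le_div hρ).2 (by nlinarith)
      _ = n * (Δ * (2 * (M + Δ) / ρ)) := by ring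
  linarith [dist_triangle z (g (g z)) (p 2)]

end Reflections

section IsometryLimits

open Filter Topology

variable {X ι : Type*} [MetricSpace X]

lemma exists_tendsto_of_eventually_dist_le [ProperSpace X] (U : Ultrafilter ι) {u : ι → X} {z : X}
    {R : ℝ} (hu : ∀ᶠ i in (U : Filter ι), dist z (u i) ≤ R) : ∃ y, Tendsto u U (𝓝 y) := by
  have hball : closedBall z R ∈ U.map u := hu.mono fun i hi => mem_closedBall'.2 hi
  exact ((isCompact_closedBall z R).ultrafilter_le_nhds' _ hball).imp fun _ h => h.2

lemma eq_of_tendsto_inv (U : Ultrafilter ι) {g : ι → X ≃ᵢ X} {x y w : X}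
    (hg : Tendsto (fun i => g i x) U (𝓝 y)) (hinv : Tendsto (fun i => (g i)⁻¹ y) U (𝓝 w)) :
    w = x := by
  refine tendsto_nhds_unique hinv (tendsto_iff_dist_tendsto_zero.2 ?_)
  refine (tendsto_iff_dist_tendsto_zero.1 hg).congr fun i => ?_
  rw [dist_comm ((g i)⁻¹ y), dist_inv_apply]

lemma exists_isometryEquiv_tendsto [ProperSpace X] (U : Ultrafilter ι) (g : ι → X ≃ᵢ X) {z : X}
    {R : ℝ} (hg : ∀ᶠ i in (U : Filter ι), dist z (g i z) ≤ R) :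
    ∃ G : X ≃ᵢ X, ∀ x, Tendsto (fun i => g i x) U (𝓝 (G x)) := by
  have hlim : ∀ f : ι → X ≃ᵢ X, (∀ᶠ i in (U : Filter ι), dist z (f i z) ≤ R) →
      ∀ x, ∃ y, Tendsto (fun i => f i x) U (𝓝 y) := by
    intro f hf x
    refine exists_tendsto_of_eventually_dist_le U (z := z) (R := R + dist z x) ?_
    filter_upwards [hf] with i hi
    have htri := dist_triangle z (f i z) (f i x)
    rw [IsometryEquiv.dist_eq] at htri
    linarith
  choose G hG using hlim g hg
  choose H hH using hlim (fun i => (g i)⁻¹) (hg.mono fun i hi => by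
    rwa [dist_inv_apply, dist_comm])
  have hGH : ∀ x, G (H x) = x := fun x =>
    eq_of_tendsto_inv U (g := fun i => (g i)⁻¹) (hH x) (by simpa only [inv_inv] using hG (H x))
  refine ⟨IsometryEquiv.mk' G H hGH (Isometry.of_dist_eq fun x y => ?_), hG⟩
  refine tendsto_nhds_unique ((hG x).dist (hG y)) ?_
  simpa only [IsometryEquiv.dist_eq] using tendsto_const_nhds

end IsometryLimits

section Packings

variable {X : Type*} [MetricSpace X]

/-- `Q` is an `ε`-separated subset of the ball of radius `r` around `z`. Being a `Finset`, it can be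
counted and compared with `packingNum`. -/
structure IsPacking (z : X) (r ε : ℝ) (Q : Finset X) : Prop where
  dist_le : ∀ q ∈ Q, dist z q ≤ r
  lt_dist : ∀ p ∈ Q, ∀ q ∈ Q, p ≠ q → ε < dist p q

/-- Mathlib's packing number of a ball as a natural number; it is meaningful for `0 < ε` in a
proper space, where packings have bounded cardinality. -/
def packingNum (z : X) (r ε : ℝ) : ℕ :=
  (packingNumber ε.toNNReal (closedBall z r)).toNat

lemma isPacking_iff {z : X} {r ε : ℝ} (hε : 0 ≤ ε) {Q : Finset X} :
    IsPacking z r ε Q ↔ (Q : Set X) ⊆ closedBall z r ∧ IsSeparated ε.toNNReal (Q : Set X) := by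
  have hlt : ∀ p q : X, (ε.toNNReal : ℝ≥0∞) < edist p q ↔ ε < dist p q := fun p q => by
    rw [edist_dist, ← ENNReal.ofReal, ENNReal.ofReal_lt_ofReal_iff_of_nonneg hε]
  constructor
  · exact fun hQ => ⟨fun q hq => mem_closedBall'.2 (hQ.dist_le q hq),
      fun p hp q hq hne => (hlt p q).2 (hQ.lt_dist p hp q hq hne)⟩
  · exact fun hQ => ⟨fun q hq => mem_closedBall'.1 (hQ.1 hq),
      fun p hp q hq hne => (hlt p q).1 (hQ.2 hp hq hne)⟩

namespace IsPacking

variable {z y : X} {r ε : ℝ} {Q : Finset X}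

lemma filter (hQ : IsPacking z r ε Q) (p : X → Prop) [DecidablePred p] :
    IsPacking z r ε (Q.filter p) :=
  ⟨fun q hq => hQ.dist_le q (Finset.mem_filter.1 hq).1,
    fun q hq q' hq' => hQ.lt_dist q (Finset.mem_filter.1 hq).1 q' (Finset.mem_filter.1 hq').1⟩

lemma recenter (hQ : IsPacking z r ε Q) {s : ℝ} (hy : ∀ q ∈ Q, dist y q ≤ s) :
    IsPacking y s ε Q :=
  ⟨hy, hQ.lt_dist⟩

lemma union [DecidableEq X] {P : Finset X} (hP : IsPacking z r ε P) (hQ : IsPacking z r ε Q)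
    (hfar : ∀ p ∈ P, ∀ q ∈ Q, ε < dist p q) : IsPacking z r ε (P ∪ Q) where
  dist_le x hx := (Finset.mem_union.1 hx).elim (hP.dist_le x) (hQ.dist_le x)
  lt_dist x hx x' hx' hne := by
    rcases Finset.mem_union.1 hx with h | h <;> rcases Finset.mem_union.1 hx' with h' | h'
    · exact hP.lt_dist x h x' h' hne
    · exact hfar x h x' h'
    · rw [dist_comm]; exact hfar x' h' x h
    · exact hQ.lt_dist x h x' h' hne

lemma image [DecidableEq X] (hQ : IsPacking z r ε Q) (g : X ≃ᵢ X) :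
    IsPacking (g z) r ε (Q.image g) where
  dist_le := Finset.forall_mem_image.2 fun q hq => by
    rw [g.dist_eq]; exact hQ.dist_le q hq
  lt_dist := Finset.forall_mem_image.2 fun p hp => Finset.forall_mem_image.2 fun q hq hne => by
    rw [g.dist_eq]; exact hQ.lt_dist p hp q hq fun h => hne (h ▸ rfl)

lemma image_reflection [DecidableEq X] {ς : X → X ≃ᵢ X} (hς : ∀ m, IsReflection m (ς m))
    (hQ : IsPacking z r ε Q) : IsPacking z (2 * r) (2 * ε) (Q.image fun m => ς m z) where
  dist_le := Finset.forall_mem_image.2 fun m hm => by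
    rw [(hς m).dist_map, dist_comm]
    linarith [hQ.dist_le m hm]
  lt_dist := Finset.forall_mem_image.2 fun p hp => Finset.forall_mem_image.2 fun q hq hne => by
    have hsep := hQ.lt_dist p hp q hq fun h => hne (h ▸ rfl)
    linarith [(hς p).two_mul_dist_le (hς q) z]

end IsPacking

lemma card_image_reflection [DecidableEq X] {ς : X → X ≃ᵢ X}
    (hς : ∀ m, IsReflection m (ς m)) (z : X) (Q : Finset X) :
    (Q.image fun m => ς m z).card = Q.card := by
  refine Finset.card_image_of_injective Q fun p q (hpq : ς p z = ς q z) => ?_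
  have hexp := (hς p).two_mul_dist_le (hς q) z
  rw [hpq, dist_self] at hexp
  exact dist_le_zero.1 (by linarith)

section Proper

variable [ProperSpace X] {z y : X} {r ε : ℝ} {Q : Finset X}

lemma packingNumber_closedBall_ne_top (z : X) (r : ℝ) (hε : 0 < ε) :
    packingNumber ε.toNNReal (closedBall z r) ≠ ⊤ := by
  have hhalf : (ε / 2).toNNReal ≠ 0 := (Real.toNNReal_pos.2 (half_pos hε)).ne'
  have htwo : ε.toNNReal = 2 * (ε / 2).toNNReal := by
    rw [← Real.toNNReal_ofNat, ← Real.toNNReal_mul zero_le_two, mul_div_cancel₀ _ two_ne_zero]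
  obtain ⟨N, -, hN, hcover⟩ := exists_finite_isCover_of_isCompact hhalf (isCompact_closedBall z r)
  rw [htwo]
  exact ((packingNumber_two_mul_le_externalCoveringNumber _ _).trans
    hcover.externalCoveringNumber_le_encard |>.trans_lt hN.encard_lt_top).ne

lemma IsPacking.card_le (hε : 0 < ε) (hQ : IsPacking z r ε Q) : Q.card ≤ packingNum z r ε := by
  obtain ⟨hsub, hsep⟩ := (isPacking_iff hε.le).1 hQ
  have hle := hsep.encard_le_packingNumber hsub
  rw [encard_coe_eq_coe_finsetCard] at hle
  exact ENat.toNat_le_toNat hle (packingNumber_closedBall_ne_top z r hε)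

lemma exists_isPacking_card_eq (z : X) (r : ℝ) (hε : 0 < ε) :
    ∃ Q, IsPacking z r ε Q ∧ Q.card = packingNum z r ε := by
  obtain ⟨C, hsub, hfin, hsep, hcard⟩ :=
    exists_set_encard_eq_packingNumber (packingNumber_closedBall_ne_top z r hε)
  lift C to Finset X using hfin
  refine ⟨C, (isPacking_iff hε.le).2 ⟨hsub, hsep⟩, ?_⟩
  rw [packingNum, ← hcard, encard_coe_eq_coe_finsetCard, ENat.toNat_natCast]

lemma IsPacking.exists_dist_le_of_card_eq (hε : 0 < ε) (hQ : IsPacking z r ε Q)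
    (hcard : Q.card = packingNum z r ε) (hy : dist z y ≤ r) : ∃ q ∈ Q, dist q y ≤ ε := by
  classical
  by_contra! hfar
  have hyQ : y ∉ Q := fun h => by
    have := hfar y h
    rw [dist_self] at this
    exact hε.not_gt this
  have hunion : IsPacking z r ε (Q ∪ {y}) :=
    hQ.union ⟨by simpa using hy, by simp⟩ (by simpa using hfar)
  have hle := hunion.card_le hε
  rw [Finset.card_union_of_disjoint (Finset.disjoint_singleton_right.2 hyQ),
    Finset.card_singleton] at hle
  lia

lemma packingNum_pos (z : X) (hr : 0 ≤ r) (hε : 0 < ε) : 0 < packingNum z r ε := by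
  have hsingle : IsPacking z r ε {z} := ⟨by simpa using hr, by simp⟩
  exact hsingle.card_le hε

lemma packingNum_mono (z : X) {r' : ℝ} (hr : r ≤ r') (hε : 0 < ε) :
    packingNum z r ε ≤ packingNum z r' ε := by
  obtain ⟨Q, hQ, hcard⟩ := exists_isPacking_card_eq z r hε
  rw [← hcard]
  exact (hQ.recenter fun q hq => (hQ.dist_le q hq).trans hr).card_le hε

lemma packingNum_le_map (g : X ≃ᵢ X) (z : X) (r : ℝ) (hε : 0 < ε) :
    packingNum z r ε ≤ packingNum (g z) r ε := by
  classical
  obtain ⟨Q, hQ, hcard⟩ := exists_isPacking_card_eq z r hε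
  rw [← hcard, ← Finset.card_image_of_injective Q g.injective]
  exact (hQ.image g).card_le hε

lemma PointSymmetric.packingNum_le_two_mul (hX : PointSymmetric X) (z : X) (r : ℝ) (hε : 0 < ε) :
    packingNum z r ε ≤ packingNum z (2 * r) (2 * ε) := by
  classical
  choose ς hς using hX.exists_isReflection
  obtain ⟨Q, hQ, hcard⟩ := exists_isPacking_card_eq z r hε
  rw [← hcard, ← card_image_reflection hς z]
  exact (hQ.image_reflection hς).card_le (by positivity)

lemma PointSymmetric.antitone_packingNum (hX : PointSymmetric X) (z : X) (hε : 0 < ε) :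
    Antitone fun j : ℕ => packingNum z ((1 / 2) ^ j) (ε * (1 / 2) ^ j) := by
  refine antitone_nat_of_succ_le fun n => ?_
  have hdouble := hX.packingNum_le_two_mul z ((1 / 2) ^ (n + 1)) (ε := ε * (1 / 2) ^ (n + 1))
    (by positivity)
  refine hdouble.trans_eq ?_
  congr 1 <;> ring

lemma PointSymmetric.exists_packingNum_succ_eq (hX : PointSymmetric X) (z : X) (hε : 0 < ε) :
    ∃ J : ℕ, ∀ j ≥ J, packingNum z ((1 / 2) ^ (j + 1)) (ε * (1 / 2) ^ (j + 1)) =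
      packingNum z ((1 / 2) ^ j) (ε * (1 / 2) ^ j) := by
  obtain ⟨J, hJ⟩ := WellFoundedGT.monotone_chain_condition (α := ℕᵒᵈ)
    ⟨_, (hX.antitone_packingNum z hε).dual_right⟩
  exact ⟨J, fun j hj => ((hJ (j + 1) (by lia)).symm.trans (hJ j hj) :)⟩

end Proper

end Packings

section Transitivity

variable {X : Type*} [MetricSpace X]

lemma exists_nat_half_pow_lt_and_le {d : ℝ} (hd : 0 < d) {J : ℕ} (hJ : d ≤ (1 / 2) ^ J) :
    ∃ j ≥ J, (1 / 2) ^ (j + 1) < d ∧ d ≤ (1 / 2) ^ j := by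
  have hd_one : d ≤ 1 := hJ.trans (pow_le_one₀ (by norm_num) (by norm_num))
  obtain ⟨j, hlt, hle⟩ :=
    exists_nat_pow_near_of_lt_one hd hd_one (y := 1 / 2) (by norm_num) (by norm_num)
  refine ⟨j, ?_, hlt, hle⟩
  by_contra! hjJ
  have hpow := pow_le_pow_of_le_one (by norm_num : (0 : ℝ) ≤ 1 / 2) (by norm_num) hjJ
  exact (hlt.trans_le (hJ.trans hpow)).false

variable [ProperSpace X]

/- At scales where doubling no longer increases the packing number, reflecting `z` in the points
of a maximal packing yields a maximal packing of the doubled ball, which must come close to `y`. -/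
lemma PointSymmetric.exists_reflection_dist_le (hX : PointSymmetric X) (z : X) {ε : ℝ}
    (hε : 0 < ε) : ∃ r > 0, ∀ y, dist z y ≤ r →
      ∃ m ς, IsReflection m ς ∧ dist (ς z) y ≤ ε * dist z y := by
  classical
  choose ς hς using hX.exists_isReflection
  obtain ⟨J, hJ⟩ := hX.exists_packingNum_succ_eq z (half_pos hε)
  refine ⟨(1 / 2) ^ J, by positivity, fun y hy => ?_⟩
  rcases (dist_nonneg (x := z) (y := y)).eq_or_lt with hzero | hpos
  · exact ⟨z, ς z, hς z, by simp [(hς z).map_center, ← hzero]⟩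
  obtain ⟨j, hjJ, hlt, hle⟩ := exists_nat_half_pow_lt_and_le hpos hy
  obtain ⟨Q, hQ, hcard⟩ :=
    exists_isPacking_card_eq z ((1 / 2) ^ (j + 1)) (ε := ε / 2 * (1 / 2) ^ (j + 1)) (by positivity)
  have himage := hQ.image_reflection hς
  rw [show 2 * (1 / 2 : ℝ) ^ (j + 1) = (1 / 2) ^ j by ring,
    show 2 * (ε / 2 * (1 / 2) ^ (j + 1)) = ε / 2 * (1 / 2) ^ j by ring] at himage
  obtain ⟨q, hq, hqy⟩ := himage.exists_dist_le_of_card_eq (by positivity)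
    (by rw [card_image_reflection hς, hcard, hJ j hjJ]) hle
  obtain ⟨m, -, rfl⟩ := Finset.mem_image.1 hq
  refine ⟨m, ς m, hς m, hqy.trans ?_⟩
  calc ε / 2 * (1 / 2) ^ j = ε * (1 / 2) ^ (j + 1) := by ring
    _ ≤ ε * dist z y := by gcongr

open Filter Topology in
lemma isClosed_isometry_orbit (z : X) : IsClosed {y : X | ∃ g : X ≃ᵢ X, g z = y} := by
  refine isClosed_iff_ultrafilter.2 fun y U hU hmem => ?_
  have hchoice : ∀ x, ∃ g : X ≃ᵢ X, (∃ g : X ≃ᵢ X, g z = x) → g z = x := fun x => by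
    by_cases hx : ∃ g : X ≃ᵢ X, g z = x
    · exact hx.imp fun _ h _ => h
    · exact ⟨1, fun h => absurd h hx⟩
  choose g hg using hchoice
  have heq : ∀ᶠ x in (U : Filter X), g x z = x := by
    filter_upwards [hmem] with x hx using hg x hx
  obtain ⟨G, hG⟩ := exists_isometryEquiv_tendsto U g (z := z) (R := dist z y + 1) <| by
    filter_upwards [heq, hU (ball_mem_nhds y one_pos)] with x hx hxy
    rw [hx]
    linarith [dist_triangle z y x, mem_ball'.1 hxy]
  exact ⟨G, tendsto_nhds_unique (hG z) (Tendsto.congr' (heq.mono fun x hx => hx.symm) hU)⟩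

lemma PointSymmetric.isOpen_isometry_orbit (hX : PointSymmetric X) (z : X) :
    IsOpen {y : X | ∃ g : X ≃ᵢ X, g z = y} := by
  set A := {y : X | ∃ g : X ≃ᵢ X, g z = y}
  obtain ⟨r, hr, happrox⟩ := hX.exists_reflection_dist_le z (ε := 1 / 2) (by norm_num)
  refine Metric.isOpen_iff.2 ?_
  rintro _ ⟨g₀, rfl⟩
  refine ⟨r, hr, fun y hy => ?_⟩
  by_contra hyA
  obtain ⟨_, ⟨g, rfl⟩, hnearest⟩ :=
    (isClosed_isometry_orbit z).exists_infDist_eq_dist (s := A) ⟨z, 1, rfl⟩ y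
  have hpos : 0 < dist y (g z) := dist_pos.2 fun h => hyA ⟨g, h.symm⟩
  have hdist : dist z (g⁻¹ y) = dist y (g z) := by rw [dist_inv_apply, dist_comm]
  have hgz : dist y (g z) < r :=
    hnearest ▸ (infDist_le_dist_of_mem (s := A) ⟨g₀, rfl⟩).trans_lt hy
  obtain ⟨m, ς, -, hcloser⟩ := happrox (g⁻¹ y) (by rw [hdist]; exact hgz.le)
  have hmin : dist y (g z) ≤ dist y ((g * ς) z) :=
    hnearest ▸ infDist_le_dist_of_mem (s := A) ⟨g * ς, rfl⟩
  rw [hdist, dist_inv_apply, ← IsometryEquiv.mul_apply, dist_comm _ y] at hcloser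
  linarith

variable [PreconnectedSpace X]

lemma PointSymmetric.exists_isometryEquiv_apply_eq (hX : PointSymmetric X) (z w : X) :
    ∃ g : X ≃ᵢ X, g z = w := by
  have huniv : {y : X | ∃ g : X ≃ᵢ X, g z = y} = univ :=
    IsClopen.eq_univ ⟨isClosed_isometry_orbit z, hX.isOpen_isometry_orbit z⟩ ⟨z, 1, rfl⟩
  exact huniv.ge (mem_univ w)

lemma PointSymmetric.packingNum_eq (hX : PointSymmetric X) (z w : X) (r : ℝ) {ε : ℝ}
    (hε : 0 < ε) : packingNum z r ε = packingNum w r ε := by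
  obtain ⟨g, rfl⟩ := hX.exists_isometryEquiv_apply_eq z w
  refine le_antisymm (packingNum_le_map g z r hε) ?_
  simpa only [IsometryEquiv.inv_apply_self] using packingNum_le_map g⁻¹ (g z) r hε

lemma PointSymmetric.exists_uniform_reflection_dist_le [Nonempty X] (hX : PointSymmetric X)
    {ε : ℝ} (hε : 0 < ε) : ∃ r > 0, ∀ z y : X, dist z y ≤ r →
      ∃ m ς, IsReflection m ς ∧ dist (ς z) y ≤ ε * dist z y := by
  obtain ⟨z₀⟩ := ‹Nonempty X›
  obtain ⟨r, hr, happrox⟩ := hX.exists_reflection_dist_le z₀ hε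
  refine ⟨r, hr, fun z y hzy => ?_⟩
  obtain ⟨g, rfl⟩ := hX.exists_isometryEquiv_apply_eq z₀ z
  obtain ⟨m, ς, hς, hclose⟩ := happrox (g⁻¹ y) (by rwa [dist_inv_apply])
  refine ⟨_, _, hς.conj g, ?_⟩
  simpa only [IsometryEquiv.mul_apply, IsometryEquiv.inv_apply_self, dist_inv_apply] using hclose

end Transitivity

section PackingComparison

variable {X : Type*} [MetricSpace X]

lemma card_filter_image_reflection_le [DecidableEq X] {ς : X → X ≃ᵢ X}
    (hς : ∀ m, IsReflection m (ς m)) {a z : X} {α β : X ≃ᵢ X} (hα : IsReflection a α)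
    (hβ : IsReflection a β) (Q : Finset X) (t : ℝ) :
    ((Q.image fun m => ς m z).filter fun q => dist (α z) q ≤ t ∨ dist (β z) q ≤ t).card ≤
      (Q.filter fun m => dist a m ≤ t / 2).card := by
  rw [Finset.filter_image]
  refine Finset.card_image_le.trans (Finset.card_le_card ?_)
  refine Finset.monotone_filter_right Q fun m _ hm => ?_
  rcases hm with hm | hm
  · linarith [hα.two_mul_dist_le (hς m) z]
  · linarith [hβ.two_mul_dist_le (hς m) z]

variable [ProperSpace X]

/- Replace the points of `Q` near `y` by an optimal packing of a slightly smaller ball. -/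
lemma IsPacking.packingNum_le_card_filter {z y : X} {r s t : ℝ} (hs : 0 < s) {Q : Finset X}
    (hQ : IsPacking z r s Q) (hcard : Q.card = packingNum z r s) (hy : dist z y + t ≤ r) :
    packingNum y (t - s) s ≤ (Q.filter fun q => dist y q ≤ t).card := by
  classical
  obtain ⟨W, hW, hWcard⟩ := exists_isPacking_card_eq y (t - s) hs
  set F := Q.filter fun q => ¬ dist y q ≤ t
  have hfar : ∀ p ∈ F, ∀ w ∈ W, s < dist p w := by
    intro p hp w hw
    linarith [(Finset.mem_filter.1 hp).2, hW.dist_le w hw, dist_triangle_right y p w]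
  have hdisj : Disjoint F W := Finset.disjoint_left.2 fun q hq hqW => by
    have hself := hfar q hq q hqW
    rw [dist_self] at hself
    exact hs.not_gt hself
  have hWz : IsPacking z r s W := hW.recenter fun w hw => by
    linarith [hW.dist_le w hw, dist_triangle z y w]
  have hle := ((hQ.filter _).union hWz hfar).card_le hs
  rw [Finset.card_union_of_disjoint hdisj, ← hcard, hWcard] at hle
  have hsplit := Finset.card_filter_add_card_filter_not (s := Q) fun q => dist y q ≤ t
  lia

variable [PreconnectedSpace X]

lemma PointSymmetric.packingNum_le_mul (hX : PointSymmetric X) (z : X) (R : ℝ) {s t : ℝ}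
    (ht : 0 < t) (hs : 0 < s) : packingNum z R s ≤ packingNum z t s * packingNum z R t := by
  classical
  obtain ⟨W, hW, hWcard⟩ := exists_isPacking_card_eq z R ht
  obtain ⟨Q, hQ, hQcard⟩ := exists_isPacking_card_eq z R hs
  have hcover : ∀ q ∈ Q, ∃ w ∈ W, dist w q ≤ t := fun q hq =>
    hW.exists_dist_le_of_card_eq ht hWcard (hQ.dist_le q hq)
  choose! f hfW hf using hcover
  rw [← hQcard, ← hWcard]
  refine Finset.card_le_mul_card_image_of_maps_to (f := f) hfW _ fun w _ => ?_
  rw [hX.packingNum_eq z w t hs]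
  refine ((hQ.filter (f · = w)).recenter fun q hq => ?_).card_le hs
  obtain ⟨hqQ, rfl⟩ := Finset.mem_filter.1 hq
  exact hf q hqQ

/- A maximal packing of the doubled ball consisting of reflected points has many points near `α z`
and near `β z`, all of which come from reflections at centres near `a`. -/
lemma PointSymmetric.two_mul_packingNum_le (hX : PointSymmetric X) {a z : X} {α β : X ≃ᵢ X}
    (hα : IsReflection a α) (hβ : IsReflection a β) {r ε t : ℝ} (hε : 0 < ε)
    (hstable : packingNum z r ε = packingNum z (2 * r) (2 * ε))
    (haz : 2 * dist a z + t ≤ 2 * r) (hfar : 2 * t < dist (α z) (β z)) :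
    2 * packingNum z (t - 2 * ε) (2 * ε) ≤ packingNum z t (2 * ε) := by
  classical
  have hε2 : 0 < 2 * ε := by positivity
  choose ς hς using hX.exists_isReflection
  obtain ⟨Q, hQ, hcard⟩ := exists_isPacking_card_eq z r hε
  set Q' := Q.image fun m => ς m z
  have hQ' : IsPacking z (2 * r) (2 * ε) Q' := hQ.image_reflection hς
  have hcard' : Q'.card = packingNum z (2 * r) (2 * ε) := by
    rw [card_image_reflection hς, hcard, hstable]
  have hnear : ∀ γ, IsReflection a γ →
      packingNum z (t - 2 * ε) (2 * ε) ≤ (Q'.filter fun q => dist (γ z) q ≤ t).card := by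
    intro γ hγ
    rw [hX.packingNum_eq z (γ z) _ hε2]
    exact hQ'.packingNum_le_card_filter hε2 hcard' (by rwa [hγ.dist_map])
  have hdisj : Disjoint (Q'.filter fun q => dist (α z) q ≤ t)
      (Q'.filter fun q => dist (β z) q ≤ t) := by
    refine Finset.disjoint_filter.2 fun q _ hq hq' => ?_
    linarith [dist_triangle_right (α z) (β z) q]
  calc 2 * packingNum z (t - 2 * ε) (2 * ε)
      ≤ (Q'.filter fun q => dist (α z) q ≤ t).card +
          (Q'.filter fun q => dist (β z) q ≤ t).card := by
        linarith [hnear α hα, hnear β hβ]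
    _ = (Q'.filter fun q => dist (α z) q ≤ t ∨ dist (β z) q ≤ t).card := by
        rw [← Finset.card_union_of_disjoint hdisj, ← Finset.filter_or]
    _ ≤ (Q.filter fun m => dist a m ≤ t / 2).card :=
        card_filter_image_reflection_le hς hα hβ Q t
    _ ≤ packingNum a (t / 2) ε :=
        ((hQ.filter _).recenter fun q hq => (Finset.mem_filter.1 hq).2).card_le hε
    _ ≤ packingNum a (2 * (t / 2)) (2 * ε) := hX.packingNum_le_two_mul a _ hε
    _ = packingNum z t (2 * ε) := by
        rw [mul_div_cancel₀ t two_ne_zero, hX.packingNum_eq a z _ hε2]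

lemma PointSymmetric.two_pow_mul_packingNum_le (hX : PointSymmetric X) {a z : X} {α β : X ≃ᵢ X}
    (hα : IsReflection a α) (hβ : IsReflection a β) {r ε t : ℝ} (hε : 0 < ε)
    (hstable : packingNum z r ε = packingNum z (2 * r) (2 * ε))
    (haz : 2 * dist a z + t ≤ 2 * r) (hfar : 2 * t < dist (α z) (β z)) (i : ℕ) :
    2 ^ i * packingNum z (t - i * (2 * ε)) (2 * ε) ≤ packingNum z t (2 * ε) := by
  induction i with
  | zero => simp
  | succ i ih =>
    have hi : 0 ≤ i * (2 * ε) := by positivity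
    have hstep := hX.two_mul_packingNum_le hα hβ (t := t - i * (2 * ε)) hε hstable
      (by linarith) (by linarith)
    calc 2 ^ (i + 1) * packingNum z (t - (i + 1 : ℕ) * (2 * ε)) (2 * ε)
        = 2 ^ i * (2 * packingNum z (t - i * (2 * ε) - 2 * ε) (2 * ε)) := by
          rw [show t - (i + 1 : ℕ) * (2 * ε) = t - i * (2 * ε) - 2 * ε by push_cast; ring]
          ring
      _ ≤ 2 ^ i * packingNum z (t - i * (2 * ε)) (2 * ε) := Nat.mul_le_mul_left _ hstep
      _ ≤ packingNum z t (2 * ε) := ih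

lemma PointSymmetric.dist_reflection_le_of_packingNum_eq (hX : PointSymmetric X) {a z : X}
    {α β : X ≃ᵢ X} (hα : IsReflection a α) (hβ : IsReflection a β) {r ε t : ℝ} {N : ℕ}
    (hε : 0 < ε) (ht : 0 < t) (hstable : packingNum z r ε = packingNum z (2 * r) (2 * ε))
    (haz : 2 * dist a z + t ≤ 2 * r) (hN : packingNum z t (t / 2) ≤ N) (hNε : N * (4 * ε) ≤ t) :
    dist (α z) (β z) ≤ 2 * t := by
  by_contra! hfar
  have hε2 : 0 < 2 * ε := by positivity
  have hpos : 0 < packingNum z (t / 2) (2 * ε) := packingNum_pos z (by positivity) hε2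
  have hle : 2 ^ N * packingNum z (t / 2) (2 * ε) ≤ N * packingNum z (t / 2) (2 * ε) := by
    calc 2 ^ N * packingNum z (t / 2) (2 * ε)
        ≤ 2 ^ N * packingNum z (t - N * (2 * ε)) (2 * ε) :=
          Nat.mul_le_mul_left _ (packingNum_mono z (by linarith) hε2)
      _ ≤ packingNum z t (2 * ε) := hX.two_pow_mul_packingNum_le hα hβ hε hstable haz hfar N
      _ ≤ packingNum z (t / 2) (2 * ε) * packingNum z t (t / 2) :=
          hX.packingNum_le_mul z t (half_pos ht) hε2
      _ ≤ N * packingNum z (t / 2) (2 * ε) := by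
          rw [mul_comm]; exact Nat.mul_le_mul_right _ hN
  exact (Nat.le_of_mul_le_mul_right hle hpos).not_gt Nat.lt_two_pow_self

lemma PointSymmetric.exists_dist_reflection_le [Nonempty X] (hX : PointSymmetric X) (k : ℕ) :
    ∃ J : ℕ, ∀ j ≥ J, ∀ (a z : X) (α β : X ≃ᵢ X), IsReflection a α → IsReflection a β →
      dist a z ≤ (1 / 2) ^ (j + 2) → dist (α z) (β z) ≤ (1 / 2) ^ k * (1 / 2) ^ j := by
  obtain ⟨z₀⟩ := ‹Nonempty X›
  set N := packingNum z₀ 1 (1 / 2)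
  set ε : ℝ := (1 / 2) ^ k / (4 * (N + 1)) with hε_def
  have hε : 0 < ε := by positivity
  obtain ⟨J, hJ⟩ := hX.exists_packingNum_succ_eq z₀ hε
  refine ⟨J, fun j hj a z α β hα hβ haz => ?_⟩
  set r : ℝ := (1 / 2) ^ (j + 1) with hr_def
  have hr : 0 < r := by positivity
  have hεr : 0 < ε * r := by positivity
  have hpow : (1 / 2 : ℝ) ^ j = 2 * r := by rw [hr_def]; ring
  have hκ : (1 / 2 : ℝ) ^ k ≤ 1 := pow_le_one₀ (by norm_num) (by norm_num)
  have hstable : packingNum z r (ε * r) = packingNum z (2 * r) (2 * (ε * r)) := by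
    have h := hJ j hj
    rw [hpow, show ε * (2 * r) = 2 * (ε * r) by ring] at h
    rwa [hX.packingNum_eq z z₀ _ hεr, hX.packingNum_eq z z₀ _ (by positivity)]
  have hN : packingNum z ((1 / 2) ^ k * r) ((1 / 2) ^ k * r / 2) ≤ N := by
    have h := hX.antitone_packingNum z₀ (ε := 1 / 2) (by norm_num) (Nat.zero_le (k + j + 1))
    simp only [pow_zero, mul_one] at h
    have hhalf : (1 / 2 : ℝ) ^ k * r = (1 / 2) ^ (k + j + 1) := by rw [hr_def]; ring
    rwa [hX.packingNum_eq z z₀ _ (by positivity), hhalf,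
      ← one_div_mul_eq_div 2 (_ ^ _)]
  have hNε : N * (4 * (ε * r)) ≤ (1 / 2) ^ k * r := by
    have hN1 : (N : ℝ) * (4 * ε) ≤ (1 / 2) ^ k := by
      rw [hε_def, ← mul_div_assoc, ← mul_div_assoc, div_le_iff₀ (by positivity)]
      nlinarith [show (0 : ℝ) < (1 / 2) ^ k by positivity]
    nlinarith
  have haz' : 2 * dist a z + (1 / 2) ^ k * r ≤ 2 * r := by
    have hquarter : (1 / 2 : ℝ) ^ (j + 2) = r / 2 := by rw [hr_def]; ring
    nlinarith
  have hdist := hX.dist_reflection_le_of_packingNum_eq hα hβ hεr (by positivity) hstable haz' hN hNε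
  rw [hpow]
  linarith

end PackingComparison

section LocalUniqueness

open Filter Topology

variable {X : Type*} [MetricSpace X]

/-- `h` fixes `a` and its displacement on small balls around `a` is of smaller order than their
radius; only dyadic radii are considered. -/
structure IsInfinitesimallyTrivial (a : X) (h : X ≃ᵢ X) : Prop where
  map_eq : h a = a
  displacement_le : ∀ c > 0, ∃ j₀ : ℕ, ∀ j ≥ j₀, ∀ z, dist a z ≤ (1 / 2) ^ j →
    dist z (h z) ≤ c * (1 / 2) ^ j

lemma IsInfinitesimallyTrivial.mul_self {a : X} {h : X ≃ᵢ X}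
    (hh : IsInfinitesimallyTrivial a h) : IsInfinitesimallyTrivial a (h * h) where
  map_eq := by rw [IsometryEquiv.mul_apply, hh.map_eq, hh.map_eq]
  displacement_le c hc := by
    obtain ⟨j₀, hj₀⟩ := hh.displacement_le (c / 2) (half_pos hc)
    refine ⟨j₀, fun j hj z hz => ?_⟩
    have htri := dist_triangle z (h z) (h (h z))
    rw [h.dist_eq] at htri
    rw [IsometryEquiv.mul_apply]
    linarith [hj₀ j hj z hz]

lemma PointSymmetric.displacement_le_of_le (hX : PointSymmetric X) {a : X} {h : X ≃ᵢ X}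
    (ha : h a = a) {c : ℝ} (hc : ∀ z, dist a z ≤ 1 → dist z (h z) ≤ c) (j : ℕ) :
    ∀ z, dist a z ≤ (1 / 2) ^ j → dist z (h z) ≤ c * (1 / 2) ^ j := by
  induction j with
  | zero => simpa only [pow_zero, mul_one] using hc
  | succ j ih =>
    intro z hz
    obtain ⟨ς, hς⟩ := hX.exists_isReflection z
    have hconvex := hς.two_mul_displacement_le h a
    rw [ha, dist_self] at hconvex
    rw [pow_succ] at hz ⊢
    linarith [ih (ς a) (by rw [hς.dist_map, dist_comm]; linarith)]

variable [ProperSpace X]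

lemma eventually_dist_le_of_tendsto {ι : Type*} {l : Filter ι} {g : ι → X ≃ᵢ X} {G : X ≃ᵢ X}
    (hG : ∀ x, Tendsto (fun i => g i x) l (𝓝 (G x))) (a : X) (R : ℝ) {δ : ℝ} (hδ : 0 < δ) :
    ∀ᶠ i in l, ∀ x, dist a x ≤ R → dist (g i x) (G x) ≤ δ := by
  obtain ⟨t, ht, hcover⟩ := Metric.totallyBounded_iff.1
    (isCompact_closedBall a R).totallyBounded (δ / 3) (by positivity)
  have hnet : ∀ᶠ i in l, ∀ y ∈ t, dist (g i y) (G y) < δ / 3 :=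
    (Set.Finite.eventually_all ht).2 fun y _ => Metric.tendsto_nhds.1 (hG y) _ (by positivity)
  filter_upwards [hnet] with i hi x hx
  obtain ⟨y, hy, hxy⟩ := mem_iUnion₂.1 (hcover (mem_closedBall'.2 hx))
  have htri := dist_triangle4 (g i x) (g i y) (G y) (G x)
  rw [IsometryEquiv.dist_eq, IsometryEquiv.dist_eq, dist_comm y x] at htri
  linarith [hi y hy, mem_ball.1 hxy]

/- If not, compactness yields two counterexamples `h i`, `h j` that nearly agree on the unit ball,
hence by convexity on all smaller balls, while `h j` hardly moves the ball where `h i` fails. -/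
lemma PointSymmetric.exists_uniform_displacement_le (hX : PointSymmetric X) (a : X) {c : ℝ}
    (hc : 0 < c) : ∃ j : ℕ, ∀ h, IsInfinitesimallyTrivial a h →
      ∀ z, dist a z ≤ (1 / 2) ^ j → dist z (h z) ≤ c * (1 / 2) ^ j := by
  by_contra! hno
  choose h hh z hz hcz using hno
  let U : Ultrafilter ℕ := hyperfilter ℕ
  obtain ⟨G, hG⟩ := exists_isometryEquiv_tendsto U h (z := a) (R := 0)
    (Eventually.of_forall fun i => by rw [(hh i).map_eq, dist_self])
  have hunif := eventually_dist_le_of_tendsto hG a 1 (δ := c / 4) (by positivity)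
  obtain ⟨j, hj⟩ := hunif.exists
  obtain ⟨j₀, hj₀⟩ := (hh j).displacement_le (c / 4) (by positivity)
  have hlarge : ∀ᶠ i in (U : Filter ℕ), j₀ ≤ i :=
    Nat.hyperfilter_le_atTop (eventually_ge_atTop j₀)
  obtain ⟨i, hi, hij⟩ := (hunif.and hlarge).exists
  have hdisp : ∀ x, dist x (((h j)⁻¹ * h i) x) = dist (h j x) (h i x) := fun x =>
    dist_inv_apply (h j) x (h i x)
  have hfix : ((h j)⁻¹ * h i) a = a := dist_le_zero.1 <| by
    rw [dist_comm, hdisp, (hh i).map_eq, (hh j).map_eq, dist_self]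
  have hscale := hX.displacement_le_of_le hfix (c := c / 2) (fun x hx => by
    rw [hdisp]
    linarith [dist_triangle_right (h j x) (h i x) (G x), hj x hx, hi x hx]) i (z i) (hz i)
  rw [hdisp] at hscale
  have hpos : (0 : ℝ) < (1 / 2) ^ i := by positivity
  nlinarith [hj₀ i hij (z i) (hz i), hcz i, dist_triangle (z i) (h j (z i)) (h i (z i))]

/- Squaring increases the displacement by a definite factor but preserves infinitesimal
triviality, which bounds the displacement uniformly. -/
lemma PointSymmetric.exists_isInfinitesimallyTrivial_apply_eq (hX : PointSymmetric X) (a : X) :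
    ∃ r > 0, ∀ h, IsInfinitesimallyTrivial a h → ∀ z, dist a z ≤ r → h z = z := by
  obtain ⟨j, hj⟩ := hX.exists_uniform_displacement_le a (c := 1 / 16) (by norm_num)
  set R : ℝ := (1 / 2) ^ j
  have hR : 0 < R := by positivity
  refine ⟨R / 2, half_pos hR, fun h hh z hz => ?_⟩
  have hgrow : ∀ h, IsInfinitesimallyTrivial a h →
      3 / 2 * dist z (h z) ≤ dist z ((h * h) z) := by
    intro h hh
    have hzR := hj h hh z (by linarith)
    have hsq := hX.displacement_sq_ge h z (M := 1 / 16 * R) (half_pos hR)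
      (fun y hy => hj h hh y (by linarith [dist_triangle a z y])) (by linarith)
    have hratio : 2 * (1 / 16 * R + dist z (h z)) / (R / 2) ≤ 1 / 2 := by
      rw [div_le_iff₀ (half_pos hR)]; linarith
    rw [IsometryEquiv.mul_apply]
    nlinarith [dist_nonneg (x := z) (y := h z)]
  have hiter : ∀ n : ℕ, ∃ g, IsInfinitesimallyTrivial a g ∧
      (3 / 2) ^ n * dist z (h z) ≤ dist z (g z) := by
    intro n
    induction n with
    | zero => exact ⟨h, hh, by simp⟩
    | succ n ih =>
      obtain ⟨g, hg, hle⟩ := ih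
      exact ⟨g * g, hg.mul_self, by rw [pow_succ]; linarith [hgrow g hg]⟩
  by_contra hne
  have hpos : 0 < dist z (h z) := dist_pos.2 (Ne.symm hne)
  obtain ⟨n, hn⟩ := pow_unbounded_of_one_lt (R / dist z (h z)) (by norm_num : (1 : ℝ) < 3 / 2)
  rw [div_lt_iff₀ hpos] at hn
  obtain ⟨g, hg, hle⟩ := hiter n
  linarith [hj g hg z (by linarith)]

variable [PreconnectedSpace X]

lemma PointSymmetric.isInfinitesimallyTrivial_inv_mul [Nonempty X] (hX : PointSymmetric X) {a : X}
    {α β : X ≃ᵢ X} (hα : IsReflection a α) (hβ : IsReflection a β) :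
    IsInfinitesimallyTrivial a (β⁻¹ * α) where
  map_eq := by rw [IsometryEquiv.mul_apply, hα.map_center, hβ.inv.map_center]
  displacement_le c hc := by
    obtain ⟨k, hk⟩ := exists_pow_lt_of_lt_one (div_pos hc four_pos) (by norm_num : (1 / 2 : ℝ) < 1)
    obtain ⟨J, hJ⟩ := hX.exists_dist_reflection_le k
    refine ⟨J + 2, fun j hj z hz => ?_⟩
    obtain ⟨i, rfl⟩ := Nat.exists_eq_add_of_le' (le_add_self.trans hj)
    rw [IsometryEquiv.mul_apply, dist_inv_apply]
    calc dist (β z) (α z) ≤ (1 / 2) ^ k * (1 / 2) ^ i := hJ i (by lia) a z β α hβ hα hz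
      _ ≤ c / 4 * (1 / 2) ^ i := by gcongr
      _ = c * (1 / 2) ^ (i + 2) := by ring

/-- Local uniqueness of reflections: any two with the same centre agree on the ball of radius `r`
around it. -/
def ReflectionsAgree (X : Type*) [MetricSpace X] (r : ℝ) : Prop :=
  ∀ ⦃a z : X⦄ ⦃α β : X ≃ᵢ X⦄, IsReflection a α → IsReflection a β → dist a z ≤ r → α z = β z

lemma PointSymmetric.exists_reflectionsAgree [Nonempty X] (hX : PointSymmetric X) :
    ∃ r > 0, ReflectionsAgree X r := by
  obtain ⟨a₀⟩ := id ‹Nonempty X›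
  obtain ⟨r, hr, htrivial⟩ := hX.exists_isInfinitesimallyTrivial_apply_eq a₀
  refine ⟨r, hr, fun a z α β hα hβ hz => ?_⟩
  obtain ⟨g, rfl⟩ := hX.exists_isometryEquiv_apply_eq a a₀
  have hfix := htrivial _ (hX.isInfinitesimallyTrivial_inv_mul (hα.conj g) (hβ.conj g)) (g z)
    (by rwa [g.dist_eq])
  have hconj := congrArg (g * β * g⁻¹) hfix
  rw [← IsometryEquiv.mul_apply, mul_inv_cancel_left] at hconj
  simpa only [IsometryEquiv.mul_apply, IsometryEquiv.inv_apply_self, g.injective.eq_iff] using hconj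

end LocalUniqueness

section LipschitzReflections

open Filter Topology

variable {X : Type*} [MetricSpace X]

lemma ReflectionsAgree.apply_apply {ρ : ℝ} (hρ : ReflectionsAgree X ρ) {a z : X} {α : X ≃ᵢ X}
    (hα : IsReflection a α) (hz : dist a z ≤ ρ) : α (α z) = z := by
  rw [hρ hα hα.inv hz, IsometryEquiv.apply_inv_self]

lemma IsReflection.of_tendsto {ι : Type*} {l : Filter ι} [l.NeBot] {b : ι → X} {β : ι → X ≃ᵢ X}
    {a : X} {B : X ≃ᵢ X} (hβ : ∀ i, IsReflection (b i) (β i)) (hb : Tendsto b l (𝓝 a))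
    (hB : ∀ x, Tendsto (fun i => β i x) l (𝓝 (B x))) : IsReflection a B := by
  have hdist : ∀ y, dist y (B y) = 2 * dist a y := fun y => by
    have hlim : Tendsto (fun i => dist y (β i y)) l (𝓝 (dist y (B y))) :=
      tendsto_const_nhds.dist (hB y)
    simp only [(hβ _).dist_map] at hlim
    exact tendsto_nhds_unique hlim ((hb.dist tendsto_const_nhds).const_mul 2)
  refine ⟨?_, hdist⟩
  rw [eq_comm, ← dist_eq_zero, hdist, dist_self, mul_zero]

/-- A modulus of continuity for reflections in their centre: those whose centres are at distance at
most `δ` differ by at most `t` on the ball of radius `R` around the first centre. -/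
def ReflectionDistLE (X : Type*) [MetricSpace X] (δ R t : ℝ) : Prop :=
  ∀ ⦃a b z : X⦄ ⦃α β : X ≃ᵢ X⦄, IsReflection a α → IsReflection b β → dist a b ≤ δ →
    dist a z ≤ R → dist (α z) (β z) ≤ t

lemma ReflectionDistLE.mono {δ δ' R R' t : ℝ} (h : ReflectionDistLE X δ R t) (hδ : δ' ≤ δ)
    (hR : R' ≤ R) : ReflectionDistLE X δ' R' t :=
  fun _ _ _ _ _ hα hβ hab haz => h hα hβ (hab.trans hδ) (haz.trans hR)

lemma ReflectionDistLE.displacement_le {δ R t : ℝ} (h : ReflectionDistLE X δ R t)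
    (hR : ReflectionsAgree X R) {a b x : X} {α β : X ≃ᵢ X} (hα : IsReflection a α)
    (hβ : IsReflection b β) (hab : dist a b ≤ δ) (hx : dist a x ≤ R) :
    dist x ((β * α) x) ≤ t := by
  have hle := h hα hβ hab (z := α x) (by rwa [hα.dist_center])
  rwa [hR.apply_apply hα hx] at hle

lemma ReflectionsAgree.mono {ρ ρ' : ℝ} (h : ReflectionsAgree X ρ) (hρ : ρ' ≤ ρ) :
    ReflectionsAgree X ρ' :=
  fun _ _ _ _ hα hβ haz => h hα hβ (haz.trans hρ)

/- `(β * α)²` carries `α z` to the reflection of `z` at `β a`, so displacement growth under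
squaring compares the reflections at `a`, `b` with those at `a`, `β a`. -/
lemma PointSymmetric.dist_reflection_mul_le (hX : PointSymmetric X) {δ R ρ t T : ℝ}
    (hagree : ReflectionsAgree X (R + ρ)) (hρ : 0 < ρ) (htρ : t ≤ ρ) (hδρ : δ ≤ ρ)
    (hδ : ReflectionDistLE X δ (R + ρ) t) (h2δ : ReflectionDistLE X (2 * δ) R T)
    {a b z : X} {α β : X ≃ᵢ X} (hα : IsReflection a α) (hβ : IsReflection b β)
    (hab : dist a b ≤ δ) (haz : dist a z ≤ R) :
    dist (α z) (β z) * (2 - 4 * t / ρ) ≤ T := by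
  have hbz : dist b z ≤ R + ρ := by linarith [dist_triangle_left b z a]
  have hfirst : (β * α) (α z) = β z := by
    rw [IsometryEquiv.mul_apply, hagree.apply_apply hα (by linarith)]
  have hsecond : (β * α) (β z) = (β * α * β⁻¹) z := by
    simp only [IsometryEquiv.mul_apply, hagree hβ hβ.inv hbz]
  have hle : dist (α z) (β z) ≤ t := hδ hα hβ hab (by linarith)
  have hsquare := hX.displacement_sq_ge (β * α) (α z) (M := t) hρ
    (fun y hy => hδ.displacement_le hagree hα hβ hab <| by
      linarith [dist_triangle a (α z) y, hα.dist_center z])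
    (by rw [hfirst]; linarith)
  rw [hfirst, hsecond] at hsquare
  have hT := h2δ hα (hα.conj β) (by rw [hβ.dist_map, dist_comm]; linarith) haz
  refine le_trans ?_ (hsquare.trans hT)
  have hdiv : 2 * (t + dist (α z) (β z)) / ρ ≤ 4 * t / ρ :=
    div_le_div_of_nonneg_right (by linarith) hρ.le
  gcongr

section Decay

variable {ρ δ t : ℝ}

lemma mul_half_pow_le (hδ : 0 ≤ δ) (k : ℕ) : δ * (1 / 2) ^ k ≤ δ :=
  mul_le_of_le_one_right hδ (pow_le_one₀ (by norm_num) (by norm_num))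

lemma PointSymmetric.reflectionDistLE_two_thirds_pow (hX : PointSymmetric X)
    (hagree : ReflectionsAgree X (3 * ρ)) (hρ : 0 < ρ) (hδ : 0 ≤ δ) (hδρ : δ ≤ ρ)
    (htρ : 24 * t ≤ ρ) (ht : ReflectionDistLE X δ (3 * ρ) t) (k : ℕ) :
    ReflectionDistLE X (δ * (1 / 2) ^ k) (2 * ρ) (t * (2 / 3) ^ k) := by
  have hadd : 2 * ρ + ρ = 3 * ρ := by ring
  induction k with
  | zero => simpa using ht.mono le_rfl (by linarith)
  | succ k ih =>
    intro a b z α β hα hβ hab haz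
    have hδk := mul_half_pow_le hδ (k + 1)
    have hmul := hX.dist_reflection_mul_le (t := t) (by rwa [hadd]) hρ (by linarith)
      (hδk.trans hδρ) (by rw [hadd]; exact ht.mono hδk le_rfl)
      (by convert ih using 1; ring) hα hβ hab haz
    have hratio : 4 * t / ρ ≤ 1 / 6 := by rw [div_le_iff₀ hρ]; linarith
    rw [pow_succ]
    nlinarith [dist_nonneg (x := α z) (y := β z)]

/- The geometric decay of the error terms makes the product of the doubling factors converge. -/
lemma PointSymmetric.reflectionDistLE_half_pow (hX : PointSymmetric X)
    (hagree : ReflectionsAgree X (3 * ρ)) (hρ : 0 < ρ) (hδ : 0 ≤ δ) (hδρ : δ ≤ ρ)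
    (ht₀ : 0 ≤ t) (htρ : 24 * t ≤ ρ) (ht : ReflectionDistLE X δ (3 * ρ) t) (k : ℕ) :
    ReflectionDistLE X (δ * (1 / 2) ^ k) ρ (t * (1 / 2) ^ k * (2 - (2 / 3) ^ k)) := by
  have hadd : ρ + ρ = 2 * ρ := by ring
  induction k with
  | zero =>
    norm_num
    exact ht.mono le_rfl (by linarith)
  | succ k ih =>
    intro a b z α β hα hβ hab haz
    have hδk := mul_half_pow_le hδ (k + 1)
    have hq : (2 / 3 : ℝ) ^ k ≤ 1 := pow_le_one₀ (by norm_num) (by norm_num)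
    have hdecay := hX.reflectionDistLE_two_thirds_pow hagree hρ hδ hδρ htρ ht (k + 1)
    have htk : t * (2 / 3) ^ (k + 1) = t * (2 / 3) ^ k * (2 / 3) := by rw [pow_succ, mul_assoc]
    have hmul := hX.dist_reflection_mul_le (t := t * (2 / 3) ^ (k + 1))
      (by rw [hadd]; exact hagree.mono (by linarith)) hρ (by nlinarith) (hδk.trans hδρ)
      (by rwa [hadd]) (by convert ih using 1; ring) hα hβ hab haz
    set q : ℝ := (2 / 3) ^ k
    set s : ℝ := t * (1 / 2) ^ k with hs
    have hq₀ : 0 < q := by positivity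
    have : 0 ≤ s := by positivity
    have hratio : 4 * (t * (2 / 3) ^ (k + 1)) / ρ ≤ q / 9 := by
      rw [div_le_iff₀ hρ]; nlinarith
    have htarget : t * (1 / 2) ^ (k + 1) * (2 - (2 / 3) ^ (k + 1)) = s * (1 - q / 3) := by
      rw [hs]; ring
    rw [htarget]
    refine le_of_mul_le_mul_right ?_ (show 0 < 2 - q / 9 by linarith)
    calc dist (α z) (β z) * (2 - q / 9)
        ≤ dist (α z) (β z) * (2 - 4 * (t * (2 / 3) ^ (k + 1)) / ρ) := by gcongr
      _ ≤ s * (2 - q) := hmul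
      _ ≤ s * (2 - q) + s * (2 * q / 9 + q * q / 27) := le_add_of_nonneg_right (by positivity)
      _ = s * (1 - q / 3) * (2 - q / 9) := by ring

/-- The reflections at nearby centres depend Lipschitz continuously on the centre. -/
def ReflectionLipschitz (X : Type*) [MetricSpace X] (δ R C : ℝ) : Prop :=
  ∀ ⦃a b z : X⦄ ⦃α β : X ≃ᵢ X⦄, IsReflection a α → IsReflection b β → dist a b ≤ δ →
    dist a z ≤ R → dist (α z) (β z) ≤ C * dist a b

lemma PointSymmetric.reflectionLipschitz (hX : PointSymmetric X)
    (hagree : ReflectionsAgree X (3 * ρ)) (hρ : 0 < ρ) (hδ : 0 < δ) (hδρ : δ ≤ ρ)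
    (ht₀ : 0 ≤ t) (htρ : 24 * t ≤ ρ) (ht : ReflectionDistLE X δ (3 * ρ) t) :
    ReflectionLipschitz X δ ρ (4 * t / δ) := by
  intro a b z α β hα hβ hab haz
  rcases eq_or_ne a b with rfl | hne
  · rw [hagree hα hβ (by linarith), dist_self, dist_self, mul_zero]
  have hpos : 0 < dist a b / δ := div_pos (dist_pos.2 hne) hδ
  obtain ⟨k, -, hlt, hle⟩ := exists_nat_half_pow_lt_and_le hpos (J := 0)
    (by rwa [pow_zero, div_le_one hδ])
  rw [div_le_iff₀' hδ] at hle
  calc dist (α z) (β z) ≤ t * (1 / 2) ^ k * (2 - (2 / 3) ^ k) :=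
        hX.reflectionDistLE_half_pow hagree hρ hδ.le hδρ ht₀ htρ ht k hα hβ hle haz
    _ ≤ t * (1 / 2) ^ k * 2 := by
        gcongr
        exact sub_le_self _ (by positivity)
    _ = 4 * t * (1 / 2) ^ (k + 1) := by ring
    _ ≤ 4 * t * (dist a b / δ) := by gcongr
    _ = 4 * t / δ * dist a b := by ring

end Decay

variable [ProperSpace X]

lemma ReflectionsAgree.exists_dist_le {ρ : ℝ} (hagree : ReflectionsAgree X ρ) (a : X) {t : ℝ}
    (ht : 0 < t) : ∃ δ > 0, ∀ ⦃b z : X⦄ ⦃α β : X ≃ᵢ X⦄, IsReflection a α → IsReflection b β →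
      dist a b ≤ δ → dist a z ≤ ρ → dist (α z) (β z) ≤ t := by
  by_contra! hno
  choose b z α β hα hβ hb hz hfar using fun n : ℕ => hno (1 / ((n : ℝ) + 1)) (by positivity)
  let U : Ultrafilter ℕ := hyperfilter ℕ
  have hb_lim : Tendsto b U (𝓝 a) := by
    rw [tendsto_iff_dist_tendsto_zero]
    refine squeeze_zero (fun _ => dist_nonneg) (fun n => ?_)
      (tendsto_one_div_add_atTop_nhds_zero_nat.mono_left Nat.hyperfilter_le_atTop)
    rw [dist_comm]; exact hb n
  obtain ⟨A, hA⟩ := exists_isometryEquiv_tendsto U α (z := a) (R := 0)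
    (Eventually.of_forall fun n => by rw [(hα n).map_center, dist_self])
  obtain ⟨B, hB⟩ := exists_isometryEquiv_tendsto U β (z := a) (R := 2)
    (Eventually.of_forall fun n => by
      have hn : 1 / ((n : ℝ) + 1) ≤ 1 := by rw [div_le_one (by positivity)]; simp
      rw [(hβ n).dist_map, dist_comm]
      linarith [hb n])
  have hreflA : IsReflection a A := .of_tendsto hα tendsto_const_nhds hA
  have hreflB : IsReflection a B := .of_tendsto hβ hb_lim hB
  have hunifA := eventually_dist_le_of_tendsto hA a ρ (δ := t / 3) (by positivity)
  have hunifB := eventually_dist_le_of_tendsto hB a ρ (δ := t / 3) (by positivity)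
  obtain ⟨n, hnA, hnB⟩ := (hunifA.and hunifB).exists
  have hAn := hnA (z n) (hz n)
  rw [hagree hreflA hreflB (hz n)] at hAn
  linarith [hfar n, hnB (z n) (hz n), dist_triangle_right (α n (z n)) (β n (z n)) (B (z n))]

variable [PreconnectedSpace X] [Nonempty X]

lemma PointSymmetric.exists_reflectionDistLE (hX : PointSymmetric X) {ρ : ℝ}
    (hagree : ReflectionsAgree X ρ) {t : ℝ} (ht : 0 < t) :
    ∃ δ > 0, ReflectionDistLE X δ ρ t := by
  obtain ⟨a₀⟩ := id ‹Nonempty X›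
  obtain ⟨δ, hδ, hle⟩ := hagree.exists_dist_le a₀ ht
  refine ⟨δ, hδ, fun a b z α β hα hβ hab haz => ?_⟩
  obtain ⟨g, rfl⟩ := hX.exists_isometryEquiv_apply_eq a a₀
  simpa only [IsometryEquiv.mul_apply, IsometryEquiv.inv_apply_self, IsometryEquiv.dist_eq] using
    hle (z := g z) (hα.conj g) (hβ.conj g) (by rwa [g.dist_eq]) (by rwa [g.dist_eq])

lemma PointSymmetric.exists_reflectionLipschitz (hX : PointSymmetric X) :
    ∃ ρ > 0, ∃ C > 0, ∃ δ > 0, ReflectionsAgree X ρ ∧ ReflectionLipschitz X δ ρ C := by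
  obtain ⟨ρ₀, hρ₀, hagree⟩ := hX.exists_reflectionsAgree
  obtain ⟨ρ, rfl⟩ : ∃ ρ, ρ₀ = 3 * ρ := ⟨ρ₀ / 3, by ring⟩
  have hρ : 0 < ρ := by linarith
  obtain ⟨δ, hδ, hdist⟩ := hX.exists_reflectionDistLE hagree (t := ρ / 24) (by positivity)
  have hmin : 0 < min δ ρ := lt_min hδ hρ
  exact ⟨ρ, hρ, 4 * (ρ / 24) / min δ ρ, by positivity, min δ ρ, hmin, hagree.mono (by linarith),
    hX.reflectionLipschitz hagree hρ hmin (min_le_right _ _) (by positivity) (by linarith)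
      (hdist.mono (min_le_left _ _) le_rfl)⟩

end LipschitzReflections

section LocalMidpoints

variable {X : Type*} [MetricSpace X]

lemma PointSymmetric.mul_dist_sub_dist_le (hX : PointSymmetric X) (g h : X ≃ᵢ X) (x y : X)
    (n : ℕ) {M : ℝ} (hM : ∀ w, dist x w = n * dist x y → dist (g w) (h w) ≤ M) :
    n * (dist (g y) (h y) - dist (g x) (h x)) ≤ M := by
  obtain ⟨p, hp, rfl, rfl⟩ := hX.exists_isReflectionChain x y
  have hconvex := mul_sub_le_sub_of_two_mul_le_add (e := fun i => dist (g (p i)) (h (p i)))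
    ((hp.map g).two_mul_dist_le (hp.map h)) n
  have hend := hM (p n) (by simpa using hp.dist_add 0 n)
  linarith [dist_nonneg (x := g (p 0)) (y := h (p 0))]

lemma IsReflection.dist_center_le_of_dist_le {a x y : X} {α : X ≃ᵢ X} (hα : IsReflection a α)
    {ε : ℝ} (hε : ε ≤ 1) (hxy : dist (α x) y ≤ ε * dist x y) : dist a x ≤ dist x y := by
  have hmap := hα.dist_map x
  have htri := dist_triangle_right x (α x) y
  nlinarith [dist_nonneg (x := x) (y := y)]

lemma ReflectionLipschitz.displacement_le {δ ρ C : ℝ} (hlip : ReflectionLipschitz X δ ρ C)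
    (hagree : ReflectionsAgree X ρ) {a b x : X} {α β : X ≃ᵢ X} (hα : IsReflection a α)
    (hβ : IsReflection b β) (hab : dist a b ≤ δ) (hx : dist a x ≤ ρ) :
    dist x ((β * α) x) ≤ C * dist a b := by
  have hle := hlip hα hβ hab (z := α x) (by rwa [hα.dist_center])
  rwa [hagree.apply_apply hα hx] at hle

/- `β * τ` moves `ς z` close to `y`. The reflection `ς'` is chosen so that `ς' * ς` nearly agrees
with `β * τ` at `m`; by convexity they nearly agree at `ς z` as well, and `ς' (ς (ς z)) = ς' z`. -/
lemma PointSymmetric.dist_reflection_le_half (hX : PointSymmetric X) {ρ C δ ε : ℝ} {n : ℕ}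
    (hagree : ReflectionsAgree X ρ) (hlip : ReflectionLipschitz X δ ρ C) (hC : 0 < C)
    (hε₀ : 0 ≤ ε) (hε : ε ≤ 1 / 8) (hεC : ε * C ≤ 1 / 8) (hn : 8 * (C + C ^ 2) < n)
    {m b m' y z : X} {ς τ β ς' : X ≃ᵢ X} (hς : IsReflection m ς) (hτ : IsReflection (ς z) τ)
    (hβ : IsReflection b β) (hς' : IsReflection m' ς')
    (hy : dist (β (ς z)) y ≤ ε * dist (ς z) y)
    (hm : dist (ς' m) ((β * τ) m) ≤ ε * dist m ((β * τ) m))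
    (hyδ : dist (ς z) y ≤ δ) (hyCδ : C * dist (ς z) y ≤ δ)
    (hmz : dist m z ≤ ρ / 4) (hnmz : n * dist m z ≤ ρ / 2) :
    dist (ς' z) y ≤ dist (ς z) y / 2 := by
  set y₁ := ς z with hy₁
  set d := dist y₁ y
  have hn₀ : (0 : ℝ) < n := lt_of_le_of_lt (by positivity) hn
  have hmz₀ : 0 ≤ dist m z := dist_nonneg
  have hmy₁ : dist m y₁ = dist m z := hς.dist_center z
  have hy₁b : dist y₁ b ≤ d := by
    rw [dist_comm]; exact hβ.dist_center_le_of_dist_le (by linarith) hy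
  have hdisp : ∀ x, dist y₁ x ≤ ρ → dist x ((β * τ) x) ≤ C * d := fun x hx =>
    (hlip.displacement_le hagree hτ hβ (hy₁b.trans hyδ) hx).trans (by gcongr)
  have hdisp_m := hdisp m (by rw [dist_comm]; linarith)
  have hmm' : dist m m' ≤ C * d := by
    rw [dist_comm]; exact (hς'.dist_center_le_of_dist_le (by linarith) hm).trans hdisp_m
  have hdisp' : ∀ x, dist m x ≤ ρ → dist x ((ς' * ς) x) ≤ C * (C * d) := fun x hx =>
    (hlip.displacement_le hagree hς hς' (hmm'.trans hyCδ) hx).trans (by gcongr)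
  have hstart : dist ((β * τ) m) ((ς' * ς) m) ≤ d / 8 := by
    rw [dist_comm, IsometryEquiv.mul_apply ς', hς.map_center]
    nlinarith [mul_le_mul_of_nonneg_left hdisp_m hε₀, dist_nonneg (x := y₁) (y := y)]
  have hτy₁ : (β * τ) y₁ = β y₁ := by rw [IsometryEquiv.mul_apply, hτ.map_center]
  have hςy₁ : (ς' * ς) y₁ = ς' z := by
    rw [IsometryEquiv.mul_apply, hy₁, hagree.apply_apply hς (by linarith)]
  have hconvex := hX.mul_dist_sub_dist_le (β * τ) (ς' * ς) m y₁ n (M := (C + C ^ 2) * d) <| by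
    intro w hw
    rw [hmy₁] at hw
    linarith [hdisp w (by linarith [dist_triangle_left y₁ w m]), hdisp' w (by linarith),
      dist_triangle_left ((β * τ) w) ((ς' * ς) w) w]
  rw [hτy₁, hςy₁] at hconvex
  have hgap : dist (β y₁) (ς' z) - dist ((β * τ) m) ((ς' * ς) m) ≤ d / 8 := by
    refine le_of_mul_le_mul_left (hconvex.trans ?_) hn₀
    nlinarith [dist_nonneg (x := y₁) (y := y)]
  nlinarith [dist_triangle_left (ς' z) y (β y₁), dist_nonneg (x := y₁) (y := y)]

lemma ReflectionLipschitz.continuousOn_dist {δ ρ C r : ℝ} (hlip : ReflectionLipschitz X δ ρ C)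
    (hC : 0 ≤ C) (hδ : 2 * r ≤ δ) (hρ : r ≤ ρ) {ς : X → X ≃ᵢ X}
    (hς : ∀ m, IsReflection m (ς m)) (z y : X) :
    ContinuousOn (fun m => dist (ς m z) y) (closedBall z r) := by
  refine LipschitzOnWith.continuousOn (K := C.toNNReal) <|
    LipschitzOnWith.of_dist_le_mul fun a ha b hb => ?_
  rw [mem_closedBall] at ha hb
  rw [Real.coe_toNNReal _ hC, Real.dist_eq]
  exact (abs_dist_sub_le _ _ _).trans <|
    hlip (hς a) (hς b) (by linarith [dist_triangle_right a b z]) (ha.trans hρ)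

variable [ProperSpace X] [PreconnectedSpace X] [Nonempty X]

lemma PointSymmetric.exists_dist_reflection_le_half (hX : PointSymmetric X) {ρ C δ : ℝ}
    (hρ : 0 < ρ) (hC : 0 < C) (hδ : 0 < δ) (hagree : ReflectionsAgree X ρ)
    (hlip : ReflectionLipschitz X δ ρ C) :
    ∃ r > 0, ∀ ⦃m z y : X⦄ ⦃ς : X ≃ᵢ X⦄, IsReflection m ς → dist m z ≤ r → dist (ς z) y ≤ r →
      ∃ m' ς', IsReflection m' ς' ∧ dist (ς' z) y ≤ dist (ς z) y / 2 := by
  obtain ⟨ε, hε₀, hε, hεC⟩ : ∃ ε > 0, ε ≤ 1 / 8 ∧ ε ≤ 1 / 8 / C :=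
    ⟨min (1 / 8) (1 / 8 / C), by positivity, min_le_left _ _, min_le_right _ _⟩
  rw [le_div_iff₀ hC] at hεC
  obtain ⟨r₀, hr₀, happrox⟩ := hX.exists_uniform_reflection_dist_le hε₀
  obtain ⟨n, hn⟩ := exists_nat_gt (8 * (C + C ^ 2))
  have hn₀ : (0 : ℝ) < n := lt_of_le_of_lt (by positivity) hn
  obtain ⟨r, hr, hr_le⟩ : ∃ r > 0, ∀ t ∈ ({δ, δ / C, r₀, r₀ / C, ρ / 4, ρ / 2 / n} : Set ℝ),
      r ≤ t := by
    refine ⟨min (min (min δ (δ / C)) (min r₀ (r₀ / C))) (min (ρ / 4) (ρ / 2 / n)),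
      by positivity, ?_⟩
    simp
  simp only [mem_insert_iff, mem_singleton_iff, forall_eq_or_imp, forall_eq, le_div_iff₀' hC,
    le_div_iff₀' hn₀] at hr_le
  obtain ⟨hrδ, hrCδ, hrr₀, hrCr₀, hrρ, hrnρ⟩ := hr_le
  refine ⟨r, hr, fun m z y ς hς hmz hy => ?_⟩
  obtain ⟨τ, hτ⟩ := hX.exists_isReflection (ς z)
  obtain ⟨b, β, hβ, hβy⟩ := happrox (ς z) y (by linarith)
  have hCd : C * dist (ς z) y ≤ C * r := by gcongr
  have hnmz : n * dist m z ≤ n * r := by gcongr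
  have hb : dist (ς z) b ≤ dist (ς z) y := by
    rw [dist_comm]; exact hβ.dist_center_le_of_dist_le (by linarith) hβy
  have hdisp : dist m ((β * τ) m) ≤ r₀ := by
    have hle := hlip.displacement_le hagree hτ hβ (by linarith) (x := m)
      (by rw [dist_comm, hς.dist_center]; linarith)
    have : C * dist (ς z) b ≤ C * dist (ς z) y := by gcongr
    linarith
  obtain ⟨m', ς', hς', hm'⟩ := happrox m ((β * τ) m) hdisp
  exact ⟨m', ς', hς', hX.dist_reflection_le_half hagree hlip hC hε₀.le hε hεC hn hς hτ hβ hς' hβy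
    hm' (by linarith) (by linarith) (by linarith) (by linarith)⟩

lemma PointSymmetric.exists_isReflectionMidpoint_of_dist_le (hX : PointSymmetric X) :
    ∃ r > 0, ∀ z y : X, dist z y ≤ r → ∃ m, IsReflectionMidpoint z y m := by
  obtain ⟨ρ, hρ, C, hC, δ, hδ, hagree, hlip⟩ := hX.exists_reflectionLipschitz
  obtain ⟨r₁, hr₁, himprove⟩ := hX.exists_dist_reflection_le_half hρ hC hδ hagree hlip
  obtain ⟨r, hr, hrr₁, hrδ, hrρ⟩ : ∃ r > 0, r ≤ r₁ ∧ r ≤ δ / 2 ∧ r ≤ ρ :=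
    ⟨min r₁ (min (δ / 2) ρ), by positivity, by simp⟩
  choose ς hς using hX.exists_isReflection
  refine ⟨r, hr, fun z y hzy => ?_⟩
  obtain ⟨m, hm, hmin⟩ := (isCompact_closedBall z r).exists_isMinOn
    ⟨z, mem_closedBall_self hr.le⟩
    (hlip.continuousOn_dist hC.le (by linarith) hrρ hς z y)
  have hd : dist (ς m z) y ≤ r := by
    have hz := isMinOn_iff.1 hmin z (mem_closedBall_self hr.le)
    rw [(hς z).map_center] at hz
    exact hz.trans hzy
  obtain ⟨m', ς', hς', hhalf⟩ := himprove (hς m) ((mem_closedBall.1 hm).trans hrr₁) (hd.trans hrr₁)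
  have hm'z : dist m' z ≤ r := by
    linarith [hς'.dist_map z, dist_triangle_right z (ς' z) y]
  have hm' := isMinOn_iff.1 hmin m' (mem_closedBall.2 hm'z)
  rw [hagree (hς m') hς' (hm'z.trans hrρ)] at hm'
  refine ⟨m, ς m, hς m, dist_le_zero.1 ?_⟩
  linarith

end LocalMidpoints

section MidpointPolygon

variable {X : Type*} {mid : X → X → X} {n : ℕ} {p : ℕ → X}

/-- Replaces every inner vertex of a polygon by a midpoint of its neighbours. Fixed polygons are
discrete geodesics. -/
def midpointPolygon (mid : X → X → X) (n : ℕ) (p : ℕ → X) (i : ℕ) : X :=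
  if i = 0 ∨ n < i then p i else mid (p (i - 1)) (p (i + 1))

lemma midpointPolygon_zero : midpointPolygon mid n p 0 = p 0 := if_pos (.inl rfl)

lemma midpointPolygon_of_lt {i : ℕ} (hi : n < i) : midpointPolygon mid n p i = p i :=
  if_pos (.inr hi)

lemma midpointPolygon_succ {i : ℕ} (hi : i < n) :
    midpointPolygon mid n p (i + 1) = mid (p i) (p (i + 2)) := if_neg (by lia)

end MidpointPolygon

section Polygons

open Filter Topology

variable {X : Type*} [MetricSpace X]

lemma IsReflectionMidpoint.two_mul_dist_left {z w m : X} (h : IsReflectionMidpoint z w m) :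
    2 * dist z m = dist z w := by
  obtain ⟨ς, hς, rfl⟩ := h
  rw [hς.dist_map, dist_comm]

lemma IsReflectionMidpoint.two_mul_dist_right {z w m : X} (h : IsReflectionMidpoint z w m) :
    2 * dist m w = dist z w := by
  obtain ⟨ς, hς, rfl⟩ := h
  rw [hς.dist_map, hς.dist_center]

/-- `p` is a polygonal path from `z` to `y` with at most `N` steps, each of length at most `r`;
it stays at `y` from time `N` on. -/
structure IsPolygon (z y : X) (r : ℝ) (N : ℕ) (p : ℕ → X) : Prop where
  zero : p 0 = z
  eq_of_le : ∀ i, N ≤ i → p i = y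
  dist_succ_le : ∀ i, dist (p i) (p (i + 1)) ≤ r

namespace IsPolygon

variable {z y : X} {r : ℝ} {N : ℕ} {p : ℕ → X}

lemma dist_le (hp : IsPolygon z y r N p) (i : ℕ) : dist z (p i) ≤ i * r := by
  induction i with
  | zero => simp [hp.zero]
  | succ i ih =>
    push_cast
    linarith [dist_triangle z (p i) (p (i + 1)), hp.dist_succ_le i]

lemma dist_add_two_le (hp : IsPolygon z y r N p) (i : ℕ) : dist (p i) (p (i + 2)) ≤ 2 * r := by
  linarith [dist_triangle (p i) (p (i + 1)) (p (i + 2)), hp.dist_succ_le i,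
    hp.dist_succ_le (i + 1)]

lemma snoc (hp : IsPolygon z y r N p) {y' : X} (hy' : dist y y' ≤ r) :
    IsPolygon z y' r (N + 1) fun i => if i ≤ N then p i else y' where
  zero := by simp [hp.zero]
  eq_of_le i hi := if_neg (by lia)
  dist_succ_le i := by
    rcases lt_trichotomy i N with hlt | rfl | hgt
    · simpa [hlt.le, Nat.succ_le_of_lt hlt] using hp.dist_succ_le i
    · simpa [hp.eq_of_le i le_rfl] using hy'
    · simpa [hgt.not_ge, (hgt.trans (Nat.lt_succ_self i)).not_ge] using dist_nonneg.trans hy'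

end IsPolygon

lemma exists_isPolygon [PreconnectedSpace X] {r : ℝ} (hr : 0 < r) (z y : X) :
    ∃ N p, IsPolygon z y r N p := by
  let step : X → X → Prop := fun a b => dist a b ≤ r
  have hsymm : Std.Symm step := ⟨fun a b h => (dist_comm b a).trans_le h⟩
  have hchain : Relation.ReflTransGen step z y := by
    refine PreconnectedSpace.induction₂ (Relation.ReflTransGen step) (fun a => ?_) inferInstance z y
    filter_upwards [closedBall_mem_nhds a hr] with b hb
    exact .single (mem_closedBall'.1 hb)
  induction hchain with
  | refl => exact ⟨0, fun _ => z, rfl, fun _ _ => rfl, fun _ => by rw [dist_self]; exact hr.le⟩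
  | tail _ hstep ih =>
    obtain ⟨N, p, hp⟩ := ih
    exact ⟨N + 1, _, hp.snoc hstep⟩

lemma isCompact_setOf_isPolygon [ProperSpace X] (z y : X) (r : ℝ) (N : ℕ) :
    IsCompact {p | IsPolygon z y r N p} := by
  have hbox : IsCompact (univ.pi fun i : ℕ => closedBall z (i * r)) :=
    isCompact_univ_pi fun i => isCompact_closedBall _ _
  refine hbox.of_isClosed_subset ?_ fun p hp i _ => mem_closedBall'.2 (hp.dist_le i)
  have hinter : {p | IsPolygon z y r N p} = {p | p 0 = z} ∩ (⋂ i, ⋂ (_ : N ≤ i), {p | p i = y}) ∩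
      ⋂ i, {p | dist (p i) (p (i + 1)) ≤ r} := by
    ext p
    simp only [mem_inter_iff, mem_iInter]
    exact ⟨fun h => ⟨⟨h.1, h.2⟩, h.3⟩, fun h => ⟨h.1.1, h.1.2, h.2⟩⟩
  rw [hinter]
  refine ((isClosed_eq (continuous_apply 0) continuous_const).inter ?_).inter ?_
  · exact isClosed_iInter fun i => isClosed_iInter fun _ =>
      isClosed_eq (continuous_apply i) continuous_const
  · exact isClosed_iInter fun i =>
      isClosed_le ((continuous_apply i).dist (continuous_apply (i + 1))) continuous_const

/-- The concave weight `i (n + 1 - i)`, which vanishes at `0` and `n + 1` and whose discrete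
Laplacian is the constant `-2`. -/
def parabola (n i : ℕ) : ℝ := i * (n + 1 - i)

lemma parabola_pos {n i : ℕ} (hi : i < n) : 0 < parabola n (i + 1) := by
  have hlt : ((i + 1 : ℕ) : ℝ) < n + 1 := by exact_mod_cast Nat.succ_lt_succ hi
  exact mul_pos (by positivity) (by linarith)

lemma sum_mul_add_eq (φ e : ℕ → ℝ) (n : ℕ) :
    ∑ i ∈ Finset.range n, φ (i + 1) * (e i + e (i + 2)) =
      ∑ i ∈ Finset.range n, (φ i + φ (i + 2)) * e (i + 1) +
        (φ 1 * e 0 - φ 0 * e 1) + (φ n * e (n + 1) - φ (n + 1) * e n) := by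
  induction n with
  | zero => simp
  | succ n ih => rw [Finset.sum_range_succ, Finset.sum_range_succ, ih]; ring

lemma eq_zero_of_sum_parabola_le {n : ℕ} {e f : ℕ → ℝ} (he : ∀ i, 0 ≤ e i) (he₀ : e 0 = 0)
    (hen : e (n + 1) = 0) (hf : ∀ i < n, 2 * f i ≤ e i + e (i + 2))
    (hle : ∑ i ∈ Finset.range n, parabola n (i + 1) * e (i + 1) ≤
      ∑ i ∈ Finset.range n, parabola n (i + 1) * f i) :
    ∀ i < n, e (i + 1) = 0 := by
  have hlaplace : ∀ i, parabola n i + parabola n (i + 2) = 2 * parabola n (i + 1) - 2 := fun i => by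
    simp only [parabola]; push_cast; ring
  have hleft : parabola n 0 = 0 := by simp [parabola]
  have hright : parabola n (n + 1) = 0 := by simp [parabola]
  have hsum : 2 * ∑ i ∈ Finset.range n, parabola n (i + 1) * f i ≤
      2 * ∑ i ∈ Finset.range n, parabola n (i + 1) * e (i + 1) -
        2 * ∑ i ∈ Finset.range n, e (i + 1) := by
    calc 2 * ∑ i ∈ Finset.range n, parabola n (i + 1) * f i
        = ∑ i ∈ Finset.range n, parabola n (i + 1) * (2 * f i) := by
          rw [Finset.mul_sum]; exact Finset.sum_congr rfl fun i _ => by ring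
      _ ≤ ∑ i ∈ Finset.range n, parabola n (i + 1) * (e i + e (i + 2)) :=
          Finset.sum_le_sum fun i hi =>
            mul_le_mul_of_nonneg_left (hf i (Finset.mem_range.1 hi))
              (parabola_pos (Finset.mem_range.1 hi)).le
      _ = ∑ i ∈ Finset.range n, (2 * parabola n (i + 1) - 2) * e (i + 1) := by
          simp only [sum_mul_add_eq, hlaplace, he₀, hen, hleft, hright]; ring
      _ = 2 * ∑ i ∈ Finset.range n, parabola n (i + 1) * e (i + 1) -
            2 * ∑ i ∈ Finset.range n, e (i + 1) := by
          rw [Finset.mul_sum, Finset.mul_sum, ← Finset.sum_sub_distrib]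
          exact Finset.sum_congr rfl fun i _ => by ring
  have hzero : ∑ i ∈ Finset.range n, e (i + 1) = 0 :=
    le_antisymm (by linarith) (Finset.sum_nonneg fun i _ => he _)
  rw [Finset.sum_eq_zero_iff_of_nonneg fun i _ => he _] at hzero
  exact fun i hi => hzero i (Finset.mem_range.2 hi)

section MidpointPolygon

variable {mid : X → X → X} {r : ℝ} {n : ℕ} {p : ℕ → X} {z y : X}

lemma IsPolygon.midpointPolygon
    (hmid : ∀ z y, dist z y ≤ 2 * r → IsReflectionMidpoint z y (mid z y))
    (hp : IsPolygon z y r (n + 1) p) : IsPolygon z y r (n + 1) (midpointPolygon mid n p) where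
  zero := midpointPolygon_zero.trans hp.zero
  eq_of_le i hi := (midpointPolygon_of_lt hi).trans (hp.eq_of_le i hi)
  dist_succ_le i := by
    have hm := fun i => hmid _ _ (hp.dist_add_two_le i)
    have hi2 := hp.dist_add_two_le i
    rcases i.eq_zero_or_pos with rfl | hi
    · rw [midpointPolygon_zero]
      rcases n.eq_zero_or_pos with rfl | hn
      · rw [midpointPolygon_of_lt Nat.one_pos]
        exact hp.dist_succ_le 0
      · rw [midpointPolygon_succ hn]
        linarith [(hm 0).two_mul_dist_left]
    obtain ⟨j, rfl⟩ := Nat.exists_eq_add_one.2 hi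
    rcases lt_trichotomy (j + 1) n with hlt | heq | hgt
    · rw [midpointPolygon_succ hlt, midpointPolygon_succ (by lia)]
      linarith [(hm j).two_mul_dist_le (hm (j + 1)), hp.dist_succ_le j, hp.dist_succ_le (j + 2)]
    · rw [midpointPolygon_succ (by lia), midpointPolygon_of_lt (by lia)]
      linarith [(hm j).two_mul_dist_right, hp.dist_add_two_le j]
    · rw [midpointPolygon_of_lt hgt, midpointPolygon_of_lt (by lia)]
      exact hp.dist_succ_le _

lemma continuousOn_mid_apply (hmid : ∀ z y, dist z y ≤ 2 * r → IsReflectionMidpoint z y (mid z y))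
    (i : ℕ) : ContinuousOn (fun p => mid (p i) (p (i + 2))) {p | IsPolygon z y r n p} := by
  intro p hp
  rw [ContinuousWithinAt, tendsto_iff_dist_tendsto_zero]
  have hlim : Tendsto (fun q : ℕ → X => dist (q i) (p i) + dist (q (i + 2)) (p (i + 2)))
      (𝓝[{p | IsPolygon z y r n p}] p) (𝓝 0) := by
    have hcont : Continuous fun q : ℕ → X => dist (q i) (p i) + dist (q (i + 2)) (p (i + 2)) := by
      fun_prop
    simpa using (hcont.tendsto p).mono_left nhdsWithin_le_nhds
  refine squeeze_zero' (Eventually.of_forall fun _ => dist_nonneg) ?_ hlim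
  filter_upwards [self_mem_nhdsWithin] with q hq
  linarith [(hmid _ _ (hq.dist_add_two_le i)).two_mul_dist_le (hmid _ _ (hp.dist_add_two_le i)),
    dist_nonneg (x := mid (q i) (q (i + 2))) (y := mid (p i) (p (i + 2)))]

/- Minimise the weighted sum of the distances between the inner vertices and the midpoints of
their neighbours: by convexity, passing to the midpoint polygon would decrease it. -/
lemma IsPolygon.exists_isReflectionMidpoint [ProperSpace X]
    (hmid : ∀ z y, dist z y ≤ 2 * r → IsReflectionMidpoint z y (mid z y))
    (hp : IsPolygon z y r (n + 1) p) :
    ∃ q, IsPolygon z y r (n + 1) q ∧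
      ∀ i < n, IsReflectionMidpoint (q i) (q (i + 2)) (q (i + 1)) := by
  let defect : (ℕ → X) → ℕ → ℝ := fun q i => dist (q (i + 1)) (mid (q i) (q (i + 2)))
  have hcont : ContinuousOn (fun q => ∑ i ∈ Finset.range n, parabola n (i + 1) * defect q i)
      {q | IsPolygon z y r (n + 1) q} :=
    continuousOn_finsetSum _ fun i _ => continuousOn_const.mul <|
      continuous_dist.comp_continuousOn
        (f := fun q : ℕ → X => (q (i + 1), mid (q i) (q (i + 2)))) <|
        (continuous_apply (i + 1)).continuousOn.prodMk (continuousOn_mid_apply hmid i)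
  obtain ⟨q, hq, hmin⟩ :=
    (isCompact_setOf_isPolygon z y r (n + 1)).exists_isMinOn ⟨p, hp⟩ hcont
  refine ⟨q, hq, fun i hi => ?_⟩
  set q' := BooleanModel.midpointPolygon mid n q with hq'_def
  have hq' : IsPolygon z y r (n + 1) q' := hq.midpointPolygon hmid
  have hmid_q := fun i => hmid _ _ (hq.dist_add_two_le i)
  have hzero : dist (q (i + 1)) (q' (i + 1)) = 0 :=
    eq_zero_of_sum_parabola_le (e := fun i => dist (q i) (q' i)) (f := defect q')
      (fun _ => dist_nonneg)
      (by simp only [hq.zero, hq'.zero, dist_self])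
      (by simp only [hq.eq_of_le _ le_rfl, hq'.eq_of_le _ le_rfl, dist_self])
      (fun j hj => by
        have hconvex := (hmid_q j).two_mul_dist_le (hmid _ _ (hq'.dist_add_two_le j))
        rwa [← midpointPolygon_succ (mid := mid) (p := q) hj] at hconvex)
      (by
        refine le_of_eq_of_le (Finset.sum_congr rfl fun j hj => ?_) (isMinOn_iff.1 hmin q' hq')
        rw [hq'_def, midpointPolygon_succ (Finset.mem_range.1 hj)])
      i hi
  rw [dist_eq_zero.1 hzero, hq'_def, midpointPolygon_succ hi]
  exact hmid_q i

end MidpointPolygon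

lemma IsReflectionChain.eq_of_isReflectionMidpoint {ρ r : ℝ} (hagree : ReflectionsAgree X ρ)
    (hr : r ≤ ρ) {z y : X} {n N : ℕ} {p x : ℕ → X} (hp : IsPolygon z y r N p)
    (hmid : ∀ i < n, IsReflectionMidpoint (p i) (p (i + 2)) (p (i + 1)))
    (hx : IsReflectionChain x) (hx₀ : x 0 = p 0) (hx₁ : x 1 = p 1) :
    ∀ i ≤ n, x i = p i ∧ x (i + 1) = p (i + 1) := by
  intro i
  induction i with
  | zero => exact fun _ => ⟨hx₀, hx₁⟩
  | succ i ih =>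
    intro hi
    obtain ⟨hxi, hxi'⟩ := ih (by lia)
    refine ⟨hxi', ?_⟩
    obtain ⟨ς, hς, hxnext⟩ := hx i
    obtain ⟨τ, hτ, hpnext⟩ := hmid i hi
    rw [hxi'] at hς
    rw [← hxnext, ← hpnext, hxi]
    exact hagree hς hτ (by rw [dist_comm]; exact (hp.dist_succ_le i).trans hr)

variable [ProperSpace X] [PreconnectedSpace X]

lemma PointSymmetric.exists_isReflectionChain_joining (hX : PointSymmetric X) {ε : ℝ}
    (hε : 0 < ε) (z y : X) :
    ∃ (N : ℕ) (x : ℕ → X), IsReflectionChain x ∧ x 0 = z ∧ x N = y ∧ dist (x 0) (x 1) ≤ ε := by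
  have : Nonempty X := ⟨z⟩
  obtain ⟨ρ, hρ, hagree⟩ := hX.exists_reflectionsAgree
  obtain ⟨r₀, hr₀, hmid⟩ := hX.exists_isReflectionMidpoint_of_dist_le
  obtain ⟨r, hr, hrε, hrρ, hrr₀⟩ : ∃ r > 0, r ≤ ε ∧ r ≤ ρ ∧ r ≤ r₀ / 2 :=
    ⟨min ε (min ρ (r₀ / 2)), by positivity, by simp⟩
  choose! mid hmid using hmid
  obtain ⟨n, p, hp⟩ := exists_isPolygon hr z y
  obtain ⟨q, hq, hqmid⟩ := (hp.snoc (by rw [dist_self]; exact hr.le)).exists_isReflectionMidpoint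
    fun a b hab => hmid a b (by linarith)
  obtain ⟨x, hx, hx₀, hx₁⟩ := hX.exists_isReflectionChain (q 0) (q 1)
  have hxq := hx.eq_of_isReflectionMidpoint hagree hrρ hq hqmid hx₀ hx₁ n le_rfl
  refine ⟨n + 1, x, hx, hx₀.trans hq.zero, hxq.2.trans (hq.eq_of_le _ le_rfl), ?_⟩
  rw [hx₀, hx₁]
  exact (hq.dist_succ_le 0).trans hrε

end Polygons

section Geodesics

variable {X : Type*} [MetricSpace X]

lemma mem_of_reflTransGen_of_disjoint_thickening {s t : Set X} {δ : ℝ} (hδ : 0 < δ)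
    (hdisj : Disjoint (thickening δ s) (thickening δ t)) {p q : X} (hp : p ∈ s)
    (h : Relation.ReflTransGen (fun x y => y ∈ s ∪ t ∧ dist x y < δ) p q) : q ∈ s := by
  induction h with
  | refl => exact hp
  | tail _ hstep ih =>
    refine hstep.1.resolve_right fun hmem => ?_
    exact disjoint_left.1 hdisj (self_subset_thickening hδ _ ih)
      (mem_thickening_iff.2 ⟨_, hmem, hstep.2⟩)

lemma isPreconnected_of_reflTransGen {K : Set X} (hK : IsCompact K) {c : X} (hc : c ∈ K)
    (h : ∀ δ > 0, ∀ p ∈ K, Relation.ReflTransGen (fun x y => y ∈ K ∧ dist x y < δ) c p) :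
    IsPreconnected K := by
  refine isPreconnected_closed_iff.2 fun t t' ht ht' hcover hp hq => ?_
  wlog hct : c ∈ t generalizing t t'
  · rw [inter_comm t]
    exact this t' t ht' ht (by rwa [union_comm]) hq hp ((hcover hc).resolve_left hct)
  obtain ⟨q, hqK, hqt'⟩ := hq
  by_contra hempty
  have hdisj : Disjoint (K ∩ t) (K ∩ t') := disjoint_left.2 fun a hat hat' =>
    hempty ⟨a, hat.1, hat.2, hat'.2⟩
  obtain ⟨δ, hδ, hthick⟩ := hdisj.exists_thickenings (hK.inter_right ht) (hK.isClosed.inter ht')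
  have hchain : Relation.ReflTransGen (fun x y => y ∈ K ∩ t ∪ K ∩ t' ∧ dist x y < δ) c q :=
    Relation.ReflTransGen.mono (fun _ _ hxy =>
      ⟨(hcover hxy.1).imp (And.intro hxy.1) (And.intro hxy.1), hxy.2⟩) _ _ (h δ hδ q hqK)
  have hqt := mem_of_reflTransGen_of_disjoint_thickening hδ hthick ⟨hc, hct⟩ hchain
  exact hempty ⟨q, hqK, hqt.2, hqt'⟩

variable [ProperSpace X] [PreconnectedSpace X]

lemma PointSymmetric.isPreconnected_closedBall (hX : PointSymmetric X) (c : X) (R : ℝ) :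
    IsPreconnected (closedBall c R) := by
  rcases lt_or_ge R 0 with hR | hR
  · rw [closedBall_eq_empty.2 hR]
    exact isPreconnected_empty
  refine isPreconnected_of_reflTransGen (isCompact_closedBall c R) (mem_closedBall_self hR)
    fun δ hδ p hp => ?_
  obtain ⟨N, x, hx, rfl, rfl, hstep⟩ := hX.exists_isReflectionChain_joining (half_pos hδ) c p
  have hdist : ∀ i, dist (x 0) (x i) = i * dist (x 0) (x 1) := fun i => by
    simpa using hx.dist_add 0 i
  have hball : ∀ i ≤ N, x i ∈ closedBall (x 0) R := fun i hi => mem_closedBall'.2 <| calc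
    dist (x 0) (x i) = i * dist (x 0) (x 1) := hdist i
    _ ≤ N * dist (x 0) (x 1) := by gcongr
    _ ≤ R := (hdist N).symm.trans_le (mem_closedBall'.1 hp)
  suffices hchain : ∀ i ≤ N, Relation.ReflTransGen
      (fun a b => b ∈ closedBall (x 0) R ∧ dist a b < δ) (x 0) (x i) from hchain N le_rfl
  intro i
  induction i with
  | zero => exact fun _ => .refl
  | succ i ih =>
    exact fun hi => (ih (by lia)).tail ⟨hball _ hi, by rw [hx.dist_succ]; linarith⟩

lemma PointSymmetric.exists_abs_dist_sub_le (hX : PointSymmetric X) (c p : X) {t ε : ℝ}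
    (ht₀ : 0 ≤ t) (ht : t ≤ dist c p) (hε : 0 < ε) :
    ∃ g, dist c g ≤ dist c p ∧ |dist c g - t| ≤ ε ∧ |dist g p - (dist c p - t)| ≤ ε := by
  obtain ⟨N, x, hx, rfl, rfl, hstep⟩ := hX.exists_isReflectionChain_joining hε c p
  have hdist : ∀ i, dist (x 0) (x i) = i * dist (x 0) (x 1) := fun i => by
    simpa using hx.dist_add 0 i
  set s := dist (x 0) (x 1) with hs_def
  rcases (dist_nonneg : 0 ≤ dist (x 0) (x 1)).eq_or_lt with hs | hs <;> rw [← hs_def] at hs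
  · have hN : dist (x 0) (x N) = 0 := by rw [hdist, ← hs, mul_zero]
    obtain rfl : t = 0 := by linarith
    exact ⟨x 0, by simp, by simpa using hε.le, by simpa using hε.le⟩
  have hfloor : (⌊t / s⌋₊ : ℝ) * s ≤ t :=
    (le_div_iff₀ hs).1 (Nat.floor_le (by positivity))
  have hfloor' : t < (⌊t / s⌋₊ + 1) * s := (div_lt_iff₀ hs).1 (Nat.lt_floor_add_one _)
  set i := ⌊t / s⌋₊
  have hiN : i ≤ N := by
    have : (i : ℝ) * s ≤ N * s := by linarith [hdist N]
    exact_mod_cast le_of_mul_le_mul_right this hs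
  have hrest : dist (x i) (x N) = (N - i) * s := by
    rw [← Nat.cast_sub hiN, ← hx.dist_add i (N - i), Nat.add_sub_cancel' hiN]
  refine ⟨x i, by linarith [hdist i], ?_, ?_⟩
  · rw [hdist, abs_le]
    constructor <;> linarith
  · rw [hrest, hdist, abs_le]
    constructor <;> linarith

lemma PointSymmetric.exists_dist_eq_and_dist_eq (hX : PointSymmetric X) (c p : X) {t : ℝ}
    (ht₀ : 0 ≤ t) (ht : t ≤ dist c p) : ∃ g, dist c g = t ∧ dist g p = dist c p - t := by
  let error : X → ℝ := fun g => |dist c g - t| + |dist g p - (dist c p - t)|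
  have herror : Continuous error := by fun_prop
  obtain ⟨g, -, hmin⟩ := (isCompact_closedBall c (dist c p)).exists_isMinOn
    ⟨c, mem_closedBall_self dist_nonneg⟩ herror.continuousOn
  have hzero : error g ≤ 0 := le_of_forall_pos_le_add fun ε hε => by
    obtain ⟨g', hg', hleft, hright⟩ := hX.exists_abs_dist_sub_le c p ht₀ ht (half_pos hε)
    calc error g ≤ error g' := hmin (mem_closedBall'.2 hg')
      _ ≤ 0 + ε := by simp only [error]; linarith
  have hsum := (add_eq_zero_iff_of_nonneg (abs_nonneg _) (abs_nonneg _)).1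
    (hzero.antisymm (add_nonneg (abs_nonneg _) (abs_nonneg _)))
  exact ⟨g, sub_eq_zero.1 (abs_eq_zero.1 hsum.1), sub_eq_zero.1 (abs_eq_zero.1 hsum.2)⟩

lemma PointSymmetric.closedBall_inter_closedBall_nonempty (hX : PointSymmetric X) {p q : X} {r : ℝ}
    (h : dist p q ≤ 2 * r) : (closedBall p r ∩ closedBall q r).Nonempty := by
  obtain ⟨m, hpm, hmq⟩ := hX.exists_dist_eq_and_dist_eq p q (t := dist p q / 2) (by positivity)
    (half_le_self dist_nonneg)
  exact ⟨m, mem_closedBall'.2 (by linarith), mem_closedBall.2 (by linarith)⟩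

end Geodesics

/-! ### Point configurations and Poisson processes -/

section Configurations

variable {X : Type*} [MetricSpace X]

/-- The event that a configuration has no point in `B`; its probability is the void probability of
`B`. -/
def voidEvent (B : Set X) : Set (Config X) := {s | s.1 ∩ B = ∅}

namespace Config

/-- The superposition of two configurations. -/
def union (s t : Config X) : Config X :=
  ⟨s.1 ∪ t.1, fun K hK => by
    rw [union_inter_distrib_right]
    exact (s.2 K hK).union (t.2 K hK)⟩

/-- The configuration that agrees with `s` on `S` and with `t` off `S`; it resamples `s` off `S`. -/
def splice (S : Set X) (s t : Config X) : Config X := (s.restrict Sᶜ).union (t.restrict S)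

lemma mem_splice {S : Set X} {s t : Config X} {x : X} :
    x ∈ (splice S s t).1 ↔ x ∈ s.1 ∧ x ∈ S ∨ x ∈ t.1 ∧ x ∉ S := by
  change x ∈ s.1 ∩ Sᶜᶜ ∪ t.1 ∩ Sᶜ ↔ _
  rw [compl_compl]
  rfl

lemma splice_inter_self (S : Set X) (s t : Config X) : (splice S s t).1 ∩ S = s.1 ∩ S := by
  ext x
  simp only [mem_inter_iff, mem_splice]
  tauto

lemma restrict_splice (S : Set X) (s t : Config X) :
    (splice S s t).restrict S = t.restrict S := by
  refine Subtype.ext (Set.ext fun x => ?_)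
  change x ∈ (splice S s t).1 ∧ x ∉ S ↔ x ∈ t.1 ∧ x ∉ S
  rw [mem_splice]
  tauto

end Config

lemma voidEvent_inter_voidEvent (B C : Set X) : voidEvent B ∩ voidEvent C = voidEvent (B ∪ C) := by
  ext s
  simp only [voidEvent, mem_inter_iff, mem_ofPred_eq, inter_union_distrib_left, union_empty_iff]

lemma voidEvent_iUnion {ι : Sort*} (B : ι → Set X) :
    voidEvent (⋃ i, B i) = ⋂ i, voidEvent (B i) := by
  ext s
  simp only [voidEvent, mem_iInter, mem_ofPred_eq, inter_iUnion, iUnion_eq_empty]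

lemma preimage_restrict_voidEvent (S B : Set X) :
    Config.restrict S ⁻¹' voidEvent B = voidEvent (Sᶜ ∩ B) := by
  ext s
  change s.1 ∩ Sᶜ ∩ B = ∅ ↔ s.1 ∩ (Sᶜ ∩ B) = ∅
  rw [inter_assoc]

lemma preimage_union_voidEvent (B : Set X) :
    (fun p : Config X × Config X => p.1.union p.2) ⁻¹' voidEvent B =
      voidEvent B ×ˢ voidEvent B := by
  ext p
  change (p.1.1 ∪ p.2.1) ∩ B = ∅ ↔ p.1.1 ∩ B = ∅ ∧ p.2.1 ∩ B = ∅
  rw [union_inter_distrib_right, union_empty_iff]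

lemma preimage_splice_voidEvent (S B : Set X) :
    (fun p : Config X × Config X => Config.splice S p.1 p.2) ⁻¹' voidEvent B =
      voidEvent (S ∩ B) ×ˢ voidEvent (Sᶜ ∩ B) := by
  have hcomp : (fun p : Config X × Config X => Config.splice S p.1 p.2) =
      (fun p => p.1.union p.2) ∘ Prod.map (Config.restrict Sᶜ) (Config.restrict S) := rfl
  rw [hcomp, preimage_comp, preimage_union_voidEvent, preimage_prod_map_prod,
    preimage_restrict_voidEvent, preimage_restrict_voidEvent, compl_compl]

lemma preimage_mapIso_voidEvent (g : X ≃ᵢ X) (B : Set X) :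
    Config.mapIso g ⁻¹' voidEvent B = voidEvent (g ⁻¹' B) := by
  ext s
  change g '' s.1 ∩ B = ∅ ↔ s.1 ∩ g ⁻¹' B = ∅
  rw [← image_inter_preimage, image_eq_empty]

lemma le_encard_iff_exists_disjoint {𝒢 : Set (Set X)} (h𝒢 : TopologicalSpace.IsTopologicalBasis 𝒢)
    (A : Set X) (k : ℕ) :
    (k : ℕ∞) ≤ A.encard ↔ ∃ U : Fin k → 𝒢, (Pairwise fun i j => Disjoint (U i).1 (U j).1) ∧
      ∀ i, (A ∩ (U i).1).Nonempty := by
  constructor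
  · intro hk
    obtain ⟨F, hFA, hFcard⟩ := exists_subset_encard_eq hk
    have hF : F.Finite := finite_of_encard_eq_coe hFcard
    obtain ⟨V, hV, hVdisj⟩ := hF.t2_separation
    choose U hU𝒢 hxU hUV using fun x => h𝒢.exists_subset_of_mem_open (hV x).1 (hV x).2
    have : Finite F := hF
    let e : F ≃ Fin k := Finite.equivFinOfCardEq (by rw [Nat.card_coe_set_eq, ncard, hFcard]; rfl)
    refine ⟨fun i => ⟨U (e.symm i), hU𝒢 _⟩, fun i j hij => ?_,
      fun i => ⟨e.symm i, hFA (e.symm i).2, hxU _⟩⟩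
    exact (hVdisj (e.symm i).2 (e.symm j).2 fun h =>
      hij (e.symm.injective (Subtype.ext h))).mono (hUV _) (hUV _)
  · rintro ⟨U, hdisj, hmeet⟩
    choose x hxA hxU using hmeet
    have hinj : Injective x := fun i j h => by
      by_contra hij
      exact disjoint_left.1 (hdisj hij) (hxU i) (h ▸ hxU j)
    calc (k : ℕ∞) = (range x).encard := by
          rw [← image_univ, hinj.encard_image, encard_univ, ENat.card_eq_coe_fintype_card,
            Fintype.card_fin]
      _ ≤ A.encard := encard_le_encard (range_subset_iff.2 hxA)

variable [MeasurableSpace X]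

/-- The void events of bounded Borel sets, a `π`-system that determines point processes. -/
def boundedVoidEvents (X : Type*) [MetricSpace X] [MeasurableSpace X] : Set (Set (Config X)) :=
  {A | ∃ B, MeasurableSet B ∧ IsBounded B ∧ A = voidEvent B}

lemma isPiSystem_boundedVoidEvents : IsPiSystem (boundedVoidEvents X) := by
  rintro _ ⟨B, hB, hB', rfl⟩ _ ⟨C, hC, hC', rfl⟩ _
  exact ⟨B ∪ C, hB.union hC, hB'.union hC', voidEvent_inter_voidEvent B C⟩

lemma measurableSet_voidEvent {B : Set X} (hB : MeasurableSet B) : MeasurableSet (voidEvent B) :=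
  MeasurableSpace.measurableSet_generateFrom
    ⟨B, 0, hB, by ext s; exact encard_eq_zero.symm⟩

variable [OpensMeasurableSpace X]

lemma measurableSet_generateFrom_voidEvent {B : Set X} (hB : MeasurableSet B) :
    MeasurableSet[MeasurableSpace.generateFrom (boundedVoidEvents X)] (voidEvent B) := by
  rcases isEmpty_or_nonempty X with _ | ⟨⟨o⟩⟩
  · exact MeasurableSpace.measurableSet_generateFrom
      ⟨B, hB, by rw [B.eq_empty_of_isEmpty]; exact isBounded_empty, rfl⟩
  · rw [← inter_univ B, ← iUnion_closedBall_nat o, inter_iUnion, voidEvent_iUnion]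
    exact MeasurableSet.iInter fun k => MeasurableSpace.measurableSet_generateFrom
      ⟨_, hB.inter measurableSet_closedBall, isBounded_closedBall.subset inter_subset_right, rfl⟩

variable [SecondCountableTopology X]

lemma measurableSet_generateFrom_le_encard {B : Set X} (hB : MeasurableSet B) (k : ℕ) :
    MeasurableSet[MeasurableSpace.generateFrom (boundedVoidEvents X)]
      {s : Config X | (k : ℕ∞) ≤ (s.1 ∩ B).encard} := by
  let 𝒢 := TopologicalSpace.countableBasis X
  have h𝒢 : TopologicalSpace.IsTopologicalBasis 𝒢 := TopologicalSpace.isBasis_countableBasis X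
  have : Countable 𝒢 := (TopologicalSpace.countable_countableBasis X).to_subtype
  have hset : {s : Config X | (k : ℕ∞) ≤ (s.1 ∩ B).encard} =
      ⋃ (U : Fin k → 𝒢) (_ : Pairwise fun i j => Disjoint (U i).1 (U j).1),
        ⋂ i, (voidEvent (B ∩ (U i).1))ᶜ := by
    ext s
    simp only [le_encard_iff_exists_disjoint h𝒢, mem_ofPred_eq, mem_iUnion, mem_iInter, voidEvent,
      mem_compl_iff, ← nonempty_iff_ne_empty, ← ne_eq, inter_assoc, exists_prop]
  rw [hset]
  exact MeasurableSet.iUnion fun U => MeasurableSet.iUnion fun _ => MeasurableSet.iInter fun i =>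
    (measurableSet_generateFrom_voidEvent (hB.inter (h𝒢.isOpen (U i).2).measurableSet)).compl

lemma instMeasurableSpace_eq_generateFrom_boundedVoidEvents :
    (Config.instMeasurableSpace : MeasurableSpace (Config X)) =
      MeasurableSpace.generateFrom (boundedVoidEvents X) := by
  refine le_antisymm (MeasurableSpace.generateFrom_le ?_) (MeasurableSpace.generateFrom_le ?_)
  · rintro _ ⟨B, n, hB, rfl⟩
    have hge := measurableSet_generateFrom_le_encard hB
    induction n using ENat.recTopCoe with
    | top =>
      simp only [ENat.eq_top_iff_forall_ge, ofPred_forall]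
      exact MeasurableSet.iInter hge
    | coe k =>
      convert (hge k).diff (hge (k + 1)) using 1
      ext s
      rw [mem_ofPred_eq, mem_sdiff, mem_ofPred_eq, mem_ofPred_eq, Nat.cast_add_one,
        ENat.add_one_le_iff (ENat.natCast_ne_top k), not_lt, le_antisymm_iff, and_comm]
  · rintro _ ⟨B, hB, _, rfl⟩
    exact measurableSet_voidEvent hB

lemma measurable_of_preimage_voidEvent {Ω : Type*} [MeasurableSpace Ω] {f : Ω → Config X}
    (h : ∀ B, MeasurableSet B → IsBounded B → MeasurableSet (f ⁻¹' voidEvent B)) :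
    Measurable f := by
  rw [instMeasurableSpace_eq_generateFrom_boundedVoidEvents]
  refine measurable_generateFrom ?_
  rintro _ ⟨B, hB, hB', rfl⟩
  exact h B hB hB'

namespace Config

lemma measurable_restrict {S : Set X} (hS : MeasurableSet S) : Measurable (restrict S) :=
  measurable_of_preimage_voidEvent fun B hB _ => by
    rw [preimage_restrict_voidEvent]
    exact measurableSet_voidEvent (hS.compl.inter hB)

lemma measurable_union : Measurable fun p : Config X × Config X => p.1.union p.2 :=
  measurable_of_preimage_voidEvent fun B hB _ => by
    rw [preimage_union_voidEvent]
    exact (measurableSet_voidEvent hB).prod (measurableSet_voidEvent hB)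

lemma measurable_splice {S : Set X} (hS : MeasurableSet S) :
    Measurable fun p : Config X × Config X => splice S p.1 p.2 :=
  measurable_of_preimage_voidEvent fun B hB _ => by
    rw [preimage_splice_voidEvent]
    exact (measurableSet_voidEvent (hS.inter hB)).prod
      (measurableSet_voidEvent (hS.compl.inter hB))

end Config

end Configurations

lemma Config.measurable_mapIso {X : Type*} [MetricSpace X] [SecondCountableTopology X]
    [MeasurableSpace X] [BorelSpace X] (g : X ≃ᵢ X) : Measurable (mapIso g) :=
  measurable_of_preimage_voidEvent fun B hB _ => by
    rw [preimage_mapIso_voidEvent]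
    exact measurableSet_voidEvent (g.continuous.measurable hB)

section PoissonVoids

variable {X : Type*} [MetricSpace X] [MeasurableSpace X]

/-- `P` is the law of a point process whose void probabilities are those of the Poisson process of
locally finite intensity `ν`. By Rényi's theorem this characterises the Poisson process, and it is
the only property of that process we use. -/
structure HasPoissonVoids (ν : Measure X) (P : Measure (Config X)) : Prop where
  isProbabilityMeasure : IsProbabilityMeasure P
  measure_lt_top : ∀ B, IsBounded B → ν B < ⊤
  measure_voidEvent : ∀ B, MeasurableSet B → IsBounded B →
    P (voidEvent B) = ENNReal.ofReal (Real.exp (-(ν B).toReal))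

lemma IsPoisson.hasPoissonVoids {ν : Measure X} {P : Measure (Config X)} (h : IsPoisson ν P)
    (hν : ∀ B, IsBounded B → ν B < ⊤) : HasPoissonVoids ν P := by
  refine ⟨h.1, hν, fun B hB hbdd => ?_⟩
  have hzero : voidEvent B = {s : Config X | s.count B = (0 : ℕ)} := by
    ext s
    exact encard_eq_zero.symm
  rw [hzero, h.2.1 B hB (hν B hbdd) 0]
  simp

lemma ofReal_exp_neg_toReal_mul {a b : ℝ≥0∞} (ha : a ≠ ⊤) (hb : b ≠ ⊤) :
    ENNReal.ofReal (Real.exp (-a.toReal)) * ENNReal.ofReal (Real.exp (-b.toReal)) =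
      ENNReal.ofReal (Real.exp (-(a + b).toReal)) := by
  rw [← ENNReal.ofReal_mul (Real.exp_nonneg _), ← Real.exp_add, ENNReal.toReal_add ha hb, neg_add]

namespace HasPoissonVoids

variable [OpensMeasurableSpace X] [SecondCountableTopology X] {ν ν' : Measure X}
  {P P' : Measure (Config X)}

lemma unique (h : HasPoissonVoids ν P) (h' : HasPoissonVoids ν P') : P = P' := by
  have := h.isProbabilityMeasure
  have := h'.isProbabilityMeasure
  refine ext_of_generate_finite (boundedVoidEvents X)
    instMeasurableSpace_eq_generateFrom_boundedVoidEvents isPiSystem_boundedVoidEvents ?_ ?_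
  · rintro _ ⟨B, hB, hbdd, rfl⟩
    rw [h.measure_voidEvent B hB hbdd, h'.measure_voidEvent B hB hbdd]
  · rw [measure_univ, measure_univ]

lemma superpose (h : HasPoissonVoids ν P) (h' : HasPoissonVoids ν' P') :
    HasPoissonVoids (ν + ν') ((P.prod P').map fun p => p.1.union p.2) := by
  have := h.isProbabilityMeasure
  have := h'.isProbabilityMeasure
  have hmeas := Config.measurable_union (X := X)
  refine ⟨Measure.isProbabilityMeasure_map hmeas.aemeasurable,
    fun B hB => ENNReal.add_lt_top.2 ⟨h.measure_lt_top B hB, h'.measure_lt_top B hB⟩,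
    fun B hB hbdd => ?_⟩
  rw [Measure.map_apply hmeas (measurableSet_voidEvent hB), preimage_union_voidEvent,
    Measure.prod_prod, h.measure_voidEvent B hB hbdd, h'.measure_voidEvent B hB hbdd,
    ofReal_exp_neg_toReal_mul (h.measure_lt_top B hbdd).ne (h'.measure_lt_top B hbdd).ne,
    Measure.add_apply]

lemma map_splice (h : HasPoissonVoids ν P) {S : Set X} (hS : MeasurableSet S) :
    (P.prod P).map (fun p => Config.splice S p.1 p.2) = P := by
  have := h.isProbabilityMeasure
  have hmeas := Config.measurable_splice hS
  refine unique (ν := ν) ⟨Measure.isProbabilityMeasure_map hmeas.aemeasurable, h.measure_lt_top,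
    fun B hB hbdd => ?_⟩ h
  have hSB : IsBounded (S ∩ B) := hbdd.subset inter_subset_right
  have hSB' : IsBounded (Sᶜ ∩ B) := hbdd.subset inter_subset_right
  rw [Measure.map_apply hmeas (measurableSet_voidEvent hB), preimage_splice_voidEvent,
    Measure.prod_prod, h.measure_voidEvent _ (hS.inter hB) hSB,
    h.measure_voidEvent _ (hS.compl.inter hB) hSB',
    ofReal_exp_neg_toReal_mul (h.measure_lt_top _ hSB).ne (h.measure_lt_top _ hSB').ne,
    inter_comm S, inter_comm Sᶜ, ← sdiff_eq, measure_inter_add_sdiff B hS]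

lemma measure_inter_eq_mul (h : HasPoissonVoids ν P) {S : Set X} (hS : MeasurableSet S)
    {E N : Set (Config X)} (hE : MeasurableSet E) (hN : MeasurableSet N)
    (hES : ∀ s t, Config.splice S s t ∈ E ↔ s ∈ E)
    (hNS : ∀ s t, Config.splice S s t ∈ N ↔ t ∈ N) : P (E ∩ N) = P E * P N := by
  have := h.isProbabilityMeasure
  conv_lhs => rw [← h.map_splice hS]
  rw [Measure.map_apply (Config.measurable_splice hS) (hE.inter hN), ← Measure.prod_prod]
  congr 1
  ext p
  simp only [mem_preimage, mem_inter_iff, mem_prod, hES, hNS]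

end HasPoissonVoids

end PoissonVoids

lemma HasPoissonVoids.map_mapIso {X : Type*} [MetricSpace X] [SecondCountableTopology X]
    [MeasurableSpace X] [BorelSpace X] {ν : Measure X} {P : Measure (Config X)}
    (h : HasPoissonVoids ν P) (g : X ≃ᵢ X) (hg : ν.map g = ν) :
    P.map (Config.mapIso g) = P := by
  have := h.isProbabilityMeasure
  have hmeas := Config.measurable_mapIso g
  have hgm : Measurable g := g.continuous.measurable
  refine HasPoissonVoids.unique (ν := ν) ⟨Measure.isProbabilityMeasure_map hmeas.aemeasurable,
    h.measure_lt_top, fun B hB hbdd => ?_⟩ h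
  rw [Measure.map_apply hmeas (measurableSet_voidEvent hB), preimage_mapIso_voidEvent,
    h.measure_voidEvent _ (hgm hB) (g.isometry.antilipschitz.isBounded_preimage hbdd),
    ← Measure.map_apply hgm hB, hg]

section PoissonExistence

open ProbabilityTheory

section Sample

variable {X : Type*} [MeasurableSpace X]

/-- The event that none of the first `p.1` terms of the sequence `p.2` lies in `B`. -/
def avoiding (B : Set X) : Set (ℕ × (ℕ → X)) := {p | ∀ i < p.1, p.2 i ∉ B}

lemma measurableSet_avoiding {B : Set X} (hB : MeasurableSet B) : MeasurableSet (avoiding B) := by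
  have hset : avoiding B = ⋂ i : ℕ, ({p | p.1 ≤ i} ∪ {p | p.2 i ∈ Bᶜ}) := by
    ext p
    simp only [avoiding, mem_ofPred_eq, mem_iInter, mem_union, or_iff_not_imp_left, not_le,
      mem_compl_iff]
  rw [hset]
  exact MeasurableSet.iInter fun i => (measurable_fst measurableSet_Iic).union
    ((measurable_pi_apply i).comp measurable_snd hB.compl)

/-- The law of a Poisson number of independent samples from `m`, encoded as the number and an
infinite sequence of which only the initial terms count. -/
def poissonSample (a : ℝ≥0) (m : Measure X) : Measure (ℕ × (ℕ → X)) :=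
  (poissonMeasure a).prod (Measure.infinitePi fun _ => m)

lemma hasSum_pow_mul_poisson (a x : ℝ) :
    HasSum (fun n : ℕ => x ^ n * (Real.exp (-a) * a ^ n / n.factorial))
      (Real.exp (-(a * (1 - x)))) := by
  have hexp := (NormedSpace.expSeries_div_hasSum_exp (a * x)).mul_left (Real.exp (-a))
  rw [← Real.exp_eq_exp_ℝ, ← Real.exp_add, show -a + a * x = -(a * (1 - x)) by ring] at hexp
  exact hexp.congr_fun fun n => by rw [mul_pow]; ring

lemma poissonSample_avoiding (a : ℝ≥0) (m : Measure X) [IsProbabilityMeasure m] {B : Set X}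
    (hB : MeasurableSet B) :
    poissonSample a m (avoiding B) = ENNReal.ofReal (Real.exp (-(a * m.real B))) := by
  have hslice : ∀ n, (Measure.infinitePi fun _ : ℕ => m) (Prod.mk n ⁻¹' avoiding B) =
      ENNReal.ofReal (m.real Bᶜ) ^ n := by
    intro n
    have hpi : Prod.mk n ⁻¹' avoiding B = Set.pi (Finset.range n : Finset ℕ) fun _ => Bᶜ := by
      ext u
      simp [avoiding, Set.mem_pi]
    rw [hpi, Measure.infinitePi_pi _ fun _ _ => hB.compl, Finset.prod_const, Finset.card_range,
      ofReal_measureReal]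
  have hsum := hasSum_pow_mul_poisson a (m.real Bᶜ)
  rw [← probReal_compl_eq_one_sub hB.compl, compl_compl] at hsum
  rw [poissonSample, Measure.prod_apply (measurableSet_avoiding hB), lintegral_countable',
    ← hsum.tsum_eq, ENNReal.ofReal_tsum_of_nonneg (fun n => by positivity) hsum.summable]
  refine tsum_congr fun n => ?_
  rw [hslice, poissonMeasure_singleton, ← ENNReal.ofReal_pow measureReal_nonneg,
    ← ENNReal.ofReal_mul (by positivity)]

lemma exists_eq_smul_isProbabilityMeasure [Nonempty X] (ν : Measure X) [IsFiniteMeasure ν] :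
    ∃ (a : ℝ≥0) (m : Measure X), IsProbabilityMeasure m ∧ ν = a • m := by
  rcases eq_zero_or_neZero ν with rfl | _
  · exact ⟨0, Measure.dirac (Classical.arbitrary X), inferInstance, by rw [zero_smul]⟩
  · refine ⟨(ν univ).toNNReal, (ν univ)⁻¹ • ν, inferInstance, ?_⟩
    rw [ENNReal.smul_def, ENNReal.coe_toNNReal (measure_ne_top _ _), smul_smul,
      ENNReal.mul_inv_cancel (NeZero.ne _) (measure_ne_top _ _), one_smul]

lemma exists_sample_avoiding [Nonempty X] (ν : Measure X) [IsFiniteMeasure ν] :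
    ∃ W : Measure (ℕ × (ℕ → X)), IsProbabilityMeasure W ∧ ∀ B, MeasurableSet B →
      W (avoiding B) = ENNReal.ofReal (Real.exp (-(ν B).toReal)) := by
  obtain ⟨a, m, _, rfl⟩ := exists_eq_smul_isProbabilityMeasure ν
  refine ⟨poissonSample a m, by unfold poissonSample; infer_instance, fun B hB => ?_⟩
  rw [poissonSample_avoiding a m hB, Measure.smul_apply, ENNReal.smul_def, smul_eq_mul,
    ENNReal.toReal_mul, ENNReal.coe_toReal, measureReal_def]

end Sample

variable {X : Type*} [MetricSpace X] (o : X)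

/-- The points whose distance from `o` lies in `[j, j + 1)`: bounded sets that partition the space,
on which independent finite Poisson processes are sampled. -/
def shell (j : ℕ) : Set X := {x | ⌊dist x o⌋₊ = j}

lemma isBounded_shell (j : ℕ) : IsBounded (shell o j) :=
  isBounded_closedBall.subset fun x (hx : _ = j) =>
    mem_closedBall.2 (hx ▸ (Nat.lt_floor_add_one (dist x o)).le)

lemma pairwise_disjoint_shell : Pairwise (Disjoint on shell o) := fun _ _ hij =>
  disjoint_left.2 fun _ hi hj => hij (hi.symm.trans hj)

variable {o} in
lemma le_floor_of_mem_shell {R : ℝ} {j : ℕ} {x : X} (hx : x ∈ closedBall o R)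
    (hj : x ∈ shell o j) : j ≤ ⌊R⌋₊ :=
  hj ▸ Nat.floor_le_floor hx

/-- The configuration whose points in the `j`-th shell are those among the first `(w j).1` terms of
the sequence `(w j).2` that lie in that shell. -/
def Config.ofShells (w : ℕ → ℕ × (ℕ → X)) : Config X :=
  ⟨{x | ∃ j, ∃ i < (w j).1, (w j).2 i = x ∧ x ∈ shell o j}, by
    intro K hK
    obtain ⟨R, hR⟩ := hK.subset_closedBall o
    refine ((finite_le_nat ⌊R⌋₊).biUnion fun j _ =>
      (finite_lt_nat (w j).1).image (w j).2).subset ?_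
    rintro x ⟨⟨j, i, hi, rfl, hj⟩, hx⟩
    exact mem_biUnion (le_floor_of_mem_shell (hR hx) hj) ⟨i, hi, rfl⟩⟩

lemma preimage_ofShells_voidEvent (B : Set X) :
    Config.ofShells o ⁻¹' voidEvent B = ⋂ j, (fun w => w j) ⁻¹' avoiding (B ∩ shell o j) := by
  ext w
  simp only [mem_preimage, voidEvent, mem_iInter, mem_ofPred_eq, Config.ofShells, avoiding,
    eq_empty_iff_forall_notMem]
  constructor
  · exact fun h j i hi hB => h _ ⟨⟨j, i, hi, rfl, hB.2⟩, hB.1⟩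
  · rintro h x ⟨⟨j, i, hi, rfl, hj⟩, hx⟩
    exact h j i hi ⟨hx, hj⟩

lemma preimage_ofShells_voidEvent_of_subset_closedBall {B : Set X} {R : ℝ}
    (hB : B ⊆ closedBall o R) :
    Config.ofShells o ⁻¹' voidEvent B =
      Set.pi (Finset.range (⌊R⌋₊ + 1) : Finset ℕ) fun j => avoiding (B ∩ shell o j) := by
  rw [preimage_ofShells_voidEvent]
  ext w
  simp only [mem_iInter, mem_preimage, Set.mem_pi, Finset.coe_range, mem_Iio, Nat.lt_succ_iff]
  exact ⟨fun h j _ => h j, fun h j i hi hx =>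
    h j (le_floor_of_mem_shell (hB hx.1) hx.2) i hi hx⟩

variable [MeasurableSpace X] [OpensMeasurableSpace X]

lemma measurableSet_shell (j : ℕ) : MeasurableSet (shell o j) :=
  Nat.measurable_floor.comp (continuous_id.dist continuous_const).measurable
    (measurableSet_singleton j)

variable {o} in
lemma sum_measure_inter_shell (ν : Measure X) {B : Set X} {R : ℝ} (hB : MeasurableSet B)
    (hR : B ⊆ closedBall o R) :
    ∑ j ∈ Finset.range (⌊R⌋₊ + 1), ν (B ∩ shell o j) = ν B := by
  rw [← measure_biUnion_finset
    (fun i _ j _ hij => (pairwise_disjoint_shell o hij).mono inter_subset_right inter_subset_right)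
    fun j _ => hB.inter (measurableSet_shell o j)]
  congr 1
  refine Subset.antisymm (iUnion₂_subset fun _ _ => inter_subset_left) fun x hx => ?_
  exact mem_biUnion (Finset.mem_range_succ_iff.2 (le_floor_of_mem_shell (hR hx) rfl)) ⟨hx, rfl⟩

variable [SecondCountableTopology X]

lemma measurable_ofShells : Measurable (Config.ofShells o) :=
  measurable_of_preimage_voidEvent fun B hB _ => by
    rw [preimage_ofShells_voidEvent]
    exact MeasurableSet.iInter fun j =>
      measurable_pi_apply j (measurableSet_avoiding (hB.inter (measurableSet_shell o j)))

lemma exists_hasPoissonVoids [Nonempty X] (ν : Measure X) (hν : ∀ B, IsBounded B → ν B < ⊤) :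
    ∃ Q, HasPoissonVoids ν Q := by
  obtain ⟨o⟩ := ‹Nonempty X›
  have hfin : ∀ j, IsFiniteMeasure (ν.restrict (shell o j)) := fun j =>
    ⟨by rw [Measure.restrict_apply_univ]; exact hν _ (isBounded_shell o j)⟩
  have : Nonempty X := ⟨o⟩
  choose W hW hWv using fun j => exists_sample_avoiding (ν.restrict (shell o j))
  have hmeas := measurable_ofShells o
  refine ⟨(Measure.infinitePi W).map (Config.ofShells o),
    Measure.isProbabilityMeasure_map hmeas.aemeasurable, hν, fun B hB hbdd => ?_⟩
  obtain ⟨R, hR⟩ := hbdd.subset_closedBall o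
  have hBj := fun j => hB.inter (measurableSet_shell o j)
  have hfactor : ∀ j, W j (avoiding (B ∩ shell o j)) =
      ENNReal.ofReal (Real.exp (-(ν (B ∩ shell o j)).toReal)) := fun j => by
    rw [hWv j _ (hBj j), Measure.restrict_apply (hBj j), inter_assoc, inter_self]
  rw [Measure.map_apply hmeas (measurableSet_voidEvent hB),
    preimage_ofShells_voidEvent_of_subset_closedBall o hR,
    Measure.infinitePi_pi _ fun j _ => measurableSet_avoiding (hBj j)]
  simp only [hfactor]
  rw [← ENNReal.ofReal_prod_of_nonneg fun _ _ => Real.exp_nonneg _, ← Real.exp_sum,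
    Finset.sum_neg_distrib,
    ← ENNReal.toReal_sum fun j _ => (hν _ (hbdd.subset inter_subset_left)).ne,
    sum_measure_inter_shell ν hB hR]

end PoissonExistence

/-! ### Clusters of the Boolean model -/

section Clusters

variable {X : Type*} [MetricSpace X] {s t : Set X} {p q r z : X}

/-- `q` is reached from `p` by steps of length at most `2` that land in `s`. The start `p` need not
belong to `s`. -/
def Linked (s : Set X) (p q : X) : Prop :=
  Relation.ReflTransGen (fun a b => b ∈ s ∧ dist a b ≤ 2) p q

/-- The points of `s` whose unit balls are connected to the one of `p` in the occupied set. -/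
def cluster (s : Set X) (p : X) : Set X := {q ∈ s | Linked s p q}

/-- The points of `s` that lie in an unbounded cluster. -/
def unboundedPart (s : Set X) : Set X := {p ∈ s | ¬IsBounded (cluster s p)}

/-- The cluster of `s` whose unit balls cover the location `z`. -/
def clusterAt (z : X) (s : Set X) : Set X := {q | ∃ p ∈ s, dist z p ≤ 1 ∧ Linked s p q}

namespace Linked

lemma refl (s : Set X) (p : X) : Linked s p p := Relation.ReflTransGen.refl

lemma trans (h : Linked s p q) (h' : Linked s q r) : Linked s p r :=
  Relation.ReflTransGen.trans h h'

lemma step (h : Linked s p q) (hr : r ∈ s) (hqr : dist q r ≤ 2) : Linked s p r :=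
  Relation.ReflTransGen.tail h ⟨hr, hqr⟩

lemma mem (h : Linked s p q) (hp : p ∈ s) : q ∈ s := by
  induction h with
  | refl => exact hp
  | tail _ h _ => exact h.1

lemma symm (h : Linked s p q) (hp : p ∈ s) : Linked s q p := by
  induction h with
  | refl => exact refl s p
  | @tail b c hpb hbc ih =>
    exact ((refl s c).step (mem hpb hp) (by rw [dist_comm]; exact hbc.2)).trans ih

lemma mono (hst : s ⊆ t) (h : Linked s p q) : Linked t p q :=
  Relation.ReflTransGen.mono (fun _ _ hab => ⟨hst hab.1, hab.2⟩) _ _ h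

end Linked

lemma cluster_subset : cluster s p ⊆ s := sep_subset _ _

lemma mem_cluster_self (hp : p ∈ s) : p ∈ cluster s p := ⟨hp, .refl s p⟩

lemma cluster_mono (hst : s ⊆ t) : cluster s p ⊆ cluster t p := fun _ h => ⟨hst h.1, h.2.mono hst⟩

lemma Linked.cluster_eq (h : Linked s p q) (hp : p ∈ s) : cluster s q = cluster s p :=
  Subset.antisymm (fun _ hr => ⟨hr.1, h.trans hr.2⟩) fun _ hr => ⟨hr.1, (h.symm hp).trans hr.2⟩

lemma unboundedPart_subset : unboundedPart s ⊆ s := sep_subset _ _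

lemma unboundedPart_mono (hst : s ⊆ t) : unboundedPart s ⊆ unboundedPart t := fun _ h =>
  ⟨hst h.1, fun hb => h.2 (hb.subset (cluster_mono hst))⟩

lemma clusterAt_subset : clusterAt z s ⊆ s := fun _ ⟨_, hp, _, h⟩ => h.mem hp

lemma mem_clusterAt_of_dist_le (hq : q ∈ clusterAt z s) (hr : r ∈ s) (hqr : dist q r ≤ 2) :
    r ∈ clusterAt z s :=
  let ⟨p, hp, hzp, h⟩ := hq
  ⟨p, hp, hzp, h.step hr hqr⟩

lemma clusterAt_mono (hst : s ⊆ t) : clusterAt z s ⊆ clusterAt z t := fun _ ⟨p, hp, hzp, h⟩ =>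
  ⟨p, hst hp, hzp, h.mono hst⟩

lemma not_isBounded_iff_forall_exists_lt_dist (A : Set X) (z : X) :
    ¬IsBounded A ↔ ∀ n : ℕ, ∃ q ∈ A, (n : ℝ) < dist q z := by
  constructor
  · intro hA n
    by_contra! hle
    exact hA (isBounded_closedBall.subset hle)
  · intro hA hb
    obtain ⟨R, hR⟩ := hb.subset_closedBall z
    obtain ⟨n, hn⟩ := exists_nat_ge R
    obtain ⟨q, hq, hlt⟩ := hA n
    exact absurd (hR hq) (by rw [mem_closedBall]; linarith)

/-- `q` is reached from `p` by exactly `k` steps of length at most `2` that land in `s`; the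
recursion on `k` makes `Linked` measurable. -/
def LinkedIn (s : Set X) : ℕ → X → X → Prop
  | 0, p, q => p = q
  | k + 1, p, q => ∃ r ∈ s, dist p r ≤ 2 ∧ LinkedIn s k r q

lemma linked_iff_exists_linkedIn (s : Set X) (p q : X) : Linked s p q ↔ ∃ k, LinkedIn s k p q := by
  constructor
  · intro h
    induction h using Relation.ReflTransGen.head_induction_on with
    | refl => exact ⟨0, rfl⟩
    | head h _ ih =>
      obtain ⟨k, hk⟩ := ih
      exact ⟨k + 1, _, h.1, h.2, hk⟩
  · rintro ⟨k, hk⟩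
    induction k generalizing p with
    | zero =>
      cases hk
      exact .refl s _
    | succ k ih =>
      obtain ⟨r, hr, hpr, hrq⟩ := hk
      exact .head ⟨hr, hpr⟩ (ih _ hrq)

end Clusters

section ClusterMeasurability

variable {X : Type*} [MetricSpace X] [MeasurableSpace X] [OpensMeasurableSpace X]
  {Ω : Type*} [MeasurableSpace Ω] {s : Ω → Config X}

lemma measurable_count_restrict {K : Set X} (hK : MeasurableSet K) (hbdd : IsBounded K) :
    Measurable fun s : Config X => (Measure.count.restrict (s.1 ∩ K) : Measure X) := by
  refine Measure.measurable_of_measurable_coe _ fun B hB => ?_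
  have hcount : (fun s : Config X => (Measure.count.restrict (s.1 ∩ K) : Measure X) B) =
      fun s => (((s.1 ∩ (B ∩ K)).encard : ℕ∞) : ℝ≥0∞) := by
    ext s
    have hfin : (s.1 ∩ (B ∩ K)).Finite := (s.2 K hbdd).subset fun x hx => ⟨hx.1, hx.2.2⟩
    rw [Measure.restrict_apply hB, inter_left_comm, Measure.count_apply hfin.measurableSet]
  rw [hcount]
  refine (measurable_from_top (f := fun n : ℕ∞ => (n : ℝ≥0∞))).comp
    (measurable_to_countable' fun n => ?_)
  exact MeasurableSpace.measurableSet_generateFrom ⟨B ∩ K, n, hB.inter hK, rfl⟩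

/- The counting measure of `s a` in a ball is a finite kernel; it charges the section of `E` at `a`
iff some point of `s a` in that ball has `E a`. -/
lemma measurableSet_exists_mem (hs : Measurable s) {E : Ω → X → Prop}
    (hE : MeasurableSet {x : Ω × X | E x.1 x.2}) : MeasurableSet {a | ∃ p ∈ (s a).1, E a p} := by
  rcases isEmpty_or_nonempty X with _ | ⟨⟨o⟩⟩
  · simp only [IsEmpty.exists_iff, ofPred_false, MeasurableSet.empty]
  let κ : ℕ → ProbabilityTheory.Kernel Ω X := fun n =>
    ⟨fun a => Measure.count.restrict ((s a).1 ∩ closedBall o n),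
      (measurable_count_restrict measurableSet_closedBall isBounded_closedBall).comp hs⟩
  have hfin : ∀ n a, IsFiniteMeasure (κ n a) := fun n a => by
    have hf := (s a).2 (closedBall o n) isBounded_closedBall
    exact ⟨(Measure.restrict_apply_univ _).trans_lt (Measure.count_apply_lt_top.2 hf)⟩
  have hset : {a | ∃ p ∈ (s a).1, E a p} =
      ⋃ n : ℕ, {a | κ n a (Prod.mk a ⁻¹' {x : Ω × X | E x.1 x.2}) = 0}ᶜ := by
    ext a
    have hzero : ∀ n, κ n a (Prod.mk a ⁻¹' {x : Ω × X | E x.1 x.2}) = 0 ↔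
        {p | E a p} ∩ ((s a).1 ∩ closedBall o n) = ∅ := fun n =>
      (Measure.restrict_apply (measurable_prodMk_left hE)).congr_left.trans
        Measure.count_eq_zero_iff
    simp only [mem_iUnion, mem_compl_iff, mem_ofPred_eq, hzero, ← nonempty_iff_ne_empty, ← ne_eq]
    constructor
    · rintro ⟨p, hp, hEp⟩
      obtain ⟨n, hn⟩ := exists_nat_ge (dist p o)
      exact ⟨n, p, hEp, hp, hn⟩
    · rintro ⟨n, p, hEp, hp, _⟩
      exact ⟨p, hp, hEp⟩
  rw [hset]
  exact MeasurableSet.iUnion fun n =>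
    (ProbabilityTheory.Kernel.measurable_kernel_prodMk_left_of_finite hE (hfin n)
      (measurableSet_singleton 0)).compl

variable [SecondCountableTopology X]

lemma measurableSet_not_isBounded (hs : Measurable s) {A : Ω → Set X} (hA : ∀ a, A a ⊆ (s a).1)
    (hAm : MeasurableSet {x : Ω × X | x.2 ∈ A x.1}) : MeasurableSet {a | ¬IsBounded (A a)} := by
  rcases isEmpty_or_nonempty X with _ | ⟨⟨o⟩⟩
  · simp only [eq_empty_of_isEmpty, isBounded_empty, not_true_eq_false, ofPred_false,
      MeasurableSet.empty]
  have hset : {a | ¬IsBounded (A a)} =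
      ⋂ n : ℕ, {a | ∃ q ∈ (s a).1, q ∈ A a ∧ (n : ℝ) < dist q o} := by
    ext a
    simp only [not_isBounded_iff_forall_exists_lt_dist _ o, mem_iInter, mem_ofPred_eq]
    exact forall_congr' fun n => exists_congr fun q => ⟨fun h => ⟨hA a h.1, h⟩, And.right⟩
  rw [hset]
  exact MeasurableSet.iInter fun n => measurableSet_exists_mem hs
    (hAm.inter (measurableSet_lt measurable_const (measurable_snd.dist measurable_const)))

lemma measurableSet_linkedIn (hs : Measurable s) (k : ℕ) :
    MeasurableSet {x : Ω × X × X | LinkedIn (s x.1).1 k x.2.1 x.2.2} := by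
  induction k with
  | zero => exact measurableSet_eq_fun measurable_snd.fst measurable_snd.snd
  | succ k ih =>
    refine measurableSet_exists_mem (s := fun x : Ω × X × X => s x.1) (hs.comp measurable_fst) <|
      (measurableSet_le (measurable_fst.snd.fst.dist measurable_snd) measurable_const).inter ?_
    have hswap : Measurable fun y : (Ω × X × X) × X => ((y.1.1, y.2, y.1.2.2) : Ω × X × X) := by
      fun_prop
    exact hswap ih

variable {f g : Ω → X}

lemma measurableSet_linked (hs : Measurable s) (hf : Measurable f) (hg : Measurable g) :
    MeasurableSet {a | Linked (s a).1 (f a) (g a)} := by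
  simp only [linked_iff_exists_linkedIn, ofPred_exists]
  exact MeasurableSet.iUnion fun k =>
    (measurable_id.prodMk (hf.prodMk hg)) (measurableSet_linkedIn hs k)

lemma measurableSet_mem (hs : Measurable s) (hf : Measurable f) :
    MeasurableSet {a | f a ∈ (s a).1} := by
  have hset : {a | f a ∈ (s a).1} = {a | ∃ p ∈ (s a).1, p = f a} := by
    simp only [exists_eq_right]
  rw [hset]
  exact measurableSet_exists_mem hs (measurableSet_eq_fun measurable_snd (hf.comp measurable_fst))

lemma measurableSet_not_isBounded_cluster (hs : Measurable s) (hf : Measurable f) :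
    MeasurableSet {a | ¬IsBounded (cluster (s a).1 (f a))} :=
  measurableSet_not_isBounded hs (fun _ => cluster_subset) <|
    (measurableSet_mem (hs.comp measurable_fst) measurable_snd).inter <|
      measurableSet_linked (hs.comp measurable_fst) (hf.comp measurable_fst) measurable_snd

lemma measurableSet_mem_unboundedPart (hs : Measurable s) (hf : Measurable f) :
    MeasurableSet {a | f a ∈ unboundedPart (s a).1} :=
  (measurableSet_mem hs hf).inter (measurableSet_not_isBounded_cluster hs hf)

lemma measurableSet_mem_clusterAt (hs : Measurable s) (hf : Measurable f) (hg : Measurable g) :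
    MeasurableSet {a | f a ∈ clusterAt (g a) (s a).1} :=
  measurableSet_exists_mem hs <|
    (measurableSet_le ((hg.comp measurable_fst).dist measurable_snd) measurable_const).inter <|
      measurableSet_linked (hs.comp measurable_fst) measurable_snd (hf.comp measurable_fst)

end ClusterMeasurability

section UnboundedComponents

variable {X : Type*} [MetricSpace X]

/-- The union of the closed unit balls centred in `A`; for a cluster `A` this is a component of the
occupied set. -/
def unitBalls (A : Set X) : Set X := ⋃ x ∈ A, closedBall x 1

lemma mem_unitBalls {A : Set X} {x : X} : x ∈ unitBalls A ↔ ∃ p ∈ A, x ∈ closedBall p 1 :=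
  mem_iUnion₂.trans (by simp only [exists_prop])

lemma subset_unitBalls (A : Set X) : A ⊆ unitBalls A := fun _ hx =>
  mem_biUnion hx (mem_closedBall_self zero_le_one)

lemma isBounded_unitBalls {A : Set X} : IsBounded (unitBalls A) ↔ IsBounded A :=
  ⟨fun h => h.subset (subset_unitBalls A), fun h => h.cthickening.subset <|
    iUnion₂_subset fun _ hx => closedBall_subset_cthickening hx 1⟩

lemma isClosed_unitBalls (s : Config X) {A : Set X} (hA : A ⊆ s.1) : IsClosed (unitBalls A) := by
  have hfin : LocallyFinite fun q : A => closedBall (q : X) 1 := fun x => by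
    refine ⟨ball x 1, ball_mem_nhds x one_pos, Finite.of_finite_image
      ((s.2 (closedBall x 2) isBounded_closedBall).subset ?_) Subtype.val_injective.injOn⟩
    rintro _ ⟨q, ⟨y, hqy, hxy⟩, rfl⟩
    refine ⟨hA q.2, mem_closedBall.2 ?_⟩
    linarith [dist_triangle_left (q : X) x y, mem_closedBall.1 hqy, mem_ball.1 hxy]
  rw [unitBalls, biUnion_eq_iUnion]
  exact hfin.isClosed_iUnion fun _ => isClosed_closedBall

lemma disjoint_unitBalls_cluster (s : Set X) (p : X) :
    Disjoint (unitBalls (cluster s p)) (unitBalls (s \ cluster s p)) := by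
  refine disjoint_left.2 fun w hw hw' => ?_
  obtain ⟨a, ha, hwa⟩ := mem_unitBalls.1 hw
  obtain ⟨b, hb, hwb⟩ := mem_unitBalls.1 hw'
  refine hb.2 ⟨hb.1, ha.2.step hb.1 ?_⟩
  linarith [dist_triangle_left a b w, mem_closedBall.1 hwa, mem_closedBall.1 hwb]

lemma connectedComponentIn_occupied_subset (s : Config X) {p x : X} (hp : p ∈ s.1)
    (hx : x ∈ closedBall p 1) :
    connectedComponentIn (occupied s) x ⊆ unitBalls (cluster s.1 p) := by
  have hcover : occupied s = unitBalls (cluster s.1 p) ∪ unitBalls (s.1 \ cluster s.1 p) := by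
    rw [unitBalls, unitBalls, ← biUnion_union, union_sdiff_cancel cluster_subset]
    rfl
  have hsub := (connectedComponentIn_subset (occupied s) x).trans hcover.le
  intro y hy
  by_contra hy'
  obtain ⟨w, -, hw⟩ := isPreconnected_closed_iff.1 isPreconnected_connectedComponentIn _ _
    (isClosed_unitBalls s cluster_subset) (isClosed_unitBalls s sdiff_subset) hsub
    ⟨x, mem_connectedComponentIn (mem_biUnion hp hx), mem_biUnion (mem_cluster_self hp) hx⟩
    ⟨y, hy, (hsub hy).resolve_left hy'⟩
  exact disjoint_left.1 (disjoint_unitBalls_cluster s.1 p) hw.1 hw.2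

lemma unitBalls_cluster_eq_iff {s : Set X} {p q : X} (hp : p ∈ s) (hq : q ∈ s) :
    unitBalls (cluster s p) = unitBalls (cluster s q) ↔ Linked s p q := by
  refine ⟨fun h => ?_, fun h => by rw [h.cluster_eq hp]⟩
  obtain ⟨r, hr, hqr⟩ := mem_unitBalls.1 (h.ge (subset_unitBalls _ (mem_cluster_self hq)))
  exact hr.2.step hq (by linarith [mem_closedBall'.1 hqr])

variable [ProperSpace X] [PreconnectedSpace X]

lemma PointSymmetric.isPreconnected_unitBalls_cluster (hX : PointSymmetric X) {s : Set X} {p : X}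
    (hp : p ∈ s) : IsPreconnected (unitBalls (cluster s p)) := by
  refine IsPreconnected.biUnion_of_reflTransGen (fun q _ => hX.isPreconnected_closedBall q 1) ?_
  rintro a ⟨-, hpa⟩ b ⟨-, hpb⟩
  have hab : Linked s a b := (hpa.symm hp).trans hpb
  clear hpb
  induction hab with
  | refl => exact .refl
  | @tail c d hac hcd ih =>
    have hpc : Linked s p c := hpa.trans hac
    exact ih.tail ⟨hX.closedBall_inter_closedBall_nonempty (by linarith [hcd.2]),
      hpc.mem hp, hpc⟩

lemma PointSymmetric.connectedComponentIn_occupied (hX : PointSymmetric X) (s : Config X)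
    {p x : X} (hp : p ∈ s.1) (hx : x ∈ closedBall p 1) :
    connectedComponentIn (occupied s) x = unitBalls (cluster s.1 p) :=
  (connectedComponentIn_occupied_subset s hp hx).antisymm <|
    (hX.isPreconnected_unitBalls_cluster hp).subset_connectedComponentIn
      (mem_biUnion (mem_cluster_self hp) hx) (biUnion_subset_biUnion_left cluster_subset)

lemma PointSymmetric.ucomps_occupied (hX : PointSymmetric X) (s : Config X) :
    ucomps (occupied s) = (fun p => unitBalls (cluster s.1 p)) '' unboundedPart s.1 := by
  ext C
  constructor
  · rintro ⟨⟨x, hx, rfl⟩, hunb⟩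
    obtain ⟨p, hp, hxp⟩ := mem_unitBalls.1 hx
    rw [hX.connectedComponentIn_occupied s hp hxp] at hunb ⊢
    exact ⟨p, ⟨hp, mt isBounded_unitBalls.2 hunb⟩, rfl⟩
  · rintro ⟨p, ⟨hp, hunb⟩, rfl⟩
    have hpp : p ∈ closedBall p 1 := mem_closedBall_self zero_le_one
    exact ⟨⟨p, mem_biUnion hp hpp, (hX.connectedComponentIn_occupied s hp hpp).symm⟩,
      mt isBounded_unitBalls.1 hunb⟩

lemma PointSymmetric.numUcomps_occupied_eq_one_iff (hX : PointSymmetric X) (s : Config X) :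
    numUcomps (occupied s) = 1 ↔ (unboundedPart s.1).Nonempty ∧
      ∀ p ∈ unboundedPart s.1, ∀ q ∈ unboundedPart s.1, Linked s.1 p q := by
  rw [numUcomps, hX.ucomps_occupied, encard_eq_one, exists_eq_singleton_iff_nonempty_subsingleton,
    image_nonempty, Set.Subsingleton, forall_mem_image]
  refine and_congr_right fun _ => forall₂_congr fun p hp => ?_
  rw [forall_mem_image]
  exact forall₂_congr fun q hq => unitBalls_cluster_eq_iff hp.1 hq.1

end UnboundedComponents

/-! ### Sprinkling -/

section Nets

variable {X : Type*} [MetricSpace X]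

lemma exists_isSeparated_isCover (ε : ℝ≥0) (A : Set X) :
    ∃ N ⊆ A, IsSeparated ε N ∧ IsCover ε A N := by
  obtain ⟨N, hN⟩ := zorn_subset {N : Set X | N ⊆ A ∧ IsSeparated ε N} fun c hc hchain =>
    ⟨⋃₀ c, ⟨sUnion_subset fun N hN => (hc hN).1,
      (pairwise_sUnion hchain.directedOn).2 fun N hN => (hc hN).2⟩,
      fun N hN => subset_sUnion_of_mem hN⟩
  exact ⟨N, hN.1.1, hN.1.2, .of_maximal_isSeparated hN⟩

lemma finite_of_isSeparated_of_totallyBounded {ε : ℝ≥0} (hε : ε ≠ 0) {N : Set X}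
    (hN : IsSeparated ε N) (hb : TotallyBounded N) : N.Finite := by
  obtain ⟨C, -, hC, hcover⟩ := exists_finite_isCover_of_totallyBounded (half_pos hε.bot_lt).ne' hb
  rw [← encard_lt_top_iff]
  calc N.encard ≤ packingNumber (2 * (ε / 2)) N := by
        rw [mul_div_cancel₀ ε two_ne_zero]
        exact hN.encard_le_packingNumber Subset.rfl
    _ ≤ externalCoveringNumber (ε / 2) N := packingNumber_two_mul_le_externalCoveringNumber _ _
    _ ≤ C.encard := hcover.externalCoveringNumber_le_encard
    _ < ⊤ := hC.encard_lt_top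

lemma exists_config_separated_dense [ProperSpace X] {r : ℝ} (hr : 0 < r) :
    ∃ Y : Config X, Y.1.Pairwise (fun y y' => r < dist y y') ∧ ∀ x, ∃ y ∈ Y.1, dist x y ≤ r := by
  lift r to ℝ≥0 using hr.le
  obtain ⟨N, -, hsep, hcover⟩ := exists_isSeparated_isCover r (univ : Set X)
  refine ⟨⟨N, fun K hK => ?_⟩, fun y hy y' hy' hne => ?_, fun x => ?_⟩
  · exact finite_of_isSeparated_of_totallyBounded (NNReal.coe_pos.1 hr).ne'
      (hsep.subset inter_subset_left)
      (hK.isCompact_closure.totallyBounded.subset (inter_subset_right.trans subset_closure))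
  · have hlt : (r : ℝ≥0∞) < edist y y' := hsep hy hy' hne
    rwa [edist_nndist, ENNReal.coe_lt_coe] at hlt
  · simpa using isCover_iff_subset_iUnion_closedBall.1 hcover (mem_univ x)

lemma Config.countable (s : Config X) : s.1.Countable := by
  rcases isEmpty_or_nonempty X with _ | ⟨⟨o⟩⟩
  · exact to_countable _
  rw [← inter_univ s.1, ← iUnion_closedBall_nat o, inter_iUnion]
  exact countable_iUnion fun n => (s.2 _ isBounded_closedBall).countable

end Nets

section Sprinkling

variable {X : Type*} [MetricSpace X]

lemma clusterAt_subset_clusterAt_of_subset {z : X} {s t : Set X} (hst : clusterAt z s ⊆ t) :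
    clusterAt z s ⊆ clusterAt z t := by
  rintro q ⟨p, hp, hzp, h⟩
  induction h with
  | refl => exact ⟨p, hst ⟨p, hp, hzp, .refl s p⟩, hzp, .refl t p⟩
  | tail hpb hbc ih =>
    exact mem_clusterAt_of_dist_le ih (hst ⟨p, hp, hzp, .tail hpb hbc⟩) hbc.2

/-- Even without the points of `η` within `1/10` of `y`, the cluster of `W ∪ η` at `z` comes so
close to `y` that any such point would join it; the cluster avoids `T`, but the point would lie
in `T`. -/
def nearMiss (W : Config X) (z : X) (T : Set X) (y : X) : Set (Config X) :=
  {η | Disjoint (clusterAt z (W.union (η.restrict (closedBall y (1 / 10)))).1) T ∧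
    closedBall y (1 / 10) ⊆ T ∧
    ∃ c ∈ clusterAt z (W.union (η.restrict (closedBall y (1 / 10)))).1, dist c y ≤ 19 / 10}

variable {W : Config X} {z : X} {T : Set X}

lemma disjoint_nearMiss {y y' : X} (hyy' : 1 / 4 < dist y y') :
    Disjoint ((voidEvent (closedBall y (1 / 10)))ᶜ ∩ nearMiss W z T y)
      ((voidEvent (closedBall y' (1 / 10)))ᶜ ∩ nearMiss W z T y') := by
  refine Set.disjoint_left.2 ?_
  rintro η ⟨hnonvoid, hdisj, hyT, c, hc, hcy⟩ ⟨-, hdisj', hyT', -⟩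
  obtain ⟨x, hx, hxy⟩ := nonempty_iff_ne_empty.2 hnonvoid
  have hxy' : x ∉ closedBall y' (1 / 10) := fun hxy' => by
    linarith [dist_triangle_left y y' x, mem_closedBall.1 hxy, mem_closedBall.1 hxy']
  have hc' : c ∈ clusterAt z (W.union (η.restrict (closedBall y' (1 / 10)))).1 := by
    refine clusterAt_subset_clusterAt_of_subset (fun q hq => ?_) hc
    exact (clusterAt_subset hq).imp id fun h =>
      ⟨h.1, fun hqy' => Set.disjoint_left.1 hdisj hq (hyT' hqy')⟩
  refine Set.disjoint_left.1 hdisj'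
    (mem_clusterAt_of_dist_le hc' (Or.inr ⟨hx, hxy'⟩) ?_) (hyT hxy)
  linarith [dist_triangle_right c x y, mem_closedBall.1 hxy]

lemma mem_nearMiss_of_disjoint {η : Config X} {y c : X}
    (hdisj : Disjoint (clusterAt z (W.union η).1) T) (hyT : closedBall y (1 / 10) ⊆ T)
    (hc : c ∈ clusterAt z (W.union η).1) (hcy : dist c y ≤ 19 / 10) : η ∈ nearMiss W z T y := by
  have hvoid : η.1 ⊆ (closedBall y (1 / 10))ᶜ := fun x hx hxy =>
    Set.disjoint_left.1 hdisj (mem_clusterAt_of_dist_le hc (Or.inr hx) (by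
      linarith [dist_triangle_right c x y, mem_closedBall.1 hxy])) (hyT hxy)
  have hrestrict : η.restrict (closedBall y (1 / 10)) = η := Subtype.ext (inter_eq_left.2 hvoid)
  rw [nearMiss, mem_ofPred_eq, hrestrict]
  exact ⟨hdisj, hyT, c, hc, hcy⟩

variable [MeasurableSpace X]

lemma HasPoissonVoids.measure_compl_voidEvent_ne_zero {ν : Measure X} {P : Measure (Config X)}
    (h : HasPoissonVoids ν P) {B : Set X} (hB : MeasurableSet B) (hbdd : IsBounded B)
    (hpos : ν B ≠ 0) : P (voidEvent B)ᶜ ≠ 0 := by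
  have := h.isProbabilityMeasure
  rw [prob_compl_eq_one_sub (measurableSet_voidEvent hB), h.measure_voidEvent B hB hbdd, Ne,
    tsub_eq_zero_iff_le, not_le, ENNReal.ofReal_lt_one, Real.exp_lt_one_iff, neg_lt_zero]
  exact ENNReal.toReal_pos hpos (h.measure_lt_top B hbdd).ne

lemma PointSymmetric.measure_closedBall_eq [BorelSpace X] [ProperSpace X] [PreconnectedSpace X]
    (hX : PointSymmetric X) {μ : Measure X} (hμ : ∀ γ : X ≃ᵢ X, μ.map γ = μ) (x y : X) (r : ℝ) :
    μ (closedBall x r) = μ (closedBall y r) := by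
  obtain ⟨g, rfl⟩ := hX.exists_isometryEquiv_apply_eq x y
  conv_rhs => rw [← hμ g]
  rw [Measure.map_apply g.continuous.measurable measurableSet_closedBall,
    g.isometry.preimage_closedBall]

variable [OpensMeasurableSpace X] [SecondCountableTopology X]

lemma measurableSet_nearMiss (hT : MeasurableSet T) (y : X) :
    MeasurableSet (nearMiss W z T y) := by
  let ξ : Config X → Config X := fun η => W.union (η.restrict (closedBall y (1 / 10)))
  have hξ : Measurable ξ := Config.measurable_union.comp
    (measurable_const.prodMk (Config.measurable_restrict measurableSet_closedBall))
  have hcluster : MeasurableSet {x : Config X × X | x.2 ∈ clusterAt z (ξ x.1).1} :=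
    measurableSet_mem_clusterAt (hξ.comp measurable_fst) measurable_snd measurable_const
  have hexists : ∀ B, MeasurableSet B → MeasurableSet {η | (clusterAt z (ξ η).1 ∩ B).Nonempty} :=
    fun B hB => by
      convert measurableSet_exists_mem hξ (E := fun η c => c ∈ clusterAt z (ξ η).1 ∩ B)
        (hcluster.inter (measurable_snd hB)) using 1
      ext η
      exact ⟨fun ⟨c, hc⟩ => ⟨c, clusterAt_subset hc.1, hc⟩, fun ⟨c, _, hc⟩ => ⟨c, hc⟩⟩
  have hdisjoint : MeasurableSet {η | Disjoint (clusterAt z (ξ η).1) T} := by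
    simpa only [← not_disjoint_iff_nonempty_inter, compl_ofPred, not_not] using (hexists T hT).compl
  exact hdisjoint.inter
    (.inter (.const _) (hexists (closedBall y (19 / 10)) measurableSet_closedBall))

lemma HasPoissonVoids.measure_compl_voidEvent_inter_nearMiss {ν : Measure X}
    {Q : Measure (Config X)} (hQ : HasPoissonVoids ν Q) (hT : MeasurableSet T) (y : X) :
    Q ((voidEvent (closedBall y (1 / 10)))ᶜ ∩ nearMiss W z T y) =
      Q (voidEvent (closedBall y (1 / 10)))ᶜ * Q (nearMiss W z T y) := by
  refine hQ.measure_inter_eq_mul (S := closedBall y (1 / 10)) measurableSet_closedBall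
    (measurableSet_voidEvent measurableSet_closedBall).compl (measurableSet_nearMiss hT y)
    (fun s t => ?_) (fun s t => ?_)
  · rw [mem_compl_iff, voidEvent, mem_ofPred_eq, Config.splice_inter_self]
    rfl
  · rw [nearMiss, mem_ofPred_eq, Config.restrict_splice]
    rfl

lemma HasPoissonVoids.tsum_measure_nearMiss_ne_top {ν : Measure X} {Q : Measure (Config X)}
    (hQ : HasPoissonVoids ν Q) (hT : MeasurableSet T) {Y : Set X}
    (hY : Y.Pairwise fun y y' => 1 / 4 < dist y y') {m : ℝ≥0∞} (hm : m ≠ 0)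
    (hball : ∀ y ∈ Y, ν (closedBall y (1 / 10)) = m) :
    ∑' y : Y, Q (nearMiss W z T y) ≠ ⊤ := by
  have := hQ.isProbabilityMeasure
  rcases Y.eq_empty_or_nonempty with rfl | ⟨o, ho⟩
  · simp
  set v := Q (voidEvent (closedBall o (1 / 10)))ᶜ
  have hv : v ≠ 0 := hQ.measure_compl_voidEvent_ne_zero measurableSet_closedBall
    isBounded_closedBall (by rwa [hball o ho])
  have hnonvoid : ∀ y : Y, Q (voidEvent (closedBall y.1 (1 / 10)))ᶜ = v := fun y => by
    simp only [v, prob_compl_eq_one_sub (measurableSet_voidEvent measurableSet_closedBall),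
      hQ.measure_voidEvent _ measurableSet_closedBall isBounded_closedBall, hball _ y.2,
      hball _ ho]
  have hle : v * ∑' y : Y, Q (nearMiss W z T y) ≤ 1 := by
    calc v * ∑' y : Y, Q (nearMiss W z T y)
        = ∑' y : Y, Q ((voidEvent (closedBall y.1 (1 / 10)))ᶜ ∩ nearMiss W z T y) := by
          simp only [hQ.measure_compl_voidEvent_inter_nearMiss hT, hnonvoid, ENNReal.tsum_mul_left]
      _ ≤ Q (⋃ y : Y, (voidEvent (closedBall y.1 (1 / 10)))ᶜ ∩ nearMiss W z T y) :=
          tsum_meas_le_meas_iUnion_of_disjoint Q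
            (fun y => (measurableSet_voidEvent measurableSet_closedBall).compl.inter
              (measurableSet_nearMiss hT y))
            fun y y' hne => disjoint_nearMiss (hY y.2 y'.2 (Subtype.coe_ne_coe.2 hne))
      _ ≤ 1 := prob_le_one
  intro htop
  rw [htop, ENNReal.mul_top hv] at hle
  exact ENNReal.one_ne_top (top_le_iff.1 hle)

lemma HasPoissonVoids.ae_finite_approached {ν : Measure X} {Q : Measure (Config X)}
    (hQ : HasPoissonVoids ν Q) (hT : MeasurableSet T) {Y : Set X} (hYc : Y.Countable)
    (hY : Y.Pairwise fun y y' => 1 / 4 < dist y y') {m : ℝ≥0∞} (hm : m ≠ 0)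
    (hball : ∀ y ∈ Y, ν (closedBall y (1 / 10)) = m) :
    ∀ᵐ η ∂Q, Disjoint (clusterAt z (W.union η).1) T → {y ∈ Y | closedBall y (1 / 10) ⊆ T ∧
      ∃ c ∈ clusterAt z (W.union η).1, dist c y ≤ 19 / 10}.Finite := by
  have := hYc.to_subtype
  have hsum := hQ.tsum_measure_nearMiss_ne_top (W := W) (z := z) hT hY hm hball
  filter_upwards [ae_finite_setOfPred_mem hsum] with η hfin hdisj
  refine (hfin.image Subtype.val).subset ?_
  rintro y ⟨hyY, hyT, c, hc, hcy⟩
  exact ⟨⟨y, hyY⟩, mem_nearMiss_of_disjoint hdisj hyT hc hcy, rfl⟩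

end Sprinkling

section Contacts

variable {X : Type*} [MetricSpace X]

/-- The points of the cluster of `s` at `z` within distance `L` of an unbounded cluster of `w`. For
`w ⊆ s` and `L = 2` a contact links the two clusters. -/
def contacts (z : X) (w s : Set X) (L : ℝ) : Set X :=
  {c ∈ clusterAt z s | ∃ p ∈ unboundedPart w, dist c p ≤ L}

/-- The points beyond distance `m` of `z` and within distance `L` of an unbounded cluster of `w`. -/
def farNeighborhood (z : X) (w : Set X) (L m : ℝ) : Set X :=
  {x | m < dist x z} ∩ ⋃ p ∈ unboundedPart w, closedBall p L

lemma measurableSet_farNeighborhood [MeasurableSpace X] [OpensMeasurableSpace X] (z : X)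
    (w : Config X) (L m : ℝ) : MeasurableSet (farNeighborhood z w.1 L m) :=
  ((isOpen_lt continuous_const (continuous_id.dist continuous_const)).measurableSet).inter
    (.biUnion (w.countable.mono unboundedPart_subset) fun _ _ => measurableSet_closedBall)

lemma disjoint_farNeighborhood {z : X} {w s : Set X} {L m : ℝ}
    (h : contacts z w s L ⊆ closedBall z m) : Disjoint (clusterAt z s) (farNeighborhood z w L m) :=
  Set.disjoint_left.2 fun c hc ⟨hcz, hcL⟩ => by
    obtain ⟨p, hp, hcp⟩ := mem_iUnion₂.1 hcL
    exact (mem_closedBall.1 (h ⟨hc, p, hp, hcp⟩)).not_gt hcz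

variable [ProperSpace X] [PreconnectedSpace X]

/- A point of a geodesic from a contact `c` to the unbounded cluster is close to `c` but well inside
the `L`-neighbourhood of that cluster. -/
lemma PointSymmetric.exists_mem_dist_contact_le (hX : PointSymmetric X) {z : X} {w s : Set X}
    {L m : ℝ} (hL : 2 ≤ L) (h : contacts z w s L ⊆ closedBall z m) {Y : Set X}
    (hY : ∀ x, ∃ y ∈ Y, dist x y ≤ 1 / 4) {c : X} (hc : c ∈ contacts z w s (L + 1))
    (hcz : m + 2 < dist c z) :
    ∃ y ∈ Y, closedBall y (1 / 10) ⊆ farNeighborhood z w L m ∧ dist c y ≤ 19 / 10 := by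
  obtain ⟨hcs, p, hp, hcp⟩ := hc
  have hLcp : L < dist c p := by
    by_contra! hle
    linarith [mem_closedBall.1 (h ⟨hcs, p, hp, hle⟩)]
  obtain ⟨g, hcg, hgp⟩ := hX.exists_dist_eq_and_dist_eq c p (t := 3 / 2) (by norm_num) (by linarith)
  obtain ⟨y, hyY, hgy⟩ := hY g
  have hcy : dist c y ≤ 7 / 4 := by linarith [dist_triangle c g y]
  refine ⟨y, hyY, fun x hx => ⟨?_, mem_biUnion hp ?_⟩, by linarith⟩
  · change m < dist x z
    linarith [dist_triangle c y z, dist_triangle_left y z x, mem_closedBall.1 hx]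
  · rw [mem_closedBall]
    linarith [dist_triangle x y p, dist_triangle_left y p g, mem_closedBall.1 hx]

variable [MeasurableSpace X] [BorelSpace X] {ν : Measure X} {Q : Measure (Config X)}

lemma HasPoissonVoids.ae_not_isBounded_contacts_of_add_one (hQ : HasPoissonVoids ν Q)
    (hX : PointSymmetric X) (hν : ∀ γ : X ≃ᵢ X, ν.map γ = ν)
    (hpos : ∀ x, ν (closedBall x (1 / 10)) ≠ 0) (W : Config X) (z : X) {L : ℝ} (hL : 2 ≤ L) :
    ∀ᵐ η ∂Q, ¬IsBounded (contacts z W.1 (W.union η).1 (L + 1)) →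
      ¬IsBounded (contacts z W.1 (W.union η).1 L) := by
  obtain ⟨Y, hYsep, hYdense⟩ := exists_config_separated_dense (X := X) (r := 1 / 4) (by norm_num)
  have hfinite : ∀ᵐ η ∂Q, ∀ m : ℕ,
      Disjoint (clusterAt z (W.union η).1) (farNeighborhood z W.1 L m) →
      {y ∈ Y.1 | closedBall y (1 / 10) ⊆ farNeighborhood z W.1 L m ∧
        ∃ c ∈ clusterAt z (W.union η).1, dist c y ≤ 19 / 10}.Finite :=
    ae_all_iff.2 fun m => hQ.ae_finite_approached (measurableSet_farNeighborhood z W L m)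
      Y.countable hYsep (hpos z) fun y _ => hX.measure_closedBall_eq hν y z _
  filter_upwards [hfinite] with η hη
  contrapose!
  intro hbdd
  obtain ⟨R, hR⟩ := hbdd.subset_closedBall z
  obtain ⟨m, hm⟩ := exists_nat_ge R
  have hsub := hR.trans (closedBall_subset_closedBall hm)
  obtain ⟨M, hM⟩ := (hη m (disjoint_farNeighborhood hsub)).isBounded.subset_closedBall z
  refine isBounded_closedBall (x := z) (r := max (m + 2) (M + 2)) |>.subset fun c hc => ?_
  rw [mem_closedBall, le_max_iff, or_iff_not_imp_left, not_le]
  intro hcz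
  obtain ⟨y, hyY, hyT, hcy⟩ := hX.exists_mem_dist_contact_le hL hsub hYdense hc hcz
  have hyz := mem_closedBall.1 (hM ⟨hyY, hyT, c, hc.1, hcy⟩)
  linarith [dist_triangle c y z]

lemma HasPoissonVoids.ae_not_isBounded_contacts_two (hQ : HasPoissonVoids ν Q)
    (hX : PointSymmetric X) (hν : ∀ γ : X ≃ᵢ X, ν.map γ = ν)
    (hpos : ∀ x, ν (closedBall x (1 / 10)) ≠ 0) (W : Config X) (z : X) :
    ∀ᵐ η ∂Q, ∀ n : ℕ, ¬IsBounded (contacts z W.1 (W.union η).1 (2 + n)) →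
      ¬IsBounded (contacts z W.1 (W.union η).1 2) := by
  have hstep : ∀ᵐ η ∂Q, ∀ n : ℕ, ¬IsBounded (contacts z W.1 (W.union η).1 (2 + n + 1)) →
      ¬IsBounded (contacts z W.1 (W.union η).1 (2 + n)) :=
    ae_all_iff.2 fun n => hQ.ae_not_isBounded_contacts_of_add_one hX hν hpos W z (by simp)
  filter_upwards [hstep] with η hη n
  induction n with
  | zero => simp
  | succ n ih =>
    rw [Nat.cast_succ, ← add_assoc]
    exact fun h => ih (hη n h)

end Contacts

/-! ### Exploration -/

section IsometryImage

variable {X : Type*} [MetricSpace X] {s : Set X} {p q : X}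

lemma Linked.image (g : X ≃ᵢ X) (h : Linked s p q) : Linked (g '' s) (g p) (g q) := by
  induction h with
  | refl => exact .refl _ _
  | tail _ hbc ih =>
    exact ih.tail ⟨mem_image_of_mem g hbc.1, by rw [g.isometry.dist_eq]; exact hbc.2⟩

lemma linked_image_iff (g : X ≃ᵢ X) : Linked (g '' s) (g p) (g q) ↔ Linked s p q := by
  refine ⟨fun h => ?_, fun h => h.image g⟩
  have hsymm := h.image g.symm
  rwa [image_image, g.symm_apply_apply, g.symm_apply_apply, image_congr
    (fun x _ => g.symm_apply_apply x), image_id'] at hsymm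

lemma cluster_image (g : X ≃ᵢ X) (s : Set X) (p : X) :
    cluster (g '' s) (g p) = g '' cluster s p := by
  ext x
  obtain ⟨q, rfl⟩ := g.surjective x
  rw [g.injective.mem_set_image]
  exact and_congr g.injective.mem_set_image (linked_image_iff g)

lemma isBounded_image_iff (g : X ≃ᵢ X) (A : Set X) : IsBounded (g '' A) ↔ IsBounded A :=
  ⟨fun h => by
    rw [← preimage_image_eq A g.injective]
    exact g.isometry.antilipschitz.isBounded_preimage h, g.isometry.lipschitz.isBounded_image⟩

lemma unboundedPart_image (g : X ≃ᵢ X) (s : Set X) :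
    unboundedPart (g '' s) = g '' unboundedPart s := by
  ext x
  obtain ⟨q, rfl⟩ := g.surjective x
  rw [g.injective.mem_set_image]
  refine and_congr g.injective.mem_set_image (not_congr ?_)
  rw [cluster_image, isBounded_image_iff]

end IsometryImage

section Deletion

variable {X : Type*} [MetricSpace X]

lemma cluster_subset_cluster_inter_compl {s B : Set X} {q : X} (hq : q ∈ s ∩ Bᶜ)
    (hfar : ∀ b ∈ cluster (s ∩ Bᶜ) q, ∀ x ∈ B, 2 < dist b x) :
    cluster s q ⊆ cluster (s ∩ Bᶜ) q := by
  rintro p ⟨-, h⟩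
  induction h with
  | refl => exact mem_cluster_self hq
  | tail _ hbc ih =>
    have hc := And.intro hbc.1 fun hcB => (hfar _ ih _ hcB).not_ge hbc.2
    exact ⟨hc, ih.2.step hc hbc.2⟩

lemma Linked.exists_linked_inter_compl {t S : Set X} {q k : X} (h : Linked t q k) (hq : q ∈ t)
    (hk : k ∉ S) :
    ∃ r ∈ t ∩ Sᶜ, (r = q ∨ ∃ x ∈ S, dist x r ≤ 2) ∧ Linked (t ∩ Sᶜ) r k := by
  induction h with
  | refl => exact ⟨q, ⟨hq, hk⟩, .inl rfl, .refl _ _⟩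
  | @tail b c _ hbc ih =>
    by_cases hb : b ∈ S
    · exact ⟨c, ⟨hbc.1, hk⟩, .inr ⟨b, hb, hbc.2⟩, .refl _ _⟩
    · obtain ⟨r, hr, hrq, hrb⟩ := ih hb
      exact ⟨r, hr, hrq, hrb.step ⟨hbc.1, hk⟩ hbc.2⟩

/- Off `S`, the cluster of `q` consists of the finitely many clusters that start at `q` or next to
`S`, so one of them is unbounded. -/
lemma exists_mem_unboundedPart_restrict (t : Config X) {S : Set X} (hS : IsBounded S) {q : X}
    (hq : q ∈ unboundedPart t.1) :
    ∃ r ∈ unboundedPart (t.restrict S).1, r = q ∨ ∃ x ∈ S, dist x r ≤ 2 := by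
  by_contra! hbounded
  let A : Set X := {r ∈ (t.restrict S).1 | r = q ∨ ∃ x ∈ S, dist x r ≤ 2}
  have hA : A.Finite := by
    refine (t.2 (insert q (cthickening 2 S)) (isBounded_insert.2 hS.cthickening)).subset ?_
    rintro r ⟨hr, rfl | ⟨x, hx, hxr⟩⟩
    · exact ⟨hr.1, mem_insert _ _⟩
    · exact ⟨hr.1, .inr (closedBall_subset_cthickening hx 2 (mem_closedBall'.2 hxr))⟩
  have hcover : cluster t.1 q ⊆ S ∪ ⋃ r ∈ A, cluster (t.restrict S).1 r := by
    rintro k ⟨hkt, hqk⟩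
    by_cases hkS : k ∈ S
    · exact .inl hkS
    · obtain ⟨r, hr, hrq, hrk⟩ := hqk.exists_linked_inter_compl hq.1 hkS
      exact .inr (mem_biUnion ⟨hr, hrq⟩ ⟨⟨hkt, hkS⟩, hrk⟩)
  refine hq.2 ((hS.union ((isBounded_biUnion hA).2 fun r hr => ?_)).subset hcover)
  by_contra hunb
  have hr' := hbounded r ⟨hr.1, hunb⟩
  exact hr.2.elim hr'.1 fun ⟨x, hx, hxr⟩ => (hr'.2 x hx).not_ge hxr

end Deletion

section Visibility

variable {X : Type*} [MetricSpace X]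

/-- The event that no point of `A` lies in an unbounded cluster. -/
def missEvent (A : Set X) : Set (Config X) := {s | Disjoint (unboundedPart s.1) A}

/-- The event that some bounded cluster leads from the `R`-ball around `y` out of the `r`-ball. It
has small probability for large `r`. -/
def longClusterEvent (y : X) (R r : ℝ) : Set (Config X) :=
  {s | ∃ q ∈ s.1, dist q y ≤ R ∧ IsBounded (cluster s.1 q) ∧ ¬cluster s.1 q ⊆ closedBall y r}

lemma preimage_mapIso_missEvent (g : X ≃ᵢ X) (y : X) (R : ℝ) :
    Config.mapIso g ⁻¹' missEvent (closedBall (g y) R) = missEvent (closedBall y R) := by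
  ext s
  change Disjoint (unboundedPart (g '' s.1)) (closedBall (g y) R) ↔ _
  rw [unboundedPart_image, ← g.image_closedBall, disjoint_image_iff g.injective]
  rfl

lemma preimage_mapIso_longClusterEvent (g : X ≃ᵢ X) (y : X) (R r : ℝ) :
    Config.mapIso g ⁻¹' longClusterEvent (g y) R r = longClusterEvent y R r := by
  ext s
  change (∃ q ∈ g '' s.1, dist q (g y) ≤ R ∧ IsBounded (cluster (g '' s.1) q) ∧
    ¬cluster (g '' s.1) q ⊆ closedBall (g y) r) ↔ _
  simp only [exists_mem_image, g.isometry.dist_eq, cluster_image, isBounded_image_iff,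
    ← g.image_closedBall, image_subset_image_iff g.injective]
  rfl

lemma antitone_missEvent : Antitone (missEvent (X := X)) := fun _ _ hA _ h => h.mono_right hA

lemma antitone_longClusterEvent (y : X) (R : ℝ) : Antitone fun r : ℝ => longClusterEvent y R r :=
  fun _ _ hr _ ⟨q, hq, hqy, hb, hlong⟩ =>
    ⟨q, hq, hqy, hb, fun h => hlong (h.trans (closedBall_subset_closedBall hr))⟩

lemma iInter_longClusterEvent (y : X) (R : ℝ) : ⋂ r : ℕ, longClusterEvent y R r = ∅ := by
  refine eq_empty_of_forall_notMem fun s hs => ?_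
  have hfin : {q ∈ s.1 ∩ closedBall y R | IsBounded (cluster s.1 q)}.Finite :=
    (s.2 _ isBounded_closedBall).subset (sep_subset _ _)
  obtain ⟨M, hM⟩ := ((isBounded_biUnion hfin).2 fun _ hq => hq.2).subset_closedBall y
  obtain ⟨n, hn⟩ := exists_nat_ge M
  obtain ⟨q, hq, hqy, hb, hlong⟩ := mem_iInter.1 hs n
  exact hlong (((subset_biUnion_of_mem (u := fun q => cluster s.1 q)
    (show q ∈ {q ∈ s.1 ∩ closedBall y R | IsBounded (cluster s.1 q)} from ⟨⟨hq, hqy⟩, hb⟩)).trans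
      hM).trans (closedBall_subset_closedBall hn))

lemma preimage_restrict_missEvent_subset {y z : X} {R r m : ℝ} (hR : 0 ≤ R) (hr : 0 ≤ r)
    (hyz : r + R + m + 2 < dist y z) :
    Config.restrict (closedBall z m) ⁻¹' missEvent (closedBall y R) ⊆
      missEvent (closedBall y R) ∪
        Config.restrict (closedBall z m) ⁻¹' longClusterEvent y R r := by
  intro s hs
  refine or_iff_not_imp_left.2 fun hmiss => ?_
  obtain ⟨q, hq, hqy⟩ := not_disjoint_iff.1 hmiss
  have hqB : q ∈ s.1 ∩ (closedBall z m)ᶜ := ⟨hq.1, fun hqz => by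
    linarith [dist_triangle_left y z q, mem_closedBall.1 hqy, mem_closedBall.1 hqz]⟩
  have hbounded : IsBounded (cluster (s.1 ∩ (closedBall z m)ᶜ) q) := by
    by_contra hunb
    exact Set.disjoint_left.1 hs ⟨hqB, hunb⟩ hqy
  refine ⟨q, hqB, hqy, hbounded, fun hshort => hq.2 (hbounded.subset ?_)⟩
  refine cluster_subset_cluster_inter_compl hqB fun b hb x hx => ?_
  linarith [dist_triangle_left y z b, dist_triangle b x z, mem_closedBall.1 (hshort hb),
    mem_closedBall.1 hx]

lemma preimage_restrict_missEvent_union_subset {S : Set X} (hS : IsBounded S) (A B : Set X) :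
    Config.restrict S ⁻¹' missEvent (A ∪ Bᶜ ∩ cthickening 2 S) ⊆
      Config.restrict B ⁻¹' missEvent A := by
  intro s hs
  refine Set.disjoint_left.2 fun q hq hqA => ?_
  obtain ⟨r, hr, hrq⟩ := exists_mem_unboundedPart_restrict (s.restrict B) hS hq
  have hsub : ((s.restrict B).restrict S).1 ⊆ (s.restrict S).1 := fun x hx => ⟨hx.1.1, hx.2⟩
  refine Set.disjoint_left.1 hs (unboundedPart_mono hsub hr) ?_
  rcases hrq with rfl | ⟨x, hx, hxr⟩
  · exact .inl hqA
  · exact .inr ⟨hr.1.1.2, closedBall_subset_cthickening hx 2 (mem_closedBall'.2 hxr)⟩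

variable [MeasurableSpace X]

lemma exists_nat_measure_lt {Ω : Type*} [MeasurableSpace Ω] {P : Measure Ω} [IsFiniteMeasure P]
    {A : ℕ → Set Ω} (hA : ∀ n, MeasurableSet (A n)) (hanti : Antitone A) (h0 : P (⋂ n, A n) = 0)
    {ε : ℝ≥0∞} (hε : ε ≠ 0) : ∃ n, P (A n) < ε := by
  have hlim := tendsto_measure_iInter_atTop (μ := P) (fun n => (hA n).nullMeasurableSet) hanti
    ⟨0, measure_ne_top _ _⟩
  rw [h0] at hlim
  exact (hlim.eventually (gt_mem_nhds hε.bot_lt)).exists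

lemma HasPoissonVoids.measure_voidEvent_ne_zero {ν : Measure X} {P : Measure (Config X)}
    (h : HasPoissonVoids ν P) {B : Set X} (hB : MeasurableSet B) (hbdd : IsBounded B) :
    P (voidEvent B) ≠ 0 := by
  rw [h.measure_voidEvent B hB hbdd]
  exact (ENNReal.ofReal_pos.2 (Real.exp_pos _)).ne'

variable [OpensMeasurableSpace X] [SecondCountableTopology X] {ν : Measure X}
  {P : Measure (Config X)}

lemma measurableSet_missEvent {A : Set X} (hA : MeasurableSet A) :
    MeasurableSet (missEvent A) := by
  have hset : missEvent A = {s : Config X | ∃ q ∈ s.1, q ∈ unboundedPart s.1 ∧ q ∈ A}ᶜ := by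
    ext s
    simp only [missEvent, Set.disjoint_left, mem_compl_iff, mem_ofPred_eq, not_exists, not_and]
    exact forall_congr' fun q => ⟨fun h _ => h, fun h hq => h hq.1 hq⟩
  rw [hset]
  refine MeasurableSet.compl (measurableSet_exists_mem measurable_id ?_)
  exact (measurableSet_mem_unboundedPart measurable_fst measurable_snd).inter (measurable_snd hA)

lemma measurableSet_longClusterEvent (y : X) (R r : ℝ) :
    MeasurableSet (longClusterEvent y R r) := by
  have hbounded : MeasurableSet {x : Config X × X | IsBounded (cluster x.1.1 x.2)} := by
    have := (measurableSet_not_isBounded_cluster (X := X) measurable_fst measurable_snd).compl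
    simpa only [compl_ofPred, not_not] using this
  have hlong : MeasurableSet {x : Config X × X | ¬cluster x.1.1 x.2 ⊆ closedBall y r} := by
    have hset : {x : Config X × X | ¬cluster x.1.1 x.2 ⊆ closedBall y r} =
        {x | ∃ b ∈ x.1.1, Linked x.1.1 x.2 b ∧ r < dist b y} := by
      ext x
      simp only [not_subset, mem_closedBall, not_le, mem_ofPred_eq, cluster, and_assoc]
    rw [hset]
    exact measurableSet_exists_mem measurable_fst
      ((measurableSet_linked measurable_fst.fst measurable_fst.snd measurable_snd).inter
        (measurableSet_lt measurable_const (measurable_snd.dist measurable_const)))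
  exact measurableSet_exists_mem measurable_id
    ((measurableSet_le (measurable_snd.dist measurable_const) measurable_const).inter
      (hbounded.inter hlong))

lemma exists_measure_missEvent_lt [IsFiniteMeasure P] (y : X)
    (hP : ∀ᵐ s ∂P, (unboundedPart s.1).Nonempty) {ε : ℝ≥0∞} (hε : ε ≠ 0) :
    ∃ R : ℕ, P (missEvent (closedBall y R)) < ε := by
  refine exists_nat_measure_lt (A := fun R : ℕ => missEvent (closedBall y R))
    (fun R => measurableSet_missEvent measurableSet_closedBall)
    (fun _ _ hR => antitone_missEvent (closedBall_subset_closedBall (Nat.cast_le.2 hR)))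
    (measure_mono_null ?_ hP) hε
  rintro s hs ⟨p, hp⟩
  obtain ⟨R, hR⟩ := exists_nat_ge (dist p y)
  exact Set.disjoint_left.1 (mem_iInter.1 hs R) hp hR

lemma exists_measure_longClusterEvent_lt [IsFiniteMeasure P] (y : X) (R : ℝ) {ε : ℝ≥0∞}
    (hε : ε ≠ 0) : ∃ r : ℕ, P (longClusterEvent y R r) < ε :=
  exists_nat_measure_lt (fun r => measurableSet_longClusterEvent y R r)
    ((antitone_longClusterEvent y R).comp_monotone Nat.mono_cast)
    (by rw [iInter_longClusterEvent, measure_empty]) hε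

namespace HasPoissonVoids

lemma measure_preimage_restrict_le_div (h : HasPoissonVoids ν P) {B : Set X}
    (hB : MeasurableSet B) (hbdd : IsBounded B) {E : Set (Config X)} (hE : MeasurableSet E) :
    P (Config.restrict B ⁻¹' E) ≤ P E / P (voidEvent B) := by
  have := h.isProbabilityMeasure
  rw [ENNReal.le_div_iff_mul_le (.inl (h.measure_voidEvent_ne_zero hB hbdd))
    (.inl (measure_ne_top _ _)), mul_comm, ← h.measure_inter_eq_mul hB (measurableSet_voidEvent hB)
    (Config.measurable_restrict hB hE) (fun s t => ?_) (fun s t => ?_)]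
  · refine measure_mono ?_
    rintro s ⟨hvoid, hs⟩
    have hrestrict : s.restrict B = s :=
      Subtype.ext (inter_eq_left.2 (disjoint_iff_inter_eq_empty.2 hvoid).subset_compl_right)
    rwa [mem_preimage, hrestrict] at hs
  · rw [voidEvent, mem_ofPred_eq, Config.splice_inter_self]
    rfl
  · rw [mem_preimage, Config.restrict_splice, mem_preimage]

lemma measure_preimage_restrict_missEvent_le (h : HasPoissonVoids ν P) {y z : X} {R r m : ℝ}
    (hR : 0 ≤ R) (hr : 0 ≤ r) (hyz : r + R + m + 2 < dist y z) :
    P (Config.restrict (closedBall z m) ⁻¹' missEvent (closedBall y R)) ≤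
      P (missEvent (closedBall y R)) +
        P (longClusterEvent y R r) / P (voidEvent (closedBall z m)) :=
  calc P (Config.restrict (closedBall z m) ⁻¹' missEvent (closedBall y R))
    _ ≤ P (missEvent (closedBall y R)) +
          P (Config.restrict (closedBall z m) ⁻¹' longClusterEvent y R r) :=
        (measure_mono (preimage_restrict_missEvent_subset hR hr hyz)).trans (measure_union_le _ _)
    _ ≤ _ := by
        gcongr
        exact h.measure_preimage_restrict_le_div measurableSet_closedBall isBounded_closedBall
          (measurableSet_longClusterEvent y R r)

end HasPoissonVoids

end Visibility

section Exploration

variable {X : Type*} [MetricSpace X]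

lemma clusterAt_eq_of_inter_eq {z : X} {s t S : Set X} (hz : closedBall z 1 ⊆ S)
    (hS : ∀ c ∈ clusterAt z s, closedBall c 2 ⊆ S) (hst : s ∩ S = t ∩ S) :
    clusterAt z s = clusterAt z t := by
  refine Subset.antisymm (clusterAt_subset_clusterAt_of_subset fun c hc => ?_) ?_
  · exact (hst.le ⟨clusterAt_subset hc, hS c hc (mem_closedBall_self zero_le_two)⟩).1
  · rintro c ⟨p, hp, hzp, hpc⟩
    induction hpc with
    | refl =>
      exact ⟨p, (hst.ge ⟨hp, hz (mem_closedBall'.2 hzp)⟩).1, hzp, .refl _ _⟩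
    | @tail a b _ hab ih =>
      have hbS : b ∈ S := hS a ih (mem_closedBall'.2 hab.2)
      exact mem_clusterAt_of_dist_le ih (hst.ge ⟨hab.1, hbS⟩).1 hab.2

lemma exists_mem_clusterAt_inter_closedBall {z : X} {s : Set X}
    (hs : ¬IsBounded (clusterAt z s)) {n : ℝ} (hn : 1 ≤ n) :
    ∃ c ∈ clusterAt z (s ∩ closedBall z n), n - 2 < dist c z := by
  by_contra! hnear
  refine hs (isBounded_closedBall.subset (?_ : clusterAt z s ⊆ closedBall z n))
  suffices hsub : clusterAt z s ⊆ clusterAt z (s ∩ closedBall z n) from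
    fun c hc => (clusterAt_subset (hsub hc)).2
  rintro c ⟨p, hp, hzp, hpc⟩
  induction hpc with
  | refl => exact ⟨p, ⟨hp, mem_closedBall'.2 (hzp.trans hn)⟩, hzp, .refl _ _⟩
  | @tail a b _ hab ih =>
    refine mem_clusterAt_of_dist_le ih ⟨hab.1, mem_closedBall.2 ?_⟩ hab.2
    linarith [dist_triangle_left b z a, hnear a ih, hab.2]

/-- The cluster at `z` of the superposition of `s` and `W`, explored inside the ball of radius `n`
around `z`. -/
def exploredCluster (W : Config X) (z : X) (n : ℝ) (s : Config X) : Set X :=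
  clusterAt z ((s.union W).1 ∩ closedBall z n)

/-- The sites of the net `Y` whose `1 / 4`-balls suffice to read off the explored cluster. -/
def exploredSites (Y W : Config X) (z : X) (n : ℝ) (s : Config X) : Set X :=
  {y ∈ Y.1 | dist y z ≤ 5 / 4 ∨ ∃ c ∈ exploredCluster W z n s, dist c y ≤ 9 / 4}

variable {Y W s t : Config X} {z : X} {n : ℝ}

lemma exploredCluster_subset_clusterAt : exploredCluster W z n s ⊆ clusterAt z (s.union W).1 :=
  clusterAt_mono inter_subset_left

lemma closedBall_subset_cthickening_exploredSites (hY : ∀ x, ∃ y ∈ Y.1, dist x y ≤ 1 / 4) :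
    closedBall z 1 ⊆ cthickening (1 / 4) (exploredSites Y W z n s) := fun p hp => by
  obtain ⟨y, hy, hpy⟩ := hY p
  refine mem_cthickening_of_dist_le p y _ _ ⟨hy, .inl ?_⟩ hpy
  linarith [dist_triangle_left y z p, mem_closedBall.1 hp]

lemma closedBall_exploredCluster_subset_cthickening_exploredSites
    (hY : ∀ x, ∃ y ∈ Y.1, dist x y ≤ 1 / 4) {c : X} (hc : c ∈ exploredCluster W z n s) :
    closedBall c 2 ⊆ cthickening (1 / 4) (exploredSites Y W z n s) := fun p hp => by
  obtain ⟨y, hy, hpy⟩ := hY p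
  refine mem_cthickening_of_dist_le p y _ _ ⟨hy, .inr ⟨c, hc, ?_⟩⟩ hpy
  linarith [dist_triangle_left c y p, mem_closedBall.1 hp]

lemma exploredSites_eq_of_inter_eq (hY : ∀ x, ∃ y ∈ Y.1, dist x y ≤ 1 / 4)
    (hst : s.1 ∩ cthickening (1 / 4) (exploredSites Y W z n s) =
      t.1 ∩ cthickening (1 / 4) (exploredSites Y W z n s)) :
    exploredSites Y W z n s = exploredSites Y W z n t := by
  have hcluster : exploredCluster W z n s = exploredCluster W z n t := by
    refine clusterAt_eq_of_inter_eq (closedBall_subset_cthickening_exploredSites hY)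
      (fun c hc => closedBall_exploredCluster_subset_cthickening_exploredSites hY hc) ?_
    rw [inter_right_comm, inter_right_comm (t.union W).1]
    congr 1
    change (s.1 ∪ W.1) ∩ _ = (t.1 ∪ W.1) ∩ _
    rw [union_inter_distrib_right, union_inter_distrib_right, hst]
  rw [exploredSites, exploredSites, hcluster]

lemma exploredSites_splice_eq_iff (hY : ∀ x, ∃ y ∈ Y.1, dist x y ≤ 1 / 4) (J : Set X)
    (s t : Config X) :
    exploredSites Y W z n (Config.splice (cthickening (1 / 4) J) s t) = J ↔
      exploredSites Y W z n s = J := by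
  have hagree := Config.splice_inter_self (cthickening (1 / 4) J) s t
  refine ⟨fun hJ => ?_, fun hJ => ?_⟩
  · exact (exploredSites_eq_of_inter_eq hY (by rwa [hJ])).symm.trans hJ
  · exact (exploredSites_eq_of_inter_eq hY (by rw [hJ, hagree])).symm.trans hJ

lemma finite_exploredSites : (exploredSites Y W z n s).Finite := by
  refine (Y.2 (closedBall z (5 / 4) ∪ closedBall z (n + 9 / 4))
    (isBounded_closedBall.union isBounded_closedBall)).subset ?_
  rintro y ⟨hy, hyz | ⟨c, hc, hcy⟩⟩
  · exact ⟨hy, .inl hyz⟩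
  · refine ⟨hy, .inr (mem_closedBall.2 ?_)⟩
    linarith [dist_triangle_left y z c, mem_closedBall.1 (clusterAt_subset hc).2]

lemma exists_mem_exploredSites_lt_dist (hY : ∀ x, ∃ y ∈ Y.1, dist x y ≤ 1 / 4) (hn : 1 ≤ n)
    (hs : ¬IsBounded (clusterAt z (s.union W).1)) :
    ∃ y ∈ exploredSites Y W z n s, n - 9 / 4 < dist y z := by
  obtain ⟨c, hc, hcz⟩ := exists_mem_clusterAt_inter_closedBall hs hn
  obtain ⟨y, hy, hcy⟩ := hY c
  exact ⟨y, ⟨hy, .inr ⟨c, hc, hcy.trans (by norm_num)⟩⟩, by linarith [dist_triangle c y z]⟩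

lemma dist_le_of_contacts_subset {m L : ℝ} (hm : 0 ≤ m)
    (hcontacts : contacts z s.1 (s.union W).1 L ⊆ closedBall z m) {y q : X}
    (hy : y ∈ exploredSites Y W z n s) (hq : q ∈ unboundedPart s.1) (hqy : dist q y + 9 / 4 ≤ L) :
    dist y z ≤ m + 9 / 4 := by
  rcases hy.2 with hyz | ⟨c, hc, hcy⟩
  · linarith
  have hcz := hcontacts ⟨exploredCluster_subset_clusterAt hc, q, hq,
    by linarith [dist_triangle_right c q y]⟩
  linarith [dist_triangle_left y z c, mem_closedBall.1 hcz]

lemma mem_missEvent_of_contacts_subset {m : ℝ} {R : ℕ} (hm : 0 ≤ m)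
    (hcontacts : contacts z s.1 (s.union W).1 (R + 5) ⊆ closedBall z m) {y : X}
    (hy : y ∈ exploredSites Y W z n s) (hyz : m + 9 / 4 < dist y z) :
    s ∈ missEvent (closedBall y R ∪
      (closedBall z (m + 5))ᶜ ∩ cthickening 2 (cthickening (1 / 4) (exploredSites Y W z n s))) := by
  refine Set.disjoint_left.2 fun q hq hqA => ?_
  rcases hqA with hqy | ⟨hqz, hqJ⟩
  · exact hyz.not_ge (dist_le_of_contacts_subset hm hcontacts hy hq
      (by linarith [mem_closedBall.1 hqy]))
  · have hqJ' := cthickening_cthickening_subset (by norm_num) (by norm_num) _ hqJ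
    rw [finite_exploredSites.isCompact.cthickening_eq_biUnion_closedBall (by norm_num)] at hqJ'
    obtain ⟨y', hy', hqy'⟩ := mem_iUnion₂.1 hqJ'
    have hqy'' := mem_closedBall.1 hqy'
    have hle := dist_le_of_contacts_subset hm hcontacts hy' hq
      (by linarith [R.cast_nonneg (α := ℝ)])
    exact hqz (mem_closedBall.2 (by linarith [dist_triangle q y' z]))

variable [MeasurableSpace X]

lemma measure_le_of_measure_inter_le_mul {Ω ι : Type*} [MeasurableSpace Ω] [Countable ι]
    {P : Measure Ω} [IsProbabilityMeasure P] {G : ι → Set Ω} (hG : ∀ i, MeasurableSet (G i))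
    (hdisj : Pairwise (Disjoint on G)) (hcover : ⋃ i, G i = univ) {F : Set Ω} {a : ℝ≥0∞}
    (hF : ∀ i, P (F ∩ G i) ≤ P (G i) * a) : P F ≤ a :=
  calc P F = P (⋃ i, F ∩ G i) := by rw [← inter_iUnion, hcover, inter_univ]
    _ ≤ ∑' i, P (F ∩ G i) := measure_iUnion_le _
    _ ≤ ∑' i, P (G i) * a := ENNReal.tsum_le_tsum hF
    _ = P (⋃ i, G i) * a := by rw [ENNReal.tsum_mul_right, measure_iUnion hdisj hG]
    _ = a := by rw [hcover, measure_univ, one_mul]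

variable [OpensMeasurableSpace X] [SecondCountableTopology X]

lemma measurableSet_mem_exploredSites (y : X) :
    MeasurableSet {s | y ∈ exploredSites Y W z n s} := by
  have hξ : Measurable fun s : Config X => (s.union W).restrict (closedBall z n)ᶜ :=
    (Config.measurable_restrict measurableSet_closedBall.compl).comp
      (Config.measurable_union.comp (measurable_id.prodMk measurable_const))
  have hcarrier : ∀ s : Config X,
      ((s.union W).restrict (closedBall z n)ᶜ).1 = (s.union W).1 ∩ closedBall z n := fun s => by
    change _ ∩ (closedBall z n)ᶜᶜ = _
    rw [compl_compl]
  have hset : {s | y ∈ exploredSites Y W z n s} = {_s | y ∈ Y.1} ∩ ({_s | dist y z ≤ 5 / 4} ∪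
      {s | ∃ c ∈ ((s.union W).restrict (closedBall z n)ᶜ).1,
        c ∈ clusterAt z ((s.union W).restrict (closedBall z n)ᶜ).1 ∧ dist c y ≤ 9 / 4}) := by
    ext s
    simp only [hcarrier]
    exact and_congr_right fun _ => or_congr_right <| exists_congr fun c =>
      ⟨fun h => ⟨clusterAt_subset h.1, h⟩, And.right⟩
  rw [hset]
  refine .inter (.const _) (.union (.const _) (measurableSet_exists_mem hξ ?_))
  exact (measurableSet_mem_clusterAt (hξ.comp measurable_fst) measurable_snd measurable_const).inter
    (measurableSet_le (measurable_snd.dist measurable_const) measurable_const)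

lemma measurableSet_exploredSites_eq (J : Set X) :
    MeasurableSet {s | exploredSites Y W z n s = J} := by
  by_cases hJ : J ⊆ Y.1
  · have hset : {s | exploredSites Y W z n s = J} =
        ⋂ y ∈ Y.1, {s | y ∈ exploredSites Y W z n s ↔ y ∈ J} := by
      ext s
      simp only [mem_iInter, mem_ofPred_eq]
      exact ⟨fun h y _ => by rw [h], fun h => Set.ext fun y =>
        ⟨fun hy => (h y hy.1).1 hy, fun hy => (h y (hJ hy)).2 hy⟩⟩
    rw [hset]
    exact .biInter Y.countable fun y _ => (measurableSet_mem_exploredSites y).iff (.const _)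
  · convert MeasurableSet.empty
    refine eq_empty_of_forall_notMem fun s hs => hJ ?_
    rw [← hs]
    exact sep_subset _ _

namespace HasPoissonVoids

variable {ν : Measure X} {P : Measure (Config X)}

/- Given that `J` is explored, the configuration off the `1 / 4`-neighbourhood of `J` is still
fresh; an unbounded cluster of it that is seen from `y` away from `z` would produce a contact
beyond distance `m`. -/
lemma measure_inter_exploredSites_eq_le (h : HasPoissonVoids ν P)
    (hY : ∀ x, ∃ y ∈ Y.1, dist x y ≤ 1 / 4) {m : ℝ} (hm : 0 ≤ m) (R : ℕ) {J : Set X} {y : X}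
    (hy : y ∈ J) (hyz : m + 9 / 4 < dist y z) :
    P ({s | contacts z s.1 (s.union W).1 (R + 5) ⊆ closedBall z m} ∩
        {s | exploredSites Y W z n s = J}) ≤
      P {s | exploredSites Y W z n s = J} *
        P (Config.restrict (closedBall z (m + 5)) ⁻¹' missEvent (closedBall y R)) := by
  rcases {s | exploredSites Y W z n s = J}.eq_empty_or_nonempty with hJ | ⟨s₀, hs₀⟩
  · rw [hJ, inter_empty, measure_empty, zero_mul]
  have hJ : J.Finite := by rw [← hs₀]; exact finite_exploredSites
  let S := cthickening (1 / 4) J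
  have hS : MeasurableSet S := isClosed_cthickening.measurableSet
  let A := closedBall y R ∪ (closedBall z (m + 5))ᶜ ∩ cthickening 2 S
  have hA : MeasurableSet A := measurableSet_closedBall.union
    (measurableSet_closedBall.compl.inter isClosed_cthickening.measurableSet)
  calc _ ≤ P ({s | exploredSites Y W z n s = J} ∩ Config.restrict S ⁻¹' missEvent A) := by
        refine measure_mono ?_
        rintro s ⟨hcontacts, rfl⟩
        exact ⟨rfl, (mem_missEvent_of_contacts_subset hm hcontacts hy hyz).mono_left
          (unboundedPart_mono inter_subset_left)⟩
    _ = P {s | exploredSites Y W z n s = J} * P (Config.restrict S ⁻¹' missEvent A) := by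
        refine h.measure_inter_eq_mul hS (measurableSet_exploredSites_eq J)
          (Config.measurable_restrict hS (measurableSet_missEvent hA)) (fun s t => ?_)
          fun s t => by rw [mem_preimage, Config.restrict_splice, mem_preimage]
        exact exploredSites_splice_eq_iff hY J s t
    _ ≤ _ := by
        gcongr
        exact preimage_restrict_missEvent_union_subset hJ.isBounded.cthickening _ _

end HasPoissonVoids

end Exploration

section Approach

variable {X : Type*} [MetricSpace X] [ProperSpace X] [PreconnectedSpace X] [MeasurableSpace X]
  [BorelSpace X] {ν : Measure X} {P : Measure (Config X)}

namespace HasPoissonVoids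

lemma measure_eq_of_preimage_mapIso (h : HasPoissonVoids ν P) (hX : PointSymmetric X)
    (hν : ∀ γ : X ≃ᵢ X, ν.map γ = ν) {E : X → Set (Config X)} (hE : ∀ y, MeasurableSet (E y))
    (hequiv : ∀ (g : X ≃ᵢ X) (y : X), Config.mapIso g ⁻¹' E (g y) = E y) (y y' : X) :
    P (E y) = P (E y') := by
  obtain ⟨g, rfl⟩ := hX.exists_isometryEquiv_apply_eq y y'
  rw [← hequiv g, ← Measure.map_apply (Config.measurable_mapIso g) (hE _), h.map_mapIso g (hν g)]

lemma exists_measure_preimage_restrict_missEvent_le_add (h : HasPoissonVoids ν P)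
    (hX : PointSymmetric X) (hν : ∀ γ : X ≃ᵢ X, ν.map γ = ν) (z : X) (m : ℝ) (R : ℕ)
    {ε : ℝ≥0∞} (hε : ε ≠ 0) :
    ∃ M : ℝ, ∀ y, M < dist y z →
      P (Config.restrict (closedBall z m) ⁻¹' missEvent (closedBall y R)) ≤
        P (missEvent (closedBall z R)) + ε := by
  have := h.isProbabilityMeasure
  have hvoid : P (voidEvent (closedBall z m)) ≠ 0 :=
    h.measure_voidEvent_ne_zero measurableSet_closedBall isBounded_closedBall
  obtain ⟨r, hr⟩ := exists_measure_longClusterEvent_lt (P := P) z R (mul_ne_zero hε hvoid)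
  refine ⟨r + R + m + 2, fun y hy => ?_⟩
  calc P (Config.restrict (closedBall z m) ⁻¹' missEvent (closedBall y R))
    _ ≤ P (missEvent (closedBall y R)) +
          P (longClusterEvent y R r) / P (voidEvent (closedBall z m)) :=
        h.measure_preimage_restrict_missEvent_le R.cast_nonneg r.cast_nonneg hy
    _ = P (missEvent (closedBall z R)) +
          P (longClusterEvent z R r) / P (voidEvent (closedBall z m)) := by
        rw [h.measure_eq_of_preimage_mapIso hX hν (E := fun y => missEvent (closedBall y R))
            (fun _ => measurableSet_missEvent measurableSet_closedBall)
            (fun g y => preimage_mapIso_missEvent g y R) y z,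
          h.measure_eq_of_preimage_mapIso hX hν (fun y => measurableSet_longClusterEvent y R r)
            (fun g y => preimage_mapIso_longClusterEvent g y R r) y z]
    _ ≤ P (missEvent (closedBall z R)) + ε := by
        gcongr
        exact ENNReal.div_le_of_le_mul hr.le

lemma measure_not_isBounded_clusterAt_inter_contacts_subset_le (h : HasPoissonVoids ν P)
    (hX : PointSymmetric X) (hν : ∀ γ : X ≃ᵢ X, ν.map γ = ν) (W : Config X) (z : X) {m : ℝ}
    (hm : 0 ≤ m) (R : ℕ) {ε : ℝ≥0∞} (hε : ε ≠ 0) :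
    P ({s | ¬IsBounded (clusterAt z (s.union W).1)} ∩
        {s | contacts z s.1 (s.union W).1 (R + 5) ⊆ closedBall z m}) ≤
      P (missEvent (closedBall z R)) + ε := by
  have := h.isProbabilityMeasure
  obtain ⟨Y, -, hY⟩ := exists_config_separated_dense (X := X) (r := 1 / 4) (by norm_num)
  obtain ⟨M, hM⟩ := h.exists_measure_preimage_restrict_missEvent_le_add hX hν z (m + 5) R hε
  obtain ⟨n, hn⟩ : ∃ n : ℝ, n = max M (m + 9 / 4) + 9 / 4 := ⟨_, rfl⟩
  have : Countable {J : Set X | J.Finite ∧ J ⊆ Y.1} :=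
    (countable_ofPred_finite_subset Y.countable).to_subtype
  refine measure_le_of_measure_inter_le_mul
    (G := fun J : {J : Set X | J.Finite ∧ J ⊆ Y.1} => {s | exploredSites Y W z n s = J.1})
    (fun J => measurableSet_exploredSites_eq J.1) ?_ ?_ fun J => ?_
  · exact fun J J' hne => Set.disjoint_left.2 fun s hs hs' => hne (Subtype.ext (hs.symm.trans hs'))
  · exact eq_univ_of_forall fun s => mem_iUnion.2
      ⟨⟨exploredSites Y W z n s, finite_exploredSites, sep_subset _ _⟩, rfl⟩
  by_cases hfar : ∃ y ∈ J.1, n - 9 / 4 < dist y z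
  · obtain ⟨y, hy, hyz⟩ := hfar
    obtain ⟨hyM, hym⟩ := max_lt_iff.1 (lt_of_eq_of_lt (by rw [hn, add_sub_cancel_right]) hyz)
    grw [inter_assoc, inter_subset_right,
      h.measure_inter_exploredSites_eq_le (W := W) (n := n) hY hm R hy hym, hM y hyM]
  · have hn1 : 1 ≤ n := by linarith [le_max_right M (m + 9 / 4)]
    refine (measure_mono_null (t := ∅) ?_ measure_empty).trans_le zero_le
    rintro s ⟨⟨hunb, -⟩, hJ⟩
    exact hfar (hJ ▸ exists_mem_exploredSites_lt_dist hY hn1 hunb)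

lemma ae_exists_not_isBounded_contacts (h : HasPoissonVoids ν P) (hX : PointSymmetric X)
    (hν : ∀ γ : X ≃ᵢ X, ν.map γ = ν) (hP : ∀ᵐ s ∂P, (unboundedPart s.1).Nonempty) (W : Config X)
    (z : X) :
    ∀ᵐ s ∂P, ¬IsBounded (clusterAt z (s.union W).1) →
      ∃ n : ℕ, ¬IsBounded (contacts z s.1 (s.union W).1 (2 + n)) := by
  have := h.isProbabilityMeasure
  refine ae_iff.2 <| nonpos_iff_eq_zero.1 <| ENNReal.le_of_forall_pos_le_add fun ε hε _ => ?_
  have hε' : (ε / 2 : ℝ≥0∞) ≠ 0 := (ENNReal.half_pos (ENNReal.coe_ne_zero.2 hε.ne')).ne'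
  obtain ⟨R, hR⟩ := exists_measure_missEvent_lt z hP hε'
  let F : ℕ → Set (Config X) := fun m => {s | ¬IsBounded (clusterAt z (s.union W).1)} ∩
    {s | contacts z s.1 (s.union W).1 (R + 5) ⊆ closedBall z m}
  have hF : Monotone F := fun m m' hm => inter_subset_inter_right _ fun s hs =>
    hs.trans (closedBall_subset_closedBall (Nat.cast_le.2 hm))
  calc _ ≤ P (⋃ m, F m) := measure_mono fun s hs => by
        obtain ⟨hunb, hcontacts⟩ := Classical.not_imp.1 hs
        have hL : (2 + (R + 3 : ℕ) : ℝ) = R + 5 := by push_cast; ring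
        have hbdd := not_not.1 (not_exists.1 hcontacts (R + 3))
        obtain ⟨m, hm⟩ := (hL ▸ hbdd).subset_closedBall z
        obtain ⟨k, hk⟩ := exists_nat_ge m
        exact mem_iUnion.2 ⟨k, hunb, hm.trans (closedBall_subset_closedBall hk)⟩
    _ = ⨆ m, P (F m) := hF.measure_iUnion
    _ ≤ ε / 2 + ε / 2 := iSup_le fun m =>
        (h.measure_not_isBounded_clusterAt_inter_contacts_subset_le hX hν W z m.cast_nonneg R
          hε').trans (by gcongr)
    _ = 0 + ε := by rw [ENNReal.add_halves, zero_add]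

end HasPoissonVoids

end Approach

/-! ### Merging of unbounded clusters -/

section Merging

variable {X : Type*} [MetricSpace X]

lemma exists_linked_of_dense {s u Z : Set X} (hZ : Dense Z)
    (hmeet : ∀ z ∈ Z, ¬IsBounded (clusterAt z s) → (clusterAt z s ∩ u).Nonempty) {p : X}
    (hp : p ∈ unboundedPart s) : ∃ q ∈ u, Linked s p q := by
  obtain ⟨z, hz, hpz⟩ := hZ.exists_dist_lt p one_pos
  have hcluster : cluster s p ⊆ clusterAt z s := fun q hq =>
    ⟨p, hp.1, (dist_comm z p).trans_le hpz.le, hq.2⟩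
  obtain ⟨q, ⟨a, ha, hza, haq⟩, hq⟩ := hmeet z hz fun h => hp.2 (h.subset hcluster)
  have hpa : Linked s p a := (Linked.refl s p).step ha (by linarith [dist_triangle p z a])
  exact ⟨q, hq, hpa.trans haq⟩

lemma PointSymmetric.numUcomps_occupied_eq_one_of_subset [ProperSpace X] [PreconnectedSpace X]
    (hX : PointSymmetric X) {s t : Config X} (hst : s.1 ⊆ t.1) (hs : numUcomps (occupied s) = 1)
    {Z : Set X} (hZ : Dense Z) (hmeet : ∀ z ∈ Z, ¬IsBounded (clusterAt z t.1) →
      (clusterAt z t.1 ∩ unboundedPart s.1).Nonempty) :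
    numUcomps (occupied t) = 1 := by
  rw [hX.numUcomps_occupied_eq_one_iff] at hs ⊢
  refine ⟨hs.1.mono (unboundedPart_mono hst), fun p hp q hq => ?_⟩
  obtain ⟨p', hp', hpp'⟩ := exists_linked_of_dense hZ hmeet hp
  obtain ⟨q', hq', hqq'⟩ := exists_linked_of_dense hZ hmeet hq
  exact (hpp'.trans ((hs.2 p' hp' q' hq').mono hst)).trans (hqq'.symm hq.1)

section Measurability

variable [MeasurableSpace X] [OpensMeasurableSpace X] [SecondCountableTopology X] {Ω : Type*}
  [MeasurableSpace Ω] {s w : Ω → Config X}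

lemma measurableSet_not_isBounded_clusterAt (hs : Measurable s) (z : X) :
    MeasurableSet {a | ¬IsBounded (clusterAt z (s a).1)} :=
  measurableSet_not_isBounded hs (fun _ => clusterAt_subset)
    (measurableSet_mem_clusterAt (hs.comp measurable_fst) measurable_snd measurable_const)

lemma measurableSet_not_isBounded_contacts (hw : Measurable w) (hs : Measurable s) (z : X)
    (L : ℝ) : MeasurableSet {a | ¬IsBounded (contacts z (w a).1 (s a).1 L)} := by
  have hset : {x : Ω × X | ∃ p ∈ unboundedPart (w x.1).1, dist x.2 p ≤ L} =
      {x | ∃ p ∈ (w x.1).1, p ∈ unboundedPart (w x.1).1 ∧ dist x.2 p ≤ L} := by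
    ext x
    exact exists_congr fun p => ⟨fun h => ⟨h.1.1, h⟩, And.right⟩
  have hnear : MeasurableSet {x : Ω × X | ∃ p ∈ unboundedPart (w x.1).1, dist x.2 p ≤ L} := by
    rw [hset]
    exact measurableSet_exists_mem (hw.comp measurable_fst)
      ((measurableSet_mem_unboundedPart (hw.comp measurable_fst.fst) measurable_snd).inter
        (measurableSet_le (measurable_fst.snd.dist measurable_snd) measurable_const))
  exact measurableSet_not_isBounded hs (fun _ c hc => clusterAt_subset hc.1)
    ((measurableSet_mem_clusterAt (hs.comp measurable_fst) measurable_snd measurable_const).inter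
      hnear)

end Measurability

lemma clusterAt_inter_unboundedPart_nonempty {z : X} {w s : Set X} (hws : w ⊆ s)
    (h : (contacts z w s 2).Nonempty) : (clusterAt z s ∩ unboundedPart w).Nonempty := by
  obtain ⟨c, hc, p, hp, hcp⟩ := h
  exact ⟨p, mem_clusterAt_of_dist_le hc (hws hp.1) hcp, hp⟩

variable [ProperSpace X] [PreconnectedSpace X] [MeasurableSpace X] [BorelSpace X]
  {ν ν' : Measure X} {P Q : Measure (Config X)}

lemma HasPoissonVoids.ae_prod_clusterAt_inter_unboundedPart_nonempty (hP : HasPoissonVoids ν P)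
    (hQ : HasPoissonVoids ν' Q) (hX : PointSymmetric X) (hν : ∀ γ : X ≃ᵢ X, ν.map γ = ν)
    (hν' : ∀ γ : X ≃ᵢ X, ν'.map γ = ν') (hpos : ∀ x, ν' (closedBall x (1 / 10)) ≠ 0)
    (hne : ∀ᵐ s ∂P, (unboundedPart s.1).Nonempty) (z : X) :
    ∀ᵐ x ∂P.prod Q, ¬IsBounded (clusterAt z (x.1.union x.2).1) →
      (clusterAt z (x.1.union x.2).1 ∩ unboundedPart x.1.1).Nonempty := by
  have := hP.isProbabilityMeasure
  have := hQ.isProbabilityMeasure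
  have hcluster := measurableSet_not_isBounded_clusterAt (Config.measurable_union (X := X)) z
  have hcontacts := measurableSet_not_isBounded_contacts measurable_fst
    (Config.measurable_union (X := X)) z
  have hbounded : ∀ᵐ s ∂P, ∀ᵐ η ∂Q, ¬IsBounded (clusterAt z (s.union η).1) →
      ∃ n : ℕ, ¬IsBounded (contacts z s.1 (s.union η).1 (2 + n)) := by
    refine (Measure.ae_ae_comm (hcluster.imp ?_)).2 (ae_of_all _ fun η =>
      hP.ae_exists_not_isBounded_contacts hX hν hne η z)
    rw [ofPred_exists]
    exact .iUnion fun n => hcontacts (2 + n)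
  have hclose : ∀ᵐ x ∂P.prod Q, ¬IsBounded (clusterAt z (x.1.union x.2).1) →
      ¬IsBounded (contacts z x.1.1 (x.1.union x.2).1 2) := by
    refine (Measure.ae_prod_iff_ae_ae (hcluster.imp (hcontacts 2))).2 ?_
    filter_upwards [hbounded] with s hs
    filter_upwards [hs, hQ.ae_not_isBounded_contacts_two hX hν' hpos s z] with η hη htwo hunb
    obtain ⟨n, hn⟩ := hη hunb
    exact htwo n hn
  filter_upwards [hclose] with x hx hunb
  exact clusterAt_inter_unboundedPart_nonempty subset_union_left
    (nonempty_of_not_isBounded (hx hunb))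

lemma PointSymmetric.ae_unboundedPart_nonempty [IsProbabilityMeasure P] (hX : PointSymmetric X)
    (h : P {s | numUcomps (occupied s) = 1} = 1) : ∀ᵐ s ∂P, (unboundedPart s.1).Nonempty := by
  have hmeas : MeasurableSet {s : Config X | (unboundedPart s.1).Nonempty} := by
    have hset : {s : Config X | (unboundedPart s.1).Nonempty} = (missEvent univ)ᶜ := by
      ext s
      simp only [missEvent, disjoint_univ, mem_compl_iff, mem_ofPred_eq, nonempty_iff_ne_empty,
        ne_eq]
    rw [hset]
    exact (measurableSet_missEvent .univ).compl
  refine (mem_ae_iff_prob_eq_one hmeas).2 (le_antisymm prob_le_one (h.ge.trans ?_))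
  exact measure_mono fun s hs => ((hX.numUcomps_occupied_eq_one_iff s).1 hs).1

lemma HasPoissonVoids.measure_map_union_numUcomps_eq_one (hP : HasPoissonVoids ν P)
    (hQ : HasPoissonVoids ν' Q) (hX : PointSymmetric X) (hν : ∀ γ : X ≃ᵢ X, ν.map γ = ν)
    (hν' : ∀ γ : X ≃ᵢ X, ν'.map γ = ν') (hpos : ∀ x, ν' (closedBall x (1 / 10)) ≠ 0)
    (h : P {s | numUcomps (occupied s) = 1} = 1) :
    ((P.prod Q).map fun x => x.1.union x.2) {s | numUcomps (occupied s) = 1} = 1 := by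
  have := hP.isProbabilityMeasure
  have := hQ.isProbabilityMeasure
  have := (hP.superpose hQ).isProbabilityMeasure
  obtain ⟨Z, hZc, hZ⟩ := TopologicalSpace.exists_countable_dense X
  have hmeet := (ae_ball_iff hZc).2 fun z _ =>
    hP.ae_prod_clusterAt_inter_unboundedPart_nonempty hQ hX hν hν' hpos
      (hX.ae_unboundedPart_nonempty h) z
  refine le_antisymm prob_le_one ?_
  calc 1 = P.prod Q ({s | numUcomps (occupied s) = 1} ×ˢ univ) := by
        rw [Measure.prod_prod, h, measure_univ, one_mul]
    _ ≤ P.prod Q ((fun x => x.1.union x.2) ⁻¹' {s | numUcomps (occupied s) = 1}) := by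
        refine measure_mono_ae ?_
        filter_upwards [hmeet] with x hx hx₁
        exact hX.numUcomps_occupied_eq_one_of_subset subset_union_left hx₁.1 hZ hx
    _ ≤ _ := Measure.le_map_apply Config.measurable_union.aemeasurable _

end Merging

theorem uniqueness_monotonicity_occupied_general
    {X : Type*} [MetricSpace X] [ProperSpace X] [ConnectedSpace X] [MeasurableSpace X]
    [BorelSpace X]
    (hsym : PointSymmetric X)
    (μ : Measure X)
    (hμiso : ∀ γ : X ≃ᵢ X, Measure.map γ μ = μ)
    (hμball : ∀ (x : X) (r : ℝ), 0 < r → 0 < μ (closedBall x r) ∧ μ (closedBall x r) < ⊤)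
    (lam₁ lam₂ : ℝ≥0) (hlam : lam₁ < lam₂)
    (P₁ P₂ : Measure (Config X))
    (hP₁ : IsPoisson ((lam₁ : ℝ≥0∞) • μ) P₁)
    (hP₂ : IsPoisson ((lam₂ : ℝ≥0∞) • μ) P₂)
    (h : P₁ {ω : Config X | numUcomps (occupied ω) = 1} = 1) :
    P₂ {ω : Config X | numUcomps (occupied ω) = 1} = 1 := by
  have hbounded : ∀ (a : ℝ≥0) (B : Set X), IsBounded B → ((a : ℝ≥0∞) • μ) B < ⊤ := fun a B hB => by
    obtain ⟨r, hr, hBr⟩ := hB.subset_closedBall_lt 0 (Classical.arbitrary X)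
    exact ENNReal.mul_lt_top ENNReal.coe_lt_top ((measure_mono hBr).trans_lt (hμball _ r hr).2)
  have hinvariant : ∀ (a : ℝ≥0) (γ : X ≃ᵢ X), ((a : ℝ≥0∞) • μ).map γ = (a : ℝ≥0∞) • μ :=
    fun a γ => by rw [Measure.map_smul, hμiso]
  obtain ⟨d, rfl⟩ := exists_add_of_le hlam.le
  have hd : (d : ℝ≥0∞) ≠ 0 := ENNReal.coe_ne_zero.2 (pos_of_lt_add_right hlam).ne'
  have hpos : ∀ x, ((d : ℝ≥0∞) • μ) (closedBall x (1 / 10)) ≠ 0 := fun x =>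
    mul_ne_zero hd (hμball x (1 / 10) (by norm_num)).1.ne'
  have hV₁ := hP₁.hasPoissonVoids (hbounded lam₁)
  have hV₂ := hP₂.hasPoissonVoids (hbounded (lam₁ + d))
  obtain ⟨Q, hQ⟩ := exists_hasPoissonVoids ((d : ℝ≥0∞) • μ) (hbounded d)
  rw [ENNReal.coe_add, add_smul] at hV₂
  rw [hV₂.unique (hV₁.superpose hQ)]
  exact hV₁.measure_map_union_numUcomps_eq_one hQ hsym (hinvariant lam₁) (hinvariant d) hpos h

/-- **Uniqueness monotonicity for the occupied set** (Theorem 3(a)).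
If the occupied set of the Poisson–Boolean model with intensity `λ₁ μ` has a unique
unbounded component a.s., then so does the one with intensity `λ₂ μ`, for `λ₁ < λ₂`. -/
theorem uniqueness_monotonicity_occupied
    {X : Type*} [MetricSpace X] [ProperSpace X] [CompleteSpace X] [SimplyConnectedSpace X]
    [NoncompactSpace X] [MeasurableSpace X] [BorelSpace X] [Nonempty X]
    (hsym : PointSymmetric X)
    (μ : Measure X)
    (hμiso : ∀ γ : X ≃ᵢ X, Measure.map γ μ = μ)
    (hμball : ∀ (x : X) (r : ℝ), 0 < r → 0 < μ (closedBall x r) ∧ μ (closedBall x r) < ⊤)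
    (lam₁ lam₂ : ℝ≥0) (hlam₁ : 0 < lam₁) (hlam : lam₁ < lam₂)
    (P₁ P₂ : Measure (Config X))
    (hP₁ : IsPoisson ((lam₁ : ℝ≥0∞) • μ) P₁)
    (hP₂ : IsPoisson ((lam₂ : ℝ≥0∞) • μ) P₂)
    (h : P₁ {ω : Config X | numUcomps (occupied ω) = 1} = 1) :
    P₂ {ω : Config X | numUcomps (occupied ω) = 1} = 1 := by
  exact uniqueness_monotonicity_occupied_general hsym μ hμiso hμball lam₁ lam₂ hlam P₁ P₂ hP₁ hP₂ h

end BooleanModel
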